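/- arXiv:0807.4694 — 2 statements merged into one kernel-verified Lean document; each statement's English description precedes it below -/
import Mathlib

section
/- Let L be an even lattice of rank 2k with an automorphism of ℓ-power order (ℓ ≥ 5 prime) whose only fixed point on the discriminant group L*/L is 0. Then k is even, i.e. the rank of L is divisible by 4. -/
/-- The dual lattice of a `ℤ`-lattice `L` in a rational quadratic space `(V, B)`:
all `y` with `B y x ∈ ℤ` for every `x ∈ L`. -/
def dualLattice (V : Type) [AddCommGroup V] [Module ℚ V]
    (B : V →ₗ[ℚ] V →ₗ[ℚ] ℚ) (L : Submodule ℤ V) : Submodule ℤ V where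
  carrier := {y : V | ∀ x ∈ L, ∃ m : ℤ, B y x = (m : ℚ)}
  zero_mem' := fun x _ => ⟨0, by simp⟩
  add_mem' := by
    intro a b ha hb x hx
    obtain ⟨m, hm⟩ := ha x hx
    obtain ⟨m', hm'⟩ := hb x hx
    exact ⟨m + m', by simp [hm, hm']⟩
  smul_mem' := by
    intro c y hy x hx
    obtain ⟨m, hm⟩ := hy x hx
    refine ⟨c * m, ?_⟩
    have : B (c • y) x = c • (B y x) := by
      rw [map_zsmul B c y]; rfl
    rw [this, hm, zsmul_eq_mul]
    push_cast
    ring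

theorem Matrix.exists_isUnit_entry_of_isUnit_det {R ι : Type*} [CommRing R] [IsLocalRing R]
    [Fintype ι] [DecidableEq ι] (G : Matrix ι ι R) (hG : IsUnit G.det) (i : ι) :
    ∃ j, IsUnit (G i j) := by
  by_contra! h
  refine (IsLocalRing.mem_maximalIdeal _).1 ?_ hG
  rw [Matrix.det_apply]
  refine Ideal.sum_mem _ fun τ _ => ?_
  rw [Units.smul_def, zsmul_eq_mul]
  refine Ideal.mul_mem_left _ _ ?_
  refine Ideal.mem_of_dvd _ (Finset.dvd_prod_of_mem _ (Finset.mem_univ (τ⁻¹ i))) ?_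
  simpa using h _

/-- Two distinct indices can be split off a finite index type. -/
theorem exists_equiv_fin_two_sum {ι : Type*} [DecidableEq ι] {i j : ι} (hij : i ≠ j) :
    ∃ e : Fin 2 ⊕ {x : ι // x ≠ i ∧ x ≠ j} ≃ ι,
      e (Sum.inl 0) = i ∧ e (Sum.inl 1) = j ∧ ∀ x, e (Sum.inr x) = x := by
  refine ⟨Equiv.ofBijective (Sum.elim ![i, j] Subtype.val) ⟨?_, ?_⟩, rfl, rfl, fun _ => rfl⟩
  · rintro (a | ⟨a, ha⟩) (b | ⟨b, hb⟩) h
    · fin_cases a <;> fin_cases b <;> simp_all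
    · fin_cases a
      · exact absurd h.symm hb.1
      · exact absurd h.symm hb.2
    · fin_cases b
      · exact absurd h ha.1
      · exact absurd h ha.2
    · simp_all
  · intro x
    by_cases hi : x = i
    · exact ⟨Sum.inl 0, hi.symm⟩
    by_cases hj : x = j
    · exact ⟨Sum.inl 1, hj.symm⟩
    exact ⟨Sum.inr ⟨x, hi, hj⟩, rfl⟩

/-- Over a local ring, let `ε ^ 2 = 1` and let `J` be a proper ideal of square zero containing
`1 + ε`. An invertible `ε`-symmetric matrix with diagonal in `J` has even size `2 * j` and
determinant `(-ε) ^ j` up to squares. For `ε = -1`, `J = 0` these are the alternating matrices. -/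
theorem Matrix.exists_card_eq_and_det_eq_neg_pow_mul_sq {R : Type*} [CommRing R] [IsLocalRing R]
    (J : Ideal R) (hJ : J ≠ ⊤) (hJ2 : ∀ a ∈ J, ∀ b ∈ J, a * b = 0)
    (ε : R) (hε : ε * ε = 1) (hεJ : 1 + ε ∈ J) {ι : Type*} [Fintype ι] [DecidableEq ι]
    (G : Matrix ι ι R) (hsymm : ∀ x y, G y x = ε * G x y) (hdiag : ∀ x, G x x ∈ J)
    (hdet : IsUnit G.det) :
    ∃ (j : ℕ) (s : R), Fintype.card ι = 2 * j ∧ G.det = (-ε) ^ j * s ^ 2 := by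
  induction hc : Fintype.card ι using Nat.strong_induction_on generalizing ι with
  | _ c ih =>
    subst hc
    cases isEmpty_or_nonempty ι with
    | inl h => exact ⟨0, 1, by simp⟩
    | inr h =>
      obtain ⟨i⟩ := h
      obtain ⟨j, u, hu⟩ := G.exists_isUnit_entry_of_isUnit_det hdet i
      have hij : i ≠ j := by
        rintro rfl
        exact hJ (Ideal.eq_top_of_isUnit_mem _ (hdiag i) ⟨u, hu⟩)
      let κ := {x : ι // x ≠ i ∧ x ≠ j}
      obtain ⟨e, he0, he1, heκ⟩ : ∃ e : Fin 2 ⊕ κ ≃ ι, e (Sum.inl 0) = i ∧ e (Sum.inl 1) = j ∧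
        ∀ x, e (Sum.inr x) = x := exists_equiv_fin_two_sum hij
      set v : R := ((u⁻¹ : Rˣ) : R)
      have huv : (u : R) * v = 1 := u.mul_inv
      have hji : G j i = ε * u := by rw [hsymm i j, hu]
      have had : G i i * G j j = 0 := hJ2 _ (hdiag i) _ (hdiag j)
      let A : Matrix (Fin 2) (Fin 2) R := !![G i i, u; ε * u, G j j]
      let Ai : Matrix (Fin 2) (Fin 2) R := (-ε * v ^ 2) • !![G j j, -u; -(ε * u), G i i]
      let B : Matrix (Fin 2) κ R := .of ![fun y => G i y, fun y => G j y]
      let C : Matrix κ (Fin 2) R := .of fun x => ![ε * G i x, ε * G j x]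
      let D : Matrix κ κ R := .of fun x y => G x y
      have hblocks : G.submatrix e e = fromBlocks A B C D := by
        ext (p | x) (q | y)
        · fin_cases p <;> fin_cases q <;> simp [A, he0, he1, hu, hji]
        · fin_cases p <;> simp [B, he0, he1, heκ]
        · fin_cases q <;> simp [C, he0, he1, heκ, hsymm _ (x : ι)]
        · simp [D, heκ]
      have hA : A.det = -ε * (u : R) ^ 2 := by
        simp only [A, det_fin_two_of]
        linear_combination had
      have hAi : Ai * A = 1 := by
        ext p q
        fin_cases p <;> fin_cases q <;> simp [Ai, A, mul_apply, Fin.sum_univ_two]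
        · linear_combination (-ε * v ^ 2) * had + ε ^ 2 * (u * v + 1) * huv + hε
        · ring
        · ring
        · linear_combination (-ε * v ^ 2) * had + ε ^ 2 * (u * v + 1) * huv + hε
      let _ : Invertible A := invertibleOfLeftInverse A Ai hAi
      have hinv : ⅟A = Ai := rfl
      have hGdet : G.det = A.det * (D - C * Ai * B).det := by
        rw [← hinv, ← det_fromBlocks₁₁, ← hblocks, det_submatrix_equiv_self]
      have hentry (x y : κ) : (D - C * Ai * B) x y = G x y + v ^ 2 *
          (G j j * G i x * G i y - u * G i x * G j y - ε * u * G j x * G i y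
            + G i i * G j x * G j y) := by
        simp [D, C, Ai, B, mul_apply, Fin.sum_univ_two]
        linear_combination v ^ 2 *
          (G j j * G i x * G i y - u * G i x * G j y - ε * u * G j x * G i y
            + G i i * G j x * G j y) * hε
      have hcard : Fintype.card ι = 2 + Fintype.card κ := by
        rw [← Fintype.card_congr e]; simp
      obtain ⟨m, s, hm, hs⟩ := ih _ (by omega) (D - C * Ai * B)
        (fun x y => by
          rw [hentry, hentry, hsymm x y]
          linear_combination (v ^ 2 * u * G i y * G j x) * hε +
            v ^ 2 * G i x * G i y * hsymm j j + v ^ 2 * G j x * G j y * hsymm i i)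
        (fun x => by
          rw [hentry]
          have h1 := J.mul_mem_left (v ^ 2 * G i x * G i x) (hdiag j)
          have h2 := J.mul_mem_left (v ^ 2 * G j x * G j x) (hdiag i)
          have h3 := J.mul_mem_left (v ^ 2 * u * G i x * G j x) hεJ
          convert J.sub_mem (J.add_mem (hdiag x) (J.add_mem h1 h2)) h3 using 1
          ring)
        (isUnit_of_mul_isUnit_right (hGdet ▸ hdet)) rfl
      refine ⟨m + 1, u * s, by omega, ?_⟩
      rw [hGdet, hA, hs]
      ring

theorem Matrix.exists_det_eq_sq_of_alternating {K ι : Type*} [Field K] [Fintype ι] [DecidableEq ι]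
    (C : Matrix ι ι K) (hskew : ∀ x y, C y x = -C x y) (hdiag : ∀ x, C x x = 0)
    (hdet : C.det ≠ 0) : ∃ t : K, C.det = t ^ 2 := by
  obtain ⟨j, s, -, hs⟩ := C.exists_card_eq_and_det_eq_neg_pow_mul_sq ⊥ bot_ne_top
    (by simp) (-1) (by ring) (by simp) (by simpa using hskew) (by simpa using hdiag) hdet.isUnit
  exact ⟨s, by simpa using hs⟩

theorem isLocalRing_zmod_four : IsLocalRing (ZMod 4) := by
  have : Nontrivial (ZMod 4) := ⟨0, 1, by decide⟩
  refine IsLocalRing.of_isUnit_or_isUnit_one_sub_self fun a => ?_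
  have h : ∀ a : ZMod 4, (∃ b, a * b = 1) ∨ ∃ b, (1 - a) * b = 1 := by decide
  simpa only [isUnit_iff_exists_inv] using h a

/-- An even symmetric integral matrix of odd determinant has even size `2 * j`, and its
determinant is congruent to `(-1) ^ j` modulo `4`. -/
theorem Matrix.exists_card_eq_and_det_eq_of_even {ι : Type*} [Fintype ι] [DecidableEq ι]
    (G : Matrix ι ι ℤ) (hsymm : ∀ x y, G y x = G x y) (hdiag : ∀ x, Even (G x x))
    (hdet : Odd G.det) :
    ∃ j : ℕ, Fintype.card ι = 2 * j ∧ (G.det : ZMod 4) = (-1) ^ j := by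
  have := isLocalRing_zmod_four
  have hmap : (G.map (Int.castRingHom (ZMod 4))).det = (G.det : ZMod 4) := by
    simpa using (RingHom.map_det (Int.castRingHom (ZMod 4)) G).symm
  have hunit : IsUnit (G.det : ZMod 4) := by
    obtain ⟨c, hc⟩ := hdet
    have h : ∀ a : ZMod 4, ∃ b, (2 * a + 1) * b = 1 := by decide
    rw [hc, isUnit_iff_exists_inv]
    push_cast
    exact h _
  obtain ⟨j, s, hj, hs⟩ := (G.map (Int.castRingHom (ZMod 4))).exists_card_eq_and_det_eq_neg_pow_mul_sq
    (Ideal.span {2})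
    (by
      rw [Ne, Ideal.span_singleton_eq_top, isUnit_iff_exists_inv]
      decide)
    (by
      intro a ha b hb
      obtain ⟨a, rfl⟩ := Ideal.mem_span_singleton'.1 ha
      obtain ⟨b, rfl⟩ := Ideal.mem_span_singleton'.1 hb
      have h : (4 : ZMod 4) = 0 := by decide
      linear_combination a * b * h)
    1 (by ring) (Ideal.mem_span_singleton'.2 ⟨1, by decide⟩)
    (by intro x y; simp [hsymm x y])
    (by
      intro x
      obtain ⟨c, hc⟩ := hdiag x
      refine Ideal.mem_span_singleton'.2 ⟨c, ?_⟩
      simp [hc, mul_two])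
    (hmap ▸ hunit)
  refine ⟨j, hj, ?_⟩
  rw [hmap] at hs
  have hs1 : s ^ 2 = 1 := by
    have h : ∀ a b s : ZMod 4, (a * s ^ 2) * b = 1 → s ^ 2 = 1 := by decide
    obtain ⟨b, hb⟩ := isUnit_iff_exists_inv.1 hunit
    rw [hs] at hb
    exact h _ _ _ hb
  rw [hs, hs1, mul_one]

open Polynomial in
theorem Matrix.exists_eq_cyclotomic_of_dvd_charpoly {ι : Type*} [Fintype ι] [DecidableEq ι]
    {ℓ n : ℕ} (hℓ : ℓ.Prime) (A : Matrix ι ι ℚ) (hA : A ^ ℓ ^ n = 1) {q : ℚ[X]}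
    (hq : Irreducible q) (hmonic : q.Monic) (hdvd : q ∣ A.charpoly) :
    ∃ i, q = cyclotomic (ℓ ^ i) ℚ := by
  obtain ⟨α, hα⟩ := IsAlgClosed.exists_aeval_eq_zero ℂ q hq.degree_pos.ne'
  have hroot : (A.map (algebraMap ℚ ℂ)).charpoly.IsRoot α := by
    rw [Matrix.charpoly_map, IsRoot.def, eval_map_algebraMap]
    exact aeval_eq_zero_of_dvd_aeval_eq_zero hdvd hα
  have hmem := Matrix.mem_spectrum_iff_isRoot_charpoly.2 hroot
  have hpow : α ^ ℓ ^ n = 1 := by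
    have h := spectrum.pow_mem_pow (A.map (algebraMap ℚ ℂ)) (ℓ ^ n) hmem
    rw [← Matrix.map_pow, hA] at h
    have : Nontrivial (Matrix ι ι ℂ) := by
      by_contra hn
      rw [not_nontrivial_iff_subsingleton] at hn
      rw [spectrum.of_subsingleton] at h
      exact h
    rw [Matrix.map_one _ (map_zero _) (map_one _), spectrum.one_eq] at h
    exact h
  obtain ⟨i, -, hi⟩ := (Nat.dvd_prime_pow hℓ).1 (orderOf_dvd_of_pow_eq_one hpow)
  refine ⟨i, ?_⟩
  rw [← hi, cyclotomic_eq_minpoly_rat (IsPrimitiveRoot.orderOf α) (hi ▸ pow_pos hℓ.pos i)]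
  exact minpoly.eq_of_irreducible_of_monic hq hα hmonic

open Polynomial in
theorem Polynomial.exists_eval_one_eq_prime_pow {ℓ : ℕ} (hℓ : ℓ.Prime) (hodd : Odd ℓ) (P : ℚ[X])
    (hP : P.Monic) (h1 : P.eval 1 ≠ 0)
    (hfac : ∀ q : ℚ[X], Irreducible q → q.Monic → q ∣ P → ∃ i, q = cyclotomic (ℓ ^ i) ℚ) :
    ∃ r : ℕ, P.eval 1 = (ℓ : ℚ) ^ r ∧ P.natDegree ≡ r * (ℓ - 1) [MOD 4] := by
  induction hd : P.natDegree using Nat.strong_induction_on generalizing P with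
  | _ d ih =>
    subst hd
    by_cases h0 : IsUnit P
    · rw [hP.isUnit_iff] at h0
      exact ⟨0, by simp [h0], by simp [h0, Nat.ModEq]⟩
    obtain ⟨q, hqm, hqi, P', rfl⟩ := exists_monic_irreducible_factor P h0
    have hP' : P'.Monic := hqm.of_mul_monic_left hP
    have hdeg := hqm.natDegree_mul hP'
    rw [eval_mul] at h1 ⊢
    obtain ⟨r, hr, hr'⟩ := ih P'.natDegree (by have := hqi.natDegree_pos; omega) P' hP'
      (right_ne_zero_of_mul h1) (fun q hi hm hq => hfac q hi hm (hq.mul_left _)) rfl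
    obtain ⟨i, hi⟩ := hfac q hqi hqm (dvd_mul_right _ _)
    cases i with
    | zero => simp [hi] at h1
    | succ i =>
      have := Fact.mk hℓ
      refine ⟨r + 1, ?_, ?_⟩
      · rw [hr, hi, eval_one_cyclotomic_prime_pow, pow_succ']
      · rw [hdeg, hi, natDegree_cyclotomic, Nat.totient_prime_pow_succ hℓ, add_mul, one_mul, add_comm]
        refine hr'.add ?_
        obtain ⟨e, he⟩ : Odd (ℓ ^ i) := hodd.pow
        obtain ⟨c, hc⟩ := hodd
        rw [he, hc, Nat.add_sub_cancel]
        refine (Nat.modEq_iff_dvd.2 ⟨-(e * c), ?_⟩)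
        push_cast
        ring

theorem Matrix.exists_det_one_sub_eq_prime_pow {ι : Type*} [Fintype ι] [DecidableEq ι]
    {ℓ n : ℕ} (hℓ : ℓ.Prime) (hodd : Odd ℓ) (A : Matrix ι ι ℚ) (hA : A ^ ℓ ^ n = 1)
    (hdet : (1 - A).det ≠ 0) :
    ∃ r : ℕ, (1 - A).det = (ℓ : ℚ) ^ r ∧ Fintype.card ι ≡ r * (ℓ - 1) [MOD 4] := by
  have heval : A.charpoly.eval 1 = (1 - A).det := by
    rw [Matrix.eval_charpoly]; simp
  rw [← heval] at hdet ⊢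
  rw [← A.charpoly_natDegree_eq_dim]
  exact Polynomial.exists_eval_one_eq_prime_pow hℓ hodd _ A.charpoly_monic hdet
    fun q hi hm hq => A.exists_eq_cyclotomic_of_dvd_charpoly hℓ hA hi hm hq

/-- A fixed-point-free isometry of odd prime power order determines the discriminant of a
nondegenerate symmetric form up to squares. -/
theorem Matrix.exists_det_mul_prime_pow_eq_sq {ι : Type*} [Fintype ι] [DecidableEq ι]
    {ℓ n : ℕ} (hℓ : ℓ.Prime) (hodd : Odd ℓ) (G A : Matrix ι ι ℚ) (hG : G.IsSymm)
    (hGdet : G.det ≠ 0) (hA : A ^ ℓ ^ n = 1) (hiso : A.transpose * G * A = G)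
    (hdet : (1 - A).det ≠ 0) :
    ∃ (r : ℕ) (t : ℚ), G.det * (ℓ : ℚ) ^ r = t ^ 2 ∧
      Fintype.card ι ≡ r * (ℓ - 1) [MOD 4] := by
  obtain ⟨r, hr, hmod⟩ := A.exists_det_one_sub_eq_prime_pow hℓ hodd hA hdet
  have hN : Odd (ℓ ^ n) := hodd.pow
  obtain ⟨c, hc⟩ := id hN
  set S := A ^ (c + 1) with hS
  have hS2 : S * S = A := by
    rw [hS, ← pow_add, show c + 1 + (c + 1) = ℓ ^ n + 1 by omega, pow_succ, hA, one_mul]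
  have hisoS : S.transpose * G * S = G := by
    have (m : ℕ) : (A ^ m).transpose * G * A ^ m = G := by
      induction m with
      | zero => simp
      | succ m ih =>
        rw [pow_succ, Matrix.transpose_mul]
        calc _ = A.transpose * ((A ^ m).transpose * G * A ^ m) * A := by simp only [Matrix.mul_assoc]
          _ = G := by rw [ih, hiso]
    exact this _
  have hSdet : S.det = 1 := by
    have hpow : S.det ^ ℓ ^ n = 1 := by
      rw [← Matrix.det_pow, hS, ← pow_mul, mul_comm, pow_mul, hA, one_pow, Matrix.det_one]
    exact hN.strictMono_pow.injective (by simpa using hpow)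
  set C := S.transpose * G - G * S with hC
  have hCS : C.det = G.det * (1 - A).det := by
    have h : C * S = G * (1 - A) := by
      rw [hC, sub_mul, hisoS, mul_assoc, hS2, mul_sub, mul_one]
    rw [← Matrix.det_mul, ← h, Matrix.det_mul, hSdet, mul_one]
  have hskew : C.transpose = -C := by
    rw [hC, Matrix.transpose_sub, Matrix.transpose_mul, Matrix.transpose_mul,
      Matrix.transpose_transpose, hG.eq, neg_sub]
  have hskew' (x y : ι) : C y x = -C x y := congrFun (congrFun hskew x) y
  obtain ⟨t, ht⟩ := C.exists_det_eq_sq_of_alternating hskew'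
    (fun x => by linarith [hskew' x x]) (hCS ▸ mul_ne_zero hGdet hdet)
  exact ⟨r, t, by rw [← hr, ← hCS, ht], hmod⟩

/-- A prime dividing the Gram determinant of a lattice divides an element of the lattice inside
its dual. -/
theorem exists_not_mem_span_of_prime_dvd_gram_det {V ι : Type*} [AddCommGroup V] [Module ℚ V]
    [Fintype ι] [DecidableEq ι] (B : V →ₗ[ℚ] V →ₗ[ℚ] ℚ) (v : ι → V) (hv : LinearIndependent ℚ v)
    (G : Matrix ι ι ℤ) (hG : ∀ i j, B (v i) (v j) = G i j) {p : ℕ} (hp : p.Prime)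
    (hdvd : (p : ℤ) ∣ G.det) :
    ∃ y ∈ Submodule.span ℚ (Set.range v), y ∉ Submodule.span ℤ (Set.range v) ∧
      (p : ℤ) • y ∈ Submodule.span ℤ (Set.range v) ∧
      ∀ x ∈ Submodule.span ℤ (Set.range v), ∃ m : ℤ, B y x = m := by
  have := Fact.mk hp
  have hp0 : (p : ℚ) ≠ 0 := by exact_mod_cast hp.ne_zero
  have hdet : (G.map (Int.castRingHom (ZMod p))).det = 0 := by
    rw [← RingHom.mapMatrix_apply, ← RingHom.map_det]
    exact (ZMod.intCast_zmod_eq_zero_iff_dvd _ _).2 hdvd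
  obtain ⟨w, hw0, hw⟩ := Matrix.exists_vecMul_eq_zero_iff.2 hdet
  set a : ι → ℤ := fun i => ((w i).val : ℤ) with ha
  have haw (i : ι) : ((a i : ℤ) : ZMod p) = w i := by simp [ha]
  have hsum (j : ι) : (p : ℤ) ∣ ∑ i, a i * G i j := by
    rw [← ZMod.intCast_zmod_eq_zero_iff_dvd]
    simpa [Matrix.vecMul, dotProduct, haw] using congrFun hw j
  refine ⟨∑ i, ((a i : ℚ) / p) • v i, ?_, ?_, ?_, ?_⟩
  · exact Submodule.sum_mem _ fun i _ => Submodule.smul_mem _ _ (Submodule.subset_span ⟨i, rfl⟩)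
  · intro hmem
    obtain ⟨c, hc⟩ := (Submodule.mem_span_range_iff_exists_fun ℤ).1 hmem
    apply hw0
    funext i
    have hc' : ∑ i, (c i : ℚ) • v i = ∑ i, ((a i : ℚ) / p) • v i := by
      simpa only [Int.cast_smul_eq_zsmul] using hc
    have hi := Fintype.linearIndependent_iffₛ.1 hv _ _ hc' i
    have hi' : a i = p * c i := by
      have : (a i : ℚ) = p * c i := by rw [show (c i : ℚ) = a i / p from hi]; field_simp
      exact_mod_cast this
    rw [← haw, hi']
    simp
  · rw [Finset.smul_sum]
    refine Submodule.sum_mem _ fun i _ => ?_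
    have : (p : ℤ) • (((a i : ℚ) / p) • v i) = a i • v i := by
      rw [← Int.cast_smul_eq_zsmul ℚ (p : ℤ), smul_smul, ← Int.cast_smul_eq_zsmul ℚ (a i)]
      congr 1
      push_cast
      field_simp
    rw [this]
    exact Submodule.smul_mem _ _ (Submodule.subset_span ⟨i, rfl⟩)
  · intro x hx
    induction hx using Submodule.span_induction with
    | mem x hx =>
      obtain ⟨j, rfl⟩ := hx
      obtain ⟨c, hc⟩ := hsum j
      refine ⟨c, ?_⟩
      have hc' : ∑ i, (a i : ℚ) * G i j = p * c := by exact_mod_cast hc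
      simp only [map_sum, map_smul, LinearMap.sum_apply, LinearMap.smul_apply, hG, smul_eq_mul]
      rw [← mul_right_inj' hp0, ← hc', Finset.mul_sum]
      refine Finset.sum_congr rfl fun i _ => ?_
      field_simp
    | zero => exact ⟨0, by simp⟩
    | add x y _ _ hx hy =>
      obtain ⟨m, hm⟩ := hx
      obtain ⟨m', hm'⟩ := hy
      exact ⟨m + m', by simp only [map_add, hm, hm', Int.cast_add]⟩
    | smul c x _ hx =>
      obtain ⟨m, hm⟩ := hx
      exact ⟨c * m, by rw [map_zsmul, hm]; simp⟩

theorem LinearMap.BilinForm.exists_det_toMatrix_eq_sq_mul {K W ι κ : Type*} [Field K]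
    [AddCommGroup W] [Module K W] [Fintype ι] [DecidableEq ι] [Fintype κ] [DecidableEq κ]
    (B : LinearMap.BilinForm K W) (b : Module.Basis ι K W) (c : Module.Basis κ K W) :
    ∃ s : K, s ≠ 0 ∧ (LinearMap.BilinForm.toMatrix c B).det =
      s ^ 2 * (LinearMap.BilinForm.toMatrix b B).det := by
  let e := c.indexEquiv b
  have hre : (LinearMap.BilinForm.toMatrix (c.reindex e) B) =
      (LinearMap.BilinForm.toMatrix c B).submatrix e.symm e.symm := by
    ext i j; simp [LinearMap.BilinForm.toMatrix_apply]
  have hdet : (LinearMap.BilinForm.toMatrix c B).det =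
      (LinearMap.BilinForm.toMatrix (c.reindex e) B).det := by
    rw [hre, Matrix.det_submatrix_equiv_self]
  refine ⟨(b.toMatrix (c.reindex e)).det, ?_, ?_⟩
  · rw [← Module.Basis.det_apply]
    exact (b.isUnit_det _).ne_zero
  · rw [hdet, ← LinearMap.BilinForm.toMatrix_mul_basis_toMatrix b (c.reindex e), Matrix.det_mul,
      Matrix.det_mul, Matrix.det_transpose]
    ring

theorem LinearMap.BilinForm.det_toMatrix_pos {W ι : Type*} [AddCommGroup W] [Module ℚ W]
    [Fintype ι] [DecidableEq ι] (B : LinearMap.BilinForm ℚ W) (hsymm : ∀ x y, B x y = B y x)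
    (hpos : ∀ x, x ≠ 0 → 0 < B x x) (b : Module.Basis ι ℚ W) :
    0 < (LinearMap.BilinForm.toMatrix b B).det := by
  have : FiniteDimensional ℚ W := b.finiteDimensional_of_finite
  obtain ⟨c, hc⟩ := LinearMap.BilinForm.exists_orthogonal_basis (B := B) ⟨hsymm⟩
  obtain ⟨s, hs, h⟩ := B.exists_det_toMatrix_eq_sq_mul c b
  have hdiag : LinearMap.BilinForm.toMatrix c B = Matrix.diagonal fun i => B (c i) (c i) := by
    ext i j
    by_cases hij : i = j
    · subst hij; simp [LinearMap.BilinForm.toMatrix_apply]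
    · simpa [LinearMap.BilinForm.toMatrix_apply, hij] using hc hij
  rw [h, hdiag, Matrix.det_diagonal]
  exact mul_pos (by positivity) (Finset.prod_pos fun i _ => hpos _ (c.ne_zero i))

theorem Submodule.FG.exists_linearIndependent_rat_span_int {V : Type*} [AddCommGroup V] [Module ℚ V]
    {L : Submodule ℤ V} (hL : L.FG) :
    ∃ (d : ℕ) (v : Fin d → V), LinearIndependent ℚ v ∧ Submodule.span ℤ (Set.range v) = L := by
  have : Module.Finite ℤ L := Module.Finite.iff_fg.2 hL
  have : Module.IsTorsionFree ℤ V := Module.IsTorsionFree.trans_faithfulSMul ℤ ℚ V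
  let b := Module.finBasis ℤ L
  refine ⟨_, fun i => (b i : V), ?_, ?_⟩
  · rw [← LinearIndependent.iff_fractionRing ℤ ℚ]
    exact b.linearIndependent.map' L.subtype L.ker_subtype
  · rw [show (fun i => (b i : V)) = L.subtype ∘ b from rfl, Set.range_comp, Submodule.span_image,
      b.span_eq, Submodule.map_top, Submodule.range_subtype]

theorem Submodule.exists_ne_zero_zsmul_mem_of_mem_span_rat {V : Type*} [AddCommGroup V] [Module ℚ V]
    (L : Submodule ℤ V) {x : V} (hx : x ∈ Submodule.span ℚ (L : Set V)) :
    ∃ c : ℤ, c ≠ 0 ∧ c • x ∈ L := by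
  induction hx using Submodule.span_induction with
  | mem x hx => exact ⟨1, one_ne_zero, by simpa using hx⟩
  | zero => exact ⟨1, one_ne_zero, by simp⟩
  | add x y _ _ hx hy =>
    obtain ⟨c, hc, hcx⟩ := hx
    obtain ⟨d, hd, hdy⟩ := hy
    refine ⟨c * d, mul_ne_zero hc hd, ?_⟩
    rw [smul_add, mul_smul c d y, mul_comm, mul_smul]
    exact L.add_mem (L.smul_mem _ hcx) (L.smul_mem _ hdy)
  | smul q x _ hx =>
    obtain ⟨c, hc, hcx⟩ := hx
    refine ⟨q.den * c, mul_ne_zero (by simp) hc, ?_⟩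
    have : ((q.den : ℤ) * c) • q • x = q.num • c • x := by
      rw [← Int.cast_smul_eq_zsmul ℚ, ← Int.cast_smul_eq_zsmul ℚ c, ← Int.cast_smul_eq_zsmul ℚ q.num,
        smul_smul, smul_smul]
      congr 1
      have := Rat.den_mul_eq_num q
      push_cast
      linear_combination (c : ℚ) * this
    rw [this]
    exact L.smul_mem _ hcx

theorem Polynomial.aeval_apply_mem_of_forall_mem {V : Type*} [AddCommGroup V]
    (f : Module.End ℤ V) (L : Submodule ℤ V) (hf : ∀ x ∈ L, f x ∈ L) (q : Polynomial ℤ) {x : V}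
    (hx : x ∈ L) : Polynomial.aeval f q x ∈ L := by
  rw [Polynomial.aeval_endomorphism]
  have hpow (i : ℕ) : (f ^ i) x ∈ L := by
    induction i with
    | zero => simpa using hx
    | succ i ih => rw [pow_succ']; exact hf _ ih
  exact Submodule.sum_mem _ fun i _ => L.smul_mem _ (hpow i)

theorem mem_of_prime_smul_mem_of_mem_dualLattice {ℓ n : ℕ} (hℓ : ℓ.Prime) (hodd : Odd ℓ)
    (V : Type) [AddCommGroup V] [Module ℚ V] (B : V →ₗ[ℚ] V →ₗ[ℚ] ℚ) (L : Submodule ℤ V)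
    (f : Module.End ℤ V) (hfL : ∀ x ∈ L, f x ∈ L)
    (hfD : ∀ x ∈ dualLattice V B L, f x ∈ dualLattice V B L) (hfN : f ^ ℓ ^ n = 1)
    (hfix : ∀ y ∈ dualLattice V B L, f y - y ∈ L → y ∈ L)
    {y : V} (hy : y ∈ dualLattice V B L) (hℓy : (ℓ : ℤ) • y ∈ L) : y ∈ L := by
  have hdesc (j : ℕ) : ∀ z ∈ dualLattice V B L, ((f - 1) ^ j) z ∈ L → z ∈ L := by
    induction j with
    | zero => intro z _ hz; simpa using hz
    | succ j ih =>
      intro z hz hz'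
      rw [pow_succ, Module.End.mul_apply] at hz'
      exact hfix z hz (ih _ (Submodule.sub_mem _ (hfD z hz) hz) hz')
  obtain ⟨r, hr⟩ := exists_add_pow_prime_pow_eq hℓ (Polynomial.X : Polynomial ℤ) (-1) n
  have hN : Odd (ℓ ^ n) := hodd.pow
  have hpow : (f - 1) ^ ℓ ^ n = Polynomial.aeval f (-Polynomial.X * r) * (ℓ : Module.End ℤ V) := by
    have h := congrArg (Polynomial.aeval f) hr
    simp only [map_pow, map_add, map_mul, map_neg, map_one, map_natCast, Polynomial.aeval_X, hfN,
      hN.neg_one_pow] at h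
    rw [sub_eq_add_neg, h, add_neg_cancel, zero_add, map_mul, map_neg, Polynomial.aeval_X,
      ← (Nat.cast_commute ℓ _).eq]
    noncomm_ring
  refine hdesc (ℓ ^ n) y hy ?_
  rw [hpow, Module.End.mul_apply]
  refine Polynomial.aeval_apply_mem_of_forall_mem f L hfL _ ?_
  simpa using hℓy

/-- The orbit sum of a vector of `L` pairs with a fixed vector `y` like `N • y` does. -/
theorem smul_mem_dualLattice_of_fixed (V : Type) [AddCommGroup V] [Module ℚ V]
    (B : V →ₗ[ℚ] V →ₗ[ℚ] ℚ) (L : Submodule ℤ V) (f : Module.End ℚ V)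
    (hfL : ∀ x ∈ L, f x ∈ L) (hfB : ∀ x y, B (f x) (f y) = B x y) {N : ℕ} (hfN : f ^ N = 1)
    {y : V} (hy : f y = y) (hint : ∀ x ∈ L, f x = x → ∃ m : ℤ, B y x = m) :
    (N : ℤ) • y ∈ dualLattice V B L := by
  intro x hx
  have hB (i : ℕ) : B y ((f ^ i) x) = B y x := by
    induction i with
    | zero => simp
    | succ i ih => rw [pow_succ', Module.End.mul_apply, ← ih, ← hfB y ((f ^ i) x), hy]
  have hmem (i : ℕ) : (f ^ i) x ∈ L := by
    induction i with
    | zero => simpa using hx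
    | succ i ih => rw [pow_succ']; exact hfL _ ih
  obtain ⟨m, hm⟩ := hint (∑ i ∈ Finset.range N, (f ^ i) x) (Submodule.sum_mem _ fun i _ => hmem i) (by
    rw [map_sum]
    simp only [← Module.End.mul_apply, ← pow_succ']
    rw [← sub_eq_zero, ← Finset.sum_sub_distrib,
      Finset.sum_range_sub (fun i => (f ^ i) x), hfN, pow_zero, sub_self])
  refine ⟨m, ?_⟩
  rw [← hm, map_zsmul, map_sum, Finset.sum_congr rfl fun i _ => hB i]
  simp

/-- The restriction of a positive definite form to the complement of the fixed space of an
isometry of odd prime power order. -/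
theorem exists_det_orthogonal_mul_prime_pow_eq_sq {ℓ n : ℕ} (hℓ : ℓ.Prime) (hodd : Odd ℓ)
    {W ι : Type*} [AddCommGroup W] [Module ℚ W] [Fintype ι] [DecidableEq ι] (B : LinearMap.BilinForm ℚ W)
    (hsymm : ∀ x y, B x y = B y x) (hpos : ∀ x, x ≠ 0 → 0 < B x x) (b : Module.Basis ι ℚ W)
    (f : Module.End ℚ W) (hfB : ∀ x y, B (f x) (f y) = B x y) (hfN : f ^ ℓ ^ n = 1)
    (hfix : ∀ x, f x = x → x = 0) :
    ∃ (r : ℕ) (t : ℚ), (LinearMap.BilinForm.toMatrix b B).det * (ℓ : ℚ) ^ r = t ^ 2 ∧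
      Fintype.card ι ≡ r * (ℓ - 1) [MOD 4] := by
  have : FiniteDimensional ℚ W := b.finiteDimensional_of_finite
  refine Matrix.exists_det_mul_prime_pow_eq_sq (n := n) hℓ hodd (LinearMap.BilinForm.toMatrix b B)
    (LinearMap.toMatrix b b f) ?_ (B.det_toMatrix_pos hsymm hpos b).ne' ?_ ?_ ?_
  · ext i j
    simp [LinearMap.BilinForm.toMatrix_apply, hsymm (b j)]
  · rw [LinearMap.toMatrix_pow, hfN, LinearMap.toMatrix_one]
  · rw [← LinearMap.BilinForm.toMatrix_comp]
    congr 1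
    ext x y
    simp [hfB]
  · rw [← LinearMap.toMatrix_one b, ← map_sub, LinearMap.det_toMatrix]
    intro h
    obtain ⟨x, hx, hx0⟩ := Submodule.exists_mem_ne_zero_of_ne_bot
      (LinearMap.bot_lt_ker_of_det_eq_zero h).ne'
    refine hx0 (hfix x ?_)
    rw [LinearMap.mem_ker, LinearMap.sub_apply, sub_eq_zero] at hx
    exact hx.symm

theorem LinearMap.BilinForm.toMatrix_prodEquivOfIsCompl_orthogonal {V ι κ : Type*} [AddCommGroup V]
    [Module ℚ V] [Fintype ι] [DecidableEq ι] [Fintype κ] [DecidableEq κ] (B : LinearMap.BilinForm ℚ V)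
    (hsymm : ∀ x y, B x y = B y x) (K : Submodule ℚ V) (h : IsCompl K (B.orthogonal K))
    (b : Module.Basis ι ℚ K) (c : Module.Basis κ ℚ (B.orthogonal K)) :
    (LinearMap.BilinForm.toMatrix ((b.prod c).map (Submodule.prodEquivOfIsCompl K _ h)) B).det =
      (LinearMap.BilinForm.toMatrix b (B.restrict K)).det *
        (LinearMap.BilinForm.toMatrix c (B.restrict (B.orthogonal K))).det := by
  rw [← Matrix.det_fromBlocks_zero₂₁ _ 0]
  congr 1
  ext (i | i) (j | j)
  · simp [LinearMap.BilinForm.toMatrix_apply]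
  · simpa [LinearMap.BilinForm.toMatrix_apply] using (c j).2 _ (b i).2
  · simpa [LinearMap.BilinForm.toMatrix_apply, hsymm (c i : V)] using (c i).2 _ (b j).2
  · simp [LinearMap.BilinForm.toMatrix_apply]

/-- Comparison of `ℓ`-adic valuations: if `ℓ ^ e * d` and a prime-to-`ℓ` integer agree up to squares,
as do `d` and `ℓ ^ r`, then `e` and `r` have the same parity, and the congruences modulo `4` for
`2 * j` and `h` combine to show that `2 * j + h` is divisible by `4`. -/
theorem even_of_discriminant_relations {ℓ e r j k h : ℕ} {m : ℤ} {s t : ℚ} (hℓ : ℓ.Prime)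
    (hodd : Odd ℓ) (hm : ¬ (ℓ : ℤ) ∣ m) (hs : s ≠ 0) {d : ℚ}
    (hsm : (ℓ : ℚ) ^ e * d = s ^ 2 * m) (hd : d * (ℓ : ℚ) ^ r = t ^ 2)
    (hj : ((ℓ ^ e : ℕ) : ZMod 4) = (-1) ^ j) (hmod : h ≡ r * (ℓ - 1) [MOD 4])
    (hk : 2 * k = 2 * j + h) : Even k := by
  have := Fact.mk hℓ
  have hℓ0 : (ℓ : ℚ) ≠ 0 := by exact_mod_cast hℓ.ne_zero
  have hm0 : (m : ℚ) ≠ 0 := by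
    intro h0
    exact hm (by simp [Int.cast_eq_zero.1 h0])
  have hd0 : d ≠ 0 := by
    rintro rfl
    simp [hs, hm0] at hsm
  have hval := congrArg (padicValRat ℓ) hsm
  have hval' := congrArg (padicValRat ℓ) hd
  have hvm : padicValRat ℓ (m : ℚ) = 0 := by
    rw [padicValRat.of_int, padicValInt.eq_zero_of_not_dvd hm]; rfl
  rw [padicValRat.mul (pow_ne_zero _ hℓ0) hd0, padicValRat.mul (pow_ne_zero _ hs) hm0,
    padicValRat.pow, padicValRat.self hℓ.one_lt,
    padicValRat.pow, hvm] at hval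
  rw [padicValRat.mul hd0 (pow_ne_zero _ hℓ0), padicValRat.pow,
    padicValRat.self hℓ.one_lt, padicValRat.pow] at hval'
  have her : Even (e + r) := by
    rw [Nat.even_iff]
    push_cast at hval hval'
    omega
  have hneg (a b : ℕ) (hab : (-1 : ZMod 4) ^ a = (-1) ^ b) : Even (a + b) := by
    rcases Nat.even_or_odd a with ha | ha <;> rcases Nat.even_or_odd b with hb | hb
    · exact ha.add hb
    · rw [ha.neg_one_pow, hb.neg_one_pow] at hab
      exact absurd hab (by decide)
    · rw [ha.neg_one_pow, hb.neg_one_pow] at hab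
      exact absurd hab (by decide)
    · exact ha.add_odd hb
  push_cast at hj
  rw [Nat.even_iff] at her ⊢
  rcases (show ℓ % 4 = 1 ∨ ℓ % 4 = 3 by have := Nat.odd_iff.1 hodd; omega) with h4 | h4
  · have hcast : (ℓ : ZMod 4) = 1 := by
      rw [← ZMod.natCast_mod, h4]; rfl
    rw [hcast, one_pow] at hj
    have hj2 := Nat.even_iff.1 (hneg 0 j (by simpa using hj))
    have hh : h % 4 = 0 := by
      have h0 : 4 ∣ r * (ℓ - 1) := Dvd.dvd.mul_left (by omega) _
      rw [show h % 4 = r * (ℓ - 1) % 4 from hmod]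
      exact Nat.mod_eq_zero_of_dvd h0
    omega
  · have hcast : (ℓ : ZMod 4) = -1 := by
      rw [← ZMod.natCast_mod, h4]; rfl
    rw [hcast] at hj
    have hj2 := Nat.even_iff.1 (hneg e j hj)
    have hh : h % 4 = (r * 2) % 4 := by
      rw [show h % 4 = r * (ℓ - 1) % 4 from hmod]
      exact (Nat.ModEq.refl r).mul (show (ℓ - 1) % 4 = 2 % 4 by omega)
    omega

/-- If an even lattice `L` of rank `2k` has an automorphism of `ℓ`-power
order (`ℓ ≥ 5` prime) whose only fixed point on the discriminant group `L*/L` is `0`,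
then `k` is even, i.e. the rank of `L` is divisible by `4`. -/
theorem rank_div_four_of_fixed_point_free
    (ℓ : ℕ) (hℓ : ℓ.Prime) (hℓ5 : 5 ≤ ℓ)
    (V : Type) [AddCommGroup V] [Module ℚ V] [FiniteDimensional ℚ V]
    (B : V →ₗ[ℚ] V →ₗ[ℚ] ℚ)
    (hsymm : ∀ x y : V, B x y = B y x)
    (hpos : ∀ x : V, x ≠ 0 → 0 < B x x)
    (k : ℕ) (hrank : Module.finrank ℚ V = 2 * k)
    (L : Submodule ℤ V) (hspan : Submodule.span ℚ (L : Set V) = ⊤) (hfg : L.FG)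
    (hint : ∀ x ∈ L, ∀ y ∈ L, ∃ m : ℤ, B x y = (m : ℚ))
    (heven : ∀ x ∈ L, ∃ m : ℤ, B x x = 2 * (m : ℚ))
    (σ : V ≃ₗ[ℚ] V)
    (hσL : Submodule.map (LinearMap.restrictScalars ℤ (σ : V →ₗ[ℚ] V)) L = L)
    (hσB : ∀ x y : V, B (σ x) (σ y) = B x y)
    (n : ℕ) (hord : orderOf σ = ℓ ^ n)
    (hfix : ∀ y ∈ dualLattice V B L, σ y - y ∈ L → y ∈ L) :
    Even k := by
  have hodd : Odd ℓ := hℓ.odd_of_ne_two (by omega)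
  let f : Module.End ℚ V := (σ : V →ₗ[ℚ] V)
  have hfpow (i : ℕ) : f ^ i = ((σ ^ i : V ≃ₗ[ℚ] V) : V →ₗ[ℚ] V) := by
    induction i with
    | zero => rfl
    | succ i ih => rw [pow_succ, pow_succ, ih]; rfl
  have hfN : f ^ ℓ ^ n = 1 := by
    rw [hfpow, ← hord, pow_orderOf_eq_one]; rfl
  have hfL (x : V) (hx : x ∈ L) : f x ∈ L := by
    rw [← hσL]
    exact Submodule.mem_map_of_mem hx
  have hfD (x : V) (hx : x ∈ dualLattice V B L) : f x ∈ dualLattice V B L := by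
    intro y hy
    rw [← hσL] at hy
    obtain ⟨z, hz, rfl⟩ := hy
    obtain ⟨m, hm⟩ := hx z hz
    exact ⟨m, (hσB x z).trans hm⟩
  -- An integral basis of `L`, whose Gram determinant is prime to `ℓ`.
  obtain ⟨d, v, hv, hvL⟩ := hfg.exists_linearIndependent_rat_span_int
  have hvmem (i : Fin d) : v i ∈ L := hvL ▸ Submodule.subset_span ⟨i, rfl⟩
  choose G hG using fun i j => hint (v i) (hvmem i) (v j) (hvmem j)
  have hvspan : Submodule.span ℚ (Set.range v) = ⊤ := by
    rw [← hspan, ← hvL, Submodule.span_span_of_tower]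
  have hGdet : ¬ (ℓ : ℤ) ∣ (Matrix.of G).det := by
    intro hdvd
    obtain ⟨y, -, hyL, hℓy, hyint⟩ :=
      exists_not_mem_span_of_prime_dvd_gram_det B v hv (Matrix.of G) hG hℓ hdvd
    rw [hvL] at hyL hℓy hyint
    refine hyL (mem_of_prime_smul_mem_of_mem_dualLattice (n := n) hℓ hodd V B L
      (f.restrictScalars ℤ) hfL hfD ?_ hfix hyint hℓy)
    ext x
    simpa [Module.End.pow_apply] using LinearMap.congr_fun hfN x
  let bL : Module.Basis (Fin d) ℚ V := Module.Basis.mk hv hvspan.ge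
  have hbL : (LinearMap.BilinForm.toMatrix bL B).det = ((Matrix.of G).det : ℚ) := by
    rw [Int.cast_det]
    congr 1
    ext i j
    simp [bL, LinearMap.BilinForm.toMatrix_apply, hG]
  -- The fixed lattice, whose Gram determinant is a power of `ℓ`.
  let F : Submodule ℤ V := L ⊓ LinearMap.ker ((f - 1).restrictScalars ℤ)
  have hFmem (x : V) : x ∈ F ↔ x ∈ L ∧ f x = x := by
    simp [F, sub_eq_zero]
  have hFfg : F.FG := hfg.of_le inf_le_left
  obtain ⟨d', u, hu, huF⟩ := hFfg.exists_linearIndependent_rat_span_int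
  have humem (i : Fin d') : u i ∈ F := huF ▸ Submodule.subset_span ⟨i, rfl⟩
  choose H hH using fun i j => hint (u i) (humem i).1 (u j) (humem j).1
  let K : Submodule ℚ V := Submodule.span ℚ (Set.range u)
  have hKfix (x : V) : x ∈ K ↔ f x = x := by
    constructor
    · intro hx
      have hle : K ≤ LinearMap.ker (f - 1) := by
        rw [Submodule.span_le]
        rintro _ ⟨i, rfl⟩
        exact (humem i).2
      simpa [sub_eq_zero] using hle hx
    · intro hx
      obtain ⟨c, hc, hcx⟩ :=
        L.exists_ne_zero_zsmul_mem_of_mem_span_rat (hspan ▸ Submodule.mem_top : x ∈ _)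
      have hcF : c • x ∈ F := (hFmem _).2 ⟨hcx, by rw [map_zsmul, hx]⟩
      rw [← huF] at hcF
      have hcK : (c : ℚ) • x ∈ K := by
        rw [Int.cast_smul_eq_zsmul]
        exact Submodule.span_subset_span ℤ ℚ _ hcF
      exact (Submodule.smul_mem_iff _ (by exact_mod_cast hc)).1 hcK
  let bK : Module.Basis (Fin d') ℚ K := Module.Basis.span hu
  have hbK_apply (i : Fin d') : (bK i : V) = u i :=
    congrArg Subtype.val (Module.Basis.span_apply hu i)
  have hbK : (LinearMap.BilinForm.toMatrix bK (LinearMap.BilinForm.restrict B K)).det =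
      ((Matrix.of H).det : ℚ) := by
    rw [Int.cast_det]
    congr 1
    ext i j
    simp [LinearMap.BilinForm.toMatrix_apply, hbK_apply, hH]
  have hHpos : 0 < (Matrix.of H).det := by
    have h := LinearMap.BilinForm.det_toMatrix_pos (LinearMap.BilinForm.restrict B K)
      (fun x y => hsymm x y) (fun x hx => hpos x (by simpa using hx)) bK
    rw [hbK] at h
    exact_mod_cast h
  have hHprime {p : ℕ} (hp : p.Prime) (hdvd : p ∣ (Matrix.of H).det.natAbs) : p = ℓ := by
    by_contra hne
    obtain ⟨y, hyK, hyF, hpy, hyint⟩ := exists_not_mem_span_of_prime_dvd_gram_det B u hu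
      (Matrix.of H) hH hp (Int.natCast_dvd.2 hdvd)
    rw [huF] at hyF hpy hyint
    have hy := (hKfix y).1 hyK
    have hNy : ((ℓ ^ n : ℕ) : ℤ) • y ∈ L := by
      refine hfix _ (smul_mem_dualLattice_of_fixed V B L f hfL hσB hfN hy
        fun x hx hfx => hyint x ((hFmem x).2 ⟨hx, hfx⟩)) ?_
      have : σ (((ℓ ^ n : ℕ) : ℤ) • y) = ((ℓ ^ n : ℕ) : ℤ) • y := by
        rw [map_zsmul]; exact congrArg _ hy
      rw [this, sub_self]
      exact L.zero_mem
    obtain ⟨a, b, hab⟩ : IsCoprime (p : ℤ) ((ℓ ^ n : ℕ) : ℤ) :=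
      Nat.isCoprime_iff_coprime.2 (((Nat.coprime_primes hp hℓ).2 hne).pow_right n)
    refine hyF ((hFmem y).2 ⟨?_, hy⟩)
    rw [← one_smul ℤ y, ← hab, add_smul, mul_smul, mul_smul]
    exact L.add_mem (L.smul_mem _ hpy.1) (L.smul_mem _ hNy)
  obtain ⟨e, he⟩ : ∃ e, (Matrix.of H).det.natAbs = ℓ ^ e :=
    ⟨_, Nat.eq_prime_pow_of_unique_prime_dvd (Int.natAbs_ne_zero.2 hHpos.ne') hHprime⟩
  have he' : (Matrix.of H).det = ((ℓ ^ e : ℕ) : ℤ) := by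
    rw [← he, Int.natAbs_of_nonneg hHpos.le]
  obtain ⟨j, hj, hjdet⟩ := (Matrix.of H).exists_card_eq_and_det_eq_of_even
    (fun x y => by
      have h : (H y x : ℚ) = H x y := by rw [← hH, ← hH, hsymm]
      exact_mod_cast h)
    (fun x => by
      obtain ⟨c, hc⟩ := heven (u x) (humem x).1
      rw [hH] at hc
      exact even_iff_two_dvd.2 ⟨c, by exact_mod_cast hc⟩)
    (by rw [he']; exact_mod_cast hodd.pow)
  -- The orthogonal complement of the fixed space.
  let M : Submodule ℚ V := LinearMap.BilinForm.orthogonal B K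
  have hdisj : Disjoint K M := by
    rw [Submodule.disjoint_def]
    intro x hxK hxM
    by_contra hx0
    exact (hpos x hx0).ne' (hxM x hxK)
  have hcompl : IsCompl K M :=
    (LinearMap.BilinForm.isCompl_orthogonal_iff_disjoint
      (fun x y h => (hsymm y x).trans h)).2 hdisj
  have hfM (x : V) (hx : x ∈ M) : f x ∈ M := by
    intro y hy
    have h : B y (f x) = B (f y) (f x) := by rw [(hKfix y).1 hy]
    exact h.trans ((hσB y x).trans (hx y hy))
  let bM := Module.finBasis ℚ M
  obtain ⟨r, t, ht, hmod⟩ := exists_det_orthogonal_mul_prime_pow_eq_sq (n := n) hℓ hodd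
    (LinearMap.BilinForm.restrict B M) (fun x y => hsymm x y)
    (fun x hx => hpos x (by simpa using hx)) bM (f.restrict hfM) (fun x y => hσB x y)
    (by
      rw [Module.End.pow_restrict]
      ext x
      simp [hfN])
    (fun x hx => Subtype.ext <| (Submodule.disjoint_def.1 hdisj) x
      ((hKfix x).2 (congrArg Subtype.val hx)) x.2)
  obtain ⟨s, hs, hsdet⟩ := LinearMap.BilinForm.exists_det_toMatrix_eq_sq_mul B bL
    ((bK.prod bM).map (Submodule.prodEquivOfIsCompl K M hcompl))
  rw [LinearMap.BilinForm.toMatrix_prodEquivOfIsCompl_orthogonal B hsymm K hcompl bK bM, hbK, hbL,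
    he'] at hsdet
  refine even_of_discriminant_relations hℓ hodd hGdet hs (by exact_mod_cast hsdet) ht
    (j := j) (by rw [← hjdet, he']; norm_cast) hmod ?_
  rw [← hrank, ← hj, ← Submodule.finrank_add_eq_of_isCompl hcompl, Module.finrank_eq_card_basis bK,
    Fintype.card_fin (Module.finrank ℚ M)]
end

section
/- Let Q(x,y) = ax² + bxy + cy² be a primitive positive definite integral binary quadratic form, and let ℓ ≥ 5 be prime. Then there exist integers x, y such that every prime p dividing Q(x,y) satisfies p ≢ 0 mod ℓ and p ≢ -1 mod ℓ. -/
open Filter Topology Asymptotics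

open ArithmeticFunction.vonMangoldt in
/-- The sum of `p ^ (-s)` over the primes in a reduced residue class modulo `q` is
`log (1 / (s - 1)) / φ(q) + O(1)` as `s → 1⁺`. -/
theorem exists_abs_tsum_primes_residueClass_add_log_le {q : ℕ} [NeZero q] {a : ZMod q}
    (ha : IsUnit a) :
    ∃ C : ℝ, ∀ s ∈ Set.Ioc (1 : ℝ) 2,
      |∑' n : ℕ, Set.indicator {p : ℕ | p.Prime ∧ (p : ZMod q) = a}
          (fun n : ℕ ↦ (n : ℝ) ^ (-s)) n + (q.totient : ℝ)⁻¹ * Real.log (s - 1)| ≤ C := by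
  classical
  set P : Set ℕ := {p : ℕ | p.Prime ∧ (p : ZMod q) = a} with hP
  set c : ℕ → ℂ := P.indicator 1 with hc
  set np : ℕ → ℂ := fun n ↦ ((if n.Prime then 0 else residueClass a n : ℝ) : ℂ) with hnp
  have hc1 (n : ℕ) : ‖c n‖ ≤ 1 := by
    by_cases h : n ∈ P <;> simp [hc, h]
  have habs : LSeries.abscissaOfAbsConv c ≤ 1 :=
    LSeries.abscissaOfAbsConv_le_of_le_const ⟨1, fun n _ ↦ hc1 n⟩
  have hsplit (n : ℕ) : LSeries.logMul c n = (residueClass a n : ℂ) - np n := by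
    by_cases hp : n.Prime <;> by_cases hm : (n : ZMod q) = a <;>
      simp [LSeries.logMul, hc, hP, hnp, hp, hm, residueClass, Set.indicator,
        ArithmeticFunction.vonMangoldt_apply_prime]
  have hnpsum : Summable fun n : ℕ ↦ (if n.Prime then 0 else residueClass a n) / (n : ℝ) :=
    summable_residueClass_non_primes_div a
  obtain ⟨C₁, hC₁⟩ : ∃ C₁ : ℝ, ∀ x ∈ Set.Icc (1 : ℝ) 2,
      ‖LFunctionResidueClassAux a (x : ℂ)‖ ≤ C₁ := by
    have : ContinuousOn (fun x : ℝ ↦ LFunctionResidueClassAux a (x : ℂ)) (Set.Icc 1 2) :=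
      (continuousOn_LFunctionResidueClassAux a).comp Complex.continuous_ofReal.continuousOn
        fun x hx ↦ by simpa using hx.1
    exact isCompact_Icc.exists_bound_of_continuousOn this
  set C₂ := ∑' n : ℕ, (if n.Prime then 0 else residueClass a n) / (n : ℝ) with hC₂
  have hterm {x : ℝ} (hx : 1 < x) (n : ℕ) :
      ‖LSeries.term np x n‖ ≤ (if n.Prime then 0 else residueClass a n) / (n : ℝ) := by
    rcases Nat.eq_zero_or_pos n with rfl | hn
    · simp
    · have h0 : 0 ≤ (if n.Prime then 0 else residueClass a n : ℝ) := by
        split_ifs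
        exacts [le_rfl, residueClass_nonneg a n]
      rw [LSeries.norm_term_eq, if_neg hn.ne', hnp, Complex.norm_real, Real.norm_of_nonneg h0,
        Complex.ofReal_re]
      refine div_le_div_of_nonneg_left h0 (by exact_mod_cast hn) ?_
      conv_lhs => rw [← Real.rpow_one n]
      exact Real.rpow_le_rpow_of_exponent_le (by exact_mod_cast hn) hx.le
  have hnpS {x : ℝ} (hx : 1 < x) : LSeriesSummable np x :=
    Summable.of_norm_bounded hnpsum (hterm hx)
  have hnpB {x : ℝ} (hx : 1 < x) : ‖LSeries np x‖ ≤ C₂ :=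
    tsum_of_norm_bounded hnpsum.hasSum (hterm hx)
  have hlt {x : ℝ} (hx : 1 < x) : LSeries.abscissaOfAbsConv c < (x : ℂ).re :=
    habs.trans_lt (by rw [Complex.ofReal_re]; exact_mod_cast hx)
  have hval {x : ℝ} (hx : 1 < x) :
      LSeries (LSeries.logMul c) x =
        LFunctionResidueClassAux a x + (q.totient : ℂ)⁻¹ / (x - 1) - LSeries np x := by
    have hrs : LSeriesSummable (fun n ↦ (residueClass a n : ℂ)) x :=
      LSeriesSummable_of_abscissaOfAbsConv_lt_re <|
        (abscissaOfAbsConv_residueClass_le_one a).trans_lt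
          (by rw [Complex.ofReal_re]; exact_mod_cast hx)
    have h1 : LSeries.logMul c = (fun n ↦ (residueClass a n : ℂ)) - np := by
      ext n; simpa using hsplit n
    rw [h1, LSeries_sub hrs (hnpS hx), eqOn_LFunctionResidueClassAux ha (by simpa using hx)]
    ring
  set g : ℝ → ℝ := fun x ↦ (LSeries c x).re + (q.totient : ℝ)⁻¹ * Real.log (x - 1) with hg
  set g' : ℝ → ℝ := fun x ↦ (-LSeries (LSeries.logMul c) x).re + (q.totient : ℝ)⁻¹ * (x - 1)⁻¹
    with hg'
  have hder : ∀ x ∈ Set.Ioc (1 : ℝ) 2, HasDerivWithinAt g (g' x) (Set.Ioc 1 2) x := by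
    intro x hx
    refine ((LSeries_hasDerivAt (hlt hx.1)).real_of_complex.add
      (HasDerivAt.const_mul _ ?_)).hasDerivWithinAt
    simpa using ((hasDerivAt_id x).sub_const 1).log (sub_pos.mpr hx.1).ne'
  have hbd : ∀ x ∈ Set.Ioc (1 : ℝ) 2, ‖g' x‖ ≤ C₁ + C₂ := by
    intro x hx
    have h1 : g' x = (LSeries np x - LFunctionResidueClassAux a x).re := by
      simp only [hg', hval hx.1, Complex.neg_re, Complex.sub_re, Complex.add_re]
      have : ((q.totient : ℂ)⁻¹ / ((x : ℂ) - 1)).re = (q.totient : ℝ)⁻¹ * (x - 1)⁻¹ := by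
        rw [← Complex.ofReal_one, ← Complex.ofReal_sub, ← Complex.ofReal_natCast,
          ← Complex.ofReal_inv, ← Complex.ofReal_div, Complex.ofReal_re, div_eq_mul_inv]
      rw [this]; ring
    rw [h1, Real.norm_eq_abs]
    refine (Complex.abs_re_le_norm _).trans ((norm_sub_le _ _).trans ?_)
    linarith [hnpB hx.1, hC₁ x ⟨hx.1.le, hx.2⟩]
  refine ⟨C₁ + C₂ + |g 2|, fun s hs ↦ ?_⟩
  have hgs : g s = ∑' n : ℕ, P.indicator (fun n : ℕ ↦ (n : ℝ) ^ (-s)) n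
      + (q.totient : ℝ)⁻¹ * Real.log (s - 1) := by
    simp only [hg]
    congr 1
    rw [LSeries, Complex.re_tsum (LSeriesSummable_of_abscissaOfAbsConv_lt_re (hlt hs.1))]
    refine tsum_congr fun n ↦ ?_
    by_cases hn : n ∈ P
    · have hn0 : n ≠ 0 := hn.1.ne_zero
      rw [LSeries.term_of_ne_zero hn0, hc, Set.indicator_of_mem hn, Set.indicator_of_mem hn,
        Pi.one_apply, ← Complex.ofReal_natCast, ← Complex.ofReal_cpow n.cast_nonneg,
        ← Complex.ofReal_one, ← Complex.ofReal_div, Complex.ofReal_re, Real.rpow_neg n.cast_nonneg,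
        one_div]
    · rcases eq_or_ne n 0 with rfl | hn0
      · simp [hn]
      · simp [LSeries.term_of_ne_zero hn0, hc, hn]
  rw [← hgs]
  have hmv := (convex_Ioc (1 : ℝ) 2).norm_image_sub_le_of_norm_hasDerivWithin_le hder hbd
    (x := 2) (y := s) (by simp) hs
  have h2 : ‖s - 2‖ ≤ 1 := by
    rw [Real.norm_eq_abs, abs_le]; constructor <;> linarith [hs.1, hs.2]
  have hC0 : 0 ≤ C₁ + C₂ := (norm_nonneg _).trans (hbd 2 (by simp))
  have h3 : ‖g s - g 2‖ ≤ C₁ + C₂ := hmv.trans (mul_le_of_le_one_right hC0 h2)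
  rw [Real.norm_eq_abs] at h3
  calc |g s| = |(g s - g 2) + g 2| := by ring_nf
    _ ≤ _ := (abs_add_le _ _).trans (by linarith)

namespace QuadraticAlgebra

/-- The sup-norm of the coordinate vector of an element of a quadratic algebra over `ℤ`. -/
def height {u b : ℤ} (z : QuadraticAlgebra ℤ u b) : ℕ := max z.re.natAbs z.im.natAbs

section Height

variable {u b : ℤ}

theorem finite_height_eq (n : ℕ) : Finite {z : QuadraticAlgebra ℤ u b // z.height = n} ∧
    Nat.card {z : QuadraticAlgebra ℤ u b // z.height = n} ≤ 8 * (n + 1) := by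
  have e : {z : QuadraticAlgebra ℤ u b // z.height = n} ≃
      {x : ℤ × ℤ // x ∈ (Finset.box n : Finset (ℤ × ℤ))} :=
    (QuadraticAlgebra.equivProd u b).subtypeEquiv (fun z ↦ by
      rw [Int.mem_box]; rfl)
  refine ⟨Finite.of_equiv _ e.symm, ?_⟩
  rw [Nat.card_congr e, Nat.card_eq_fintype_card, Fintype.card_coe]
  rcases eq_or_ne n 0 with rfl | hn
  · simp
  · rw [Int.card_box hn]; omega

theorem hasSum_height_le {f : ℕ → ℝ} (hf : ∀ n, 0 ≤ f n)
    (hs : Summable fun n : ℕ ↦ ((n : ℝ) + 1) * f n) :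
    Summable (fun z : QuadraticAlgebra ℤ u b ↦ f z.height) ∧
      ∑' z : QuadraticAlgebra ℤ u b, f z.height ≤ 8 * ∑' n : ℕ, ((n : ℝ) + 1) * f n := by
  let e := Equiv.sigmaFiberEquiv (height : QuadraticAlgebra ℤ u b → ℕ)
  have hfin (n : ℕ) : Finite {z : QuadraticAlgebra ℤ u b // z.height = n} := (finite_height_eq n).1
  have hfib (n : ℕ) : ∑' z : {z : QuadraticAlgebra ℤ u b // z.height = n}, f (e ⟨n, z⟩).height
      = Nat.card {z : QuadraticAlgebra ℤ u b // z.height = n} * f n := by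
    have : ∀ z : {z : QuadraticAlgebra ℤ u b // z.height = n}, f (e ⟨n, z⟩).height = f n :=
      fun z ↦ congrArg f z.2
    simp_rw [this]
    have := Fintype.ofFinite {z : QuadraticAlgebra ℤ u b // z.height = n}
    simp [tsum_fintype]
  have hle (n : ℕ) : (Nat.card {z : QuadraticAlgebra ℤ u b // z.height = n} : ℝ) * f n
      ≤ 8 * (((n : ℝ) + 1) * f n) := by
    have := (finite_height_eq (u := u) (b := b) n).2
    have h2 : (Nat.card {z : QuadraticAlgebra ℤ u b // z.height = n} : ℝ) ≤ 8 * ((n : ℝ) + 1) := by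
      exact_mod_cast this
    calc _ ≤ 8 * ((n : ℝ) + 1) * f n := mul_le_mul_of_nonneg_right h2 (hf n)
      _ = _ := by ring
  have hsum8 := hs.mul_left 8
  have hs' : Summable fun n : ℕ ↦
      (Nat.card {z : QuadraticAlgebra ℤ u b // z.height = n} : ℝ) * f n :=
    Summable.of_nonneg_of_le (fun n ↦ mul_nonneg (by positivity) (hf n)) hle hsum8
  have hsig : Summable fun p ↦ f (e p).height := by
    refine (summable_sigma_of_nonneg (fun _ ↦ hf _)).2 ⟨fun n ↦ Summable.of_finite, ?_⟩
    exact hs'.congr fun n ↦ (hfib n).symm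
  refine ⟨e.summable_iff.1 hsig, ?_⟩
  rw [← e.tsum_eq (fun z : QuadraticAlgebra ℤ u b ↦ f z.height), hsig.tsum_sigma]
  simp_rw [hfib]
  rw [← tsum_mul_left]
  exact hs'.tsum_le_tsum hle hsum8

theorem summable_height_rpow {k : ℝ} (hk : 2 < k) :
    Summable (fun z : QuadraticAlgebra ℤ u b ↦ ((z.height : ℝ) + 1) ^ (-k)) ∧
      ∑' z : QuadraticAlgebra ℤ u b, ((z.height : ℝ) + 1) ^ (-k)
        ≤ 8 * ∑' n : ℕ, 1 / (n : ℝ) ^ (k - 1) := by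
  have h1 (n : ℕ) : ((n : ℝ) + 1) * ((n : ℝ) + 1) ^ (-k) = 1 / ((n + 1 : ℕ) : ℝ) ^ (k - 1) := by
    have : (0 : ℝ) < (n : ℝ) + 1 := by positivity
    rw [← Real.rpow_one_add' this.le (by linarith), one_div, ← Real.rpow_neg (by positivity)]
    push_cast; congr 1; ring
  have hs0 : Summable fun n : ℕ ↦ 1 / (n : ℝ) ^ (k - 1) :=
    Real.summable_one_div_nat_rpow.2 (by linarith)
  have hs := (summable_nat_add_iff 1).2 hs0
  have := hasSum_height_le (u := u) (b := b) (f := fun n : ℕ ↦ ((n : ℝ) + 1) ^ (-k))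
    (fun n ↦ by positivity) (hs.congr fun n ↦ (h1 n).symm)
  refine ⟨this.1, this.2.trans ?_⟩
  simp_rw [h1]
  rw [hs0.tsum_eq_zero_add]
  have : (0 : ℝ) ≤ 1 / ((0 : ℕ) : ℝ) ^ (k - 1) := by positivity
  linarith

end Height

section Norm

variable {u b : ℤ}

theorem height_sq_le_norm (hD : b ^ 2 + 4 * u < 0) (z : QuadraticAlgebra ℤ u b) :
    (z.height : ℤ) ^ 2 ≤ -4 * u * z.norm := by
  have hu : u < 0 := by nlinarith [sq_nonneg b]
  rw [norm_def]
  rcases max_choice z.re.natAbs z.im.natAbs with h | h <;> rw [height, h, Int.natCast_natAbs, sq_abs]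
  · nlinarith [sq_nonneg (b * z.re - 2 * u * z.im),
      mul_nonneg (by linarith : 0 ≤ -(b ^ 2 + 4 * u) - 1) (sq_nonneg z.re)]
  · nlinarith [sq_nonneg (2 * z.re + b * z.im),
      mul_nonneg (by linarith : 0 ≤ -(b ^ 2 + 4 * u) - 1) (sq_nonneg z.im),
      mul_nonneg (by linarith : 0 ≤ -u - 1) (sq_nonneg (2 * z.re + b * z.im)),
      mul_nonneg (by linarith : 0 ≤ -u - 1) (sq_nonneg z.im),
      mul_nonneg (by linarith : 0 ≤ -u)
        (mul_nonneg (by linarith : 0 ≤ -(b ^ 2 + 4 * u) - 1) (sq_nonneg z.im))]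

theorem norm_nonneg' (hD : b ^ 2 + 4 * u < 0) (z : QuadraticAlgebra ℤ u b) : 0 ≤ z.norm := by
  have hu : u < 0 := by nlinarith [sq_nonneg b]
  have := height_sq_le_norm hD z
  by_contra! h
  nlinarith [sq_nonneg (z.height : ℤ)]

theorem height_eq_zero {z : QuadraticAlgebra ℤ u b} (h : z.height = 0) : z = 0 := by
  unfold height at h
  ext <;> simp <;> omega

theorem norm_pos' (hD : b ^ 2 + 4 * u < 0) {z : QuadraticAlgebra ℤ u b} (hz : z ≠ 0) : 0 < z.norm := by
  refine (norm_nonneg' hD z).lt_of_ne fun h ↦ hz (height_eq_zero ?_)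
  have := height_sq_le_norm hD z
  rw [← h] at this
  have h2 : (z.height : ℤ) ^ 2 ≤ 0 := by linarith
  have := sq_eq_zero_iff.1 (le_antisymm h2 (sq_nonneg _))
  exact_mod_cast this

theorem norm_le_height_sq (z : QuadraticAlgebra ℤ u b) :
    z.norm ≤ (1 + |b| + |u|) * (z.height : ℤ) ^ 2 := by
  have hx : |z.re| ≤ z.height := by rw [Int.abs_eq_natAbs]; unfold height; exact_mod_cast le_max_left _ _
  have hy : |z.im| ≤ z.height := by rw [Int.abs_eq_natAbs]; unfold height; exact_mod_cast le_max_right _ _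
  rw [norm_def]
  have h1 : z.re * z.re ≤ (z.height : ℤ) ^ 2 := by
    rw [← abs_mul_abs_self]; nlinarith [abs_nonneg z.re]
  have h2 : b * z.re * z.im ≤ |b| * (z.height : ℤ) ^ 2 := by
    calc _ ≤ |b * z.re * z.im| := le_abs_self _
      _ = |b| * (|z.re| * |z.im|) := by rw [abs_mul, abs_mul]; ring
      _ ≤ _ := by
        refine mul_le_mul_of_nonneg_left ?_ (abs_nonneg _)
        nlinarith [abs_nonneg z.re, abs_nonneg z.im]
  have h3 : -(u * z.im * z.im) ≤ |u| * (z.height : ℤ) ^ 2 := by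
    calc _ ≤ |u * z.im * z.im| := neg_le_abs _
      _ = |u| * (|z.im| * |z.im|) := by rw [abs_mul, abs_mul]; ring
      _ ≤ _ := by
        refine mul_le_mul_of_nonneg_left ?_ (abs_nonneg _)
        nlinarith [abs_nonneg z.im]
  linarith

end Norm

end QuadraticAlgebra

theorem abs_rpow_neg_sub_rpow_neg_le {A B s : ℝ} (hA : 1 ≤ A) (hB : 1 ≤ B) (hs : 1 ≤ s)
    (hs2 : s ≤ 2) : |A ^ (-s) - B ^ (-s)| ≤ 2 * |A - B| / (A * B) := by
  wlog hAB : A ≤ B generalizing A B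
  · rw [abs_sub_comm, abs_sub_comm A B, mul_comm A B]
    exact this hB hA (le_of_not_ge hAB)
  have hA0 : 0 < A := by linarith
  have hB0 : 0 < B := by linarith
  have h1 : 1 + s * (A / B - 1) ≤ (A / B) ^ s := by
    have := one_add_mul_self_le_rpow_one_add (s := A / B - 1) (p := s)
      (by have : 0 ≤ A / B := by positivity
          linarith) hs
    simpa using this
  have h2 : B ^ (-s) = A ^ (-s) * (A / B) ^ s := by
    rw [Real.div_rpow hA0.le hB0.le, Real.rpow_neg hB0.le, Real.rpow_neg hA0.le]
    field_simp
  have h3 : B ^ (-s) ≤ A ^ (-s) := Real.rpow_le_rpow_of_nonpos hA0 hAB (by linarith)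
  have h4 : A ^ (-s) ≤ A⁻¹ := by
    rw [← Real.rpow_neg_one]; exact Real.rpow_le_rpow_of_exponent_le hA (by linarith)
  have hx : 0 ≤ 1 - A / B := by
    rw [sub_nonneg, div_le_one hB0]; exact hAB
  rw [abs_of_nonneg (by linarith), abs_of_nonpos (by linarith : A - B ≤ 0), h2]
  calc A ^ (-s) - A ^ (-s) * (A / B) ^ s = A ^ (-s) * (1 - (A / B) ^ s) := by ring
    _ ≤ A ^ (-s) * (2 * (1 - A / B)) := by
      refine mul_le_mul_of_nonneg_left ?_ (by positivity)
      nlinarith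
    _ ≤ A⁻¹ * (2 * (1 - A / B)) := mul_le_mul_of_nonneg_right h4 (by linarith)
    _ = _ := by field_simp; ring

/-- The Riemann zeta function at `2 s - 1` has a simple pole at `s = 1`. -/
theorem tendsto_sub_mul_tsum_two_mul_sub :
    Tendsto (fun s : ℝ ↦ (s - 1) * ∑' n : ℕ, 1 / (n : ℝ) ^ (2 * s - 1)) (𝓝[>] 1) (𝓝 (1 / 2)) := by
  have h : Tendsto (fun s : ℝ ↦ 2 * s - 1) (𝓝[>] 1) (𝓝[>] 1) := by
    refine tendsto_nhdsWithin_iff.2 ⟨?_, ?_⟩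
    · have : Continuous fun s : ℝ ↦ 2 * s - 1 := by fun_prop
      have := this.tendsto 1
      norm_num at this
      exact this.mono_left nhdsWithin_le_nhds
    · filter_upwards [self_mem_nhdsWithin] with s hs
      simp only [Set.mem_Ioi] at hs ⊢
      linarith
  have := (tendsto_sub_mul_tsum_nat_rpow.comp h).div_const 2
  refine this.congr fun s ↦ ?_
  simp only [Function.comp]
  ring

theorem isBigO_tsum_two_mul_sub :
    (fun s : ℝ ↦ ∑' n : ℕ, 1 / (n : ℝ) ^ (2 * s - 1)) =O[𝓝[>] 1] fun s ↦ (s - 1)⁻¹ := by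
  have h := (tendsto_sub_mul_tsum_two_mul_sub.isBigO_one ℝ).mul
    (isBigO_refl (fun s : ℝ ↦ (s - 1)⁻¹) (𝓝[>] 1))
  refine (h.congr' ?_ ?_)
  · filter_upwards [self_mem_nhdsWithin] with s hs
    have : s - 1 ≠ 0 := by simp only [Set.mem_Ioi] at hs; linarith
    field_simp
  · exact Eventually.of_forall fun s ↦ by simp

namespace QuadraticAlgebra

variable {u b : ℤ}

theorem norm_rpow_le (hD : b ^ 2 + 4 * u < 0) {s : ℝ} (hs : 1 < s) (hs2 : s ≤ 2)
    (z : QuadraticAlgebra ℤ u b) :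
    (z.norm : ℝ) ^ (-s) ≤ (16 * |(u : ℝ)|) ^ (2 : ℝ) * ((z.height : ℝ) + 1) ^ (-(2 * s)) := by
  have hu : u < 0 := by nlinarith [sq_nonneg b]
  have hu' : (1 : ℝ) ≤ |(u : ℝ)| := by
    rw [abs_of_neg (by exact_mod_cast hu)]
    have : u ≤ -1 := by omega
    have : (u : ℝ) ≤ -1 := by exact_mod_cast this
    linarith
  rcases eq_or_ne z 0 with rfl | hz
  · simp only [norm_zero, Int.cast_zero]
    rw [Real.zero_rpow (by linarith)]
    positivity
  have hN : (0 : ℝ) < z.norm := by exact_mod_cast norm_pos' hD hz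
  have hht : (1 : ℝ) ≤ z.height := by
    have : z.height ≠ 0 := fun h ↦ hz (height_eq_zero h)
    exact_mod_cast Nat.one_le_iff_ne_zero.2 this
  have h1 : ((z.height : ℝ) + 1) ^ 2 ≤ 16 * |(u : ℝ)| * z.norm := by
    have : ((z.height : ℝ)) ^ 2 ≤ -4 * u * z.norm := by exact_mod_cast height_sq_le_norm hD z
    rw [abs_of_neg (by exact_mod_cast hu)]
    nlinarith
  have h2 : (16 * |(u : ℝ)| * z.norm) ^ (-s) ≤ (((z.height : ℝ) + 1) ^ 2) ^ (-s) :=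
    Real.rpow_le_rpow_of_nonpos (by positivity) h1 (by linarith)
  rw [← Real.rpow_natCast, ← Real.rpow_mul (by positivity), Real.mul_rpow (by positivity) hN.le]
    at h2
  have h3 : (z.norm : ℝ) ^ (-s) = (16 * |(u : ℝ)|) ^ s *
      ((16 * |(u : ℝ)|) ^ (-s) * (z.norm : ℝ) ^ (-s)) := by
    rw [← mul_assoc, ← Real.rpow_add (by positivity)]; simp
  rw [h3]
  refine mul_le_mul (Real.rpow_le_rpow_of_exponent_le (by linarith) hs2) (h2.trans (le_of_eq ?_))
    (by positivity) (by positivity)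
  congr 1; push_cast; ring

theorem summable_norm_rpow (hD : b ^ 2 + 4 * u < 0) {s : ℝ} (hs : 1 < s) (hs2 : s ≤ 2) :
    Summable fun z : QuadraticAlgebra ℤ u b ↦ (z.norm : ℝ) ^ (-s) := by
  refine Summable.of_nonneg_of_le (fun z ↦ ?_) (norm_rpow_le hD hs hs2)
    ((summable_height_rpow (by linarith)).1.mul_left _)
  have : (0 : ℝ) ≤ z.norm := by exact_mod_cast norm_nonneg' hD z
  positivity

theorem eventually_mem_Ioc : ∀ᶠ s : ℝ in 𝓝[>] 1, 1 < s ∧ s ≤ 2 :=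
  Ioc_mem_nhdsGT (by norm_num : (1 : ℝ) < 2)

theorem isBigO_tsum_indicator_norm_rpow (hD : b ^ 2 + 4 * u < 0)
    (T : Set (QuadraticAlgebra ℤ u b)) :
    (fun s : ℝ ↦ ∑' z : QuadraticAlgebra ℤ u b, T.indicator (fun z ↦ (z.norm : ℝ) ^ (-s)) z)
      =O[𝓝[>] 1] fun s ↦ (s - 1)⁻¹ := by
  refine IsBigO.trans (IsBigO.of_bound ((16 * |(u : ℝ)|) ^ (2 : ℝ) * 8) ?_) isBigO_tsum_two_mul_sub
  filter_upwards [eventually_mem_Ioc] with s ⟨hs, hs2⟩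
  have h0 (z : QuadraticAlgebra ℤ u b) : 0 ≤ (z.norm : ℝ) ^ (-s) := by
    have : (0 : ℝ) ≤ z.norm := by exact_mod_cast norm_nonneg' hD z
    positivity
  have hsum := summable_norm_rpow hD hs hs2
  have hh := summable_height_rpow (u := u) (b := b) (k := 2 * s) (by linarith)
  rw [Real.norm_of_nonneg (tsum_nonneg fun z ↦ Set.indicator_nonneg (fun z _ ↦ h0 z) z),
    Real.norm_of_nonneg (tsum_nonneg fun n ↦ by positivity)]
  calc _ ≤ ∑' z : QuadraticAlgebra ℤ u b, (16 * |(u : ℝ)|) ^ (2 : ℝ) *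
        ((z.height : ℝ) + 1) ^ (-(2 * s)) := by
        refine (hsum.indicator T).tsum_le_tsum (fun z ↦ ?_) (hh.1.mul_left _)
        exact (Set.indicator_le_self' (fun _ _ ↦ h0 _) z).trans (norm_rpow_le hD hs hs2 z)
    _ ≤ _ := by
        rw [tsum_mul_left, mul_assoc]
        exact mul_le_mul_of_nonneg_left hh.2 (by positivity)

theorem height_add_intCast_le (z : QuadraticAlgebra ℤ u b) (d : ℤ) :
    (z + (d : QuadraticAlgebra ℤ u b)).height ≤ z.height + d.natAbs := by
  unfold height
  simp only [re_add, im_add, re_intCast, im_intCast, Int.cast_id]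
  omega

theorem exists_abs_norm_rpow_sub_le (hD : b ^ 2 + 4 * u < 0) (d : ℤ) :
    ∃ K : ℝ, ∀ s : ℝ, 1 < s → s ≤ 2 → ∀ z : QuadraticAlgebra ℤ u b,
      |(z.norm : ℝ) ^ (-s) - ((z + (d : QuadraticAlgebra ℤ u b)).norm : ℝ) ^ (-s)|
        ≤ K * ((z.height : ℝ) + 1) ^ (-(3 : ℝ)) := by
  have hu : u < 0 := by nlinarith [sq_nonneg b]
  set U : ℝ := 16 * |(u : ℝ)| with hU
  set V : ℝ := |(d : ℝ)| + 1 with hV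
  have hU1 : 1 ≤ U := by
    have : (1 : ℝ) ≤ |(u : ℝ)| := by
      have : 1 ≤ |u| := Int.one_le_abs hu.ne
      exact_mod_cast this
    linarith
  have hV1 : 1 ≤ V := by simp [hV]
  set W : ℝ := 2 * |(d : ℝ)| + |(b : ℝ) * d| + d ^ 2 with hW
  have hW0 : 0 ≤ W := by positivity
  refine ⟨V ^ 3 + 2 * W * U ^ 2 * V ^ 2, fun s hs hs2 z ↦ ?_⟩
  set w := z + (d : QuadraticAlgebra ℤ u b) with hw
  set h : ℝ := (z.height : ℝ) + 1 with hh
  have hh1 : 1 ≤ h := by simp [hh]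
  have hpow : h ^ (-(3 : ℝ)) = (h ^ 3)⁻¹ := by
    rw [Real.rpow_neg (by positivity)]; norm_cast
  rw [hpow, ← div_eq_mul_inv, le_div_iff₀ (by positivity)]
  have hbd (x : QuadraticAlgebra ℤ u b) : 0 ≤ (x.norm : ℝ) ^ (-s) ∧ (x.norm : ℝ) ^ (-s) ≤ 1 := by
    have h0 : (0 : ℝ) ≤ x.norm := by exact_mod_cast norm_nonneg' hD x
    refine ⟨by positivity, ?_⟩
    rcases eq_or_ne x 0 with rfl | hx
    · simp only [norm_zero, Int.cast_zero]
      rw [Real.zero_rpow (by linarith)]; norm_num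
    · have : (1 : ℝ) ≤ x.norm := by exact_mod_cast norm_pos' hD hx
      exact Real.rpow_le_one_of_one_le_of_nonpos this (by linarith)
  have hbd2 : |(z.norm : ℝ) ^ (-s) - (w.norm : ℝ) ^ (-s)| ≤ 1 := by
    have h1 := hbd z; have h2 := hbd w
    rw [abs_le]; constructor <;> linarith
  have hht : h ≤ V * (w.height + 1) := by
    have h1 : z.height ≤ w.height + d.natAbs := by
      have := height_add_intCast_le w (-d)
      simpa [hw] using this
    have h2 : (z.height : ℝ) ≤ w.height + |(d : ℝ)| := by
      have : (z.height : ℝ) ≤ w.height + (d.natAbs : ℝ) := by exact_mod_cast h1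
      simpa using this
    have h3 : (0 : ℝ) ≤ w.height := by positivity
    nlinarith [abs_nonneg (d : ℝ)]
  by_cases hz : z = 0
  · have : h = 1 := by simp [hh, hz, height]
    rw [this]
    have : 1 ≤ V ^ 3 := one_le_pow₀ hV1
    have : 0 ≤ 2 * W * U ^ 2 * V ^ 2 := by positivity
    linarith
  by_cases hw0 : w = 0
  · have h1 : h ≤ V := by
      have : w.height = 0 := by simp [hw0, height]
      rw [this] at hht; simpa using hht
    have h2 : h ^ 3 ≤ V ^ 3 := by gcongr
    have : 0 ≤ 2 * W * U ^ 2 * V ^ 2 := by positivity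
    nlinarith [pow_pos (by linarith : 0 < h) 3]
  have hA : (1 : ℝ) ≤ z.norm := by exact_mod_cast norm_pos' hD hz
  have hB : (1 : ℝ) ≤ w.norm := by exact_mod_cast norm_pos' hD hw0
  have hlow (x : QuadraticAlgebra ℤ u b) (hx : x ≠ 0) :
      ((x.height : ℝ) + 1) ^ 2 ≤ U * x.norm := by
    have h1 : ((x.height : ℝ)) ^ 2 ≤ -4 * u * x.norm := by exact_mod_cast height_sq_le_norm hD x
    have hht : (1 : ℝ) ≤ x.height := by
      have : x.height ≠ 0 := fun h ↦ hx (height_eq_zero h)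
      exact_mod_cast Nat.one_le_iff_ne_zero.2 this
    rw [hU, abs_of_neg (by exact_mod_cast hu)]
    nlinarith
  have hzl := hlow z hz
  have hwl := hlow w hw0
  have hwl2 : h ^ 2 ≤ V ^ 2 * (U * w.norm) := by
    calc h ^ 2 ≤ (V * (w.height + 1)) ^ 2 := by gcongr
      _ = V ^ 2 * ((w.height : ℝ) + 1) ^ 2 := by ring
      _ ≤ _ := by gcongr
  have hdiff : |(z.norm : ℝ) - w.norm| ≤ W * h := by
    have hx : |(z.re : ℝ)| ≤ h := by
      have : |z.re| ≤ z.height := by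
        rw [Int.abs_eq_natAbs]; unfold height; exact_mod_cast le_max_left _ _
      have : |(z.re : ℝ)| ≤ (z.height : ℝ) := by exact_mod_cast this
      linarith
    have hy : |(z.im : ℝ)| ≤ h := by
      have : |z.im| ≤ z.height := by
        rw [Int.abs_eq_natAbs]; unfold height; exact_mod_cast le_max_right _ _
      have : |(z.im : ℝ)| ≤ (z.height : ℝ) := by exact_mod_cast this
      linarith
    have : (z.norm : ℝ) - w.norm = -(2 * d * z.re + b * d * z.im + d ^ 2) := by
      rw [hw, norm_def, norm_def]
      simp only [re_add, im_add, re_intCast, im_intCast]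
      push_cast; ring
    rw [this, abs_neg]
    calc _ ≤ |2 * (d : ℝ) * z.re| + |(b : ℝ) * d * z.im| + |(d : ℝ) ^ 2| := abs_add_three _ _ _
      _ = 2 * |(d : ℝ)| * |(z.re : ℝ)| + |(b : ℝ) * d| * |(z.im : ℝ)| + (d : ℝ) ^ 2 := by
        rw [abs_mul, abs_mul, abs_mul _ (z.im : ℝ), abs_of_nonneg (sq_nonneg (d : ℝ))]; simp
      _ ≤ 2 * |(d : ℝ)| * h + |(b : ℝ) * d| * h + (d : ℝ) ^ 2 * h := by
        gcongr
        nlinarith [sq_nonneg (d : ℝ)]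
      _ = _ := by rw [hW]; ring
  have key := abs_rpow_neg_sub_rpow_neg_le hA hB hs.le hs2
  have hAB : h ^ 4 ≤ U ^ 2 * V ^ 2 * (z.norm * w.norm) := by
    calc h ^ 4 = h ^ 2 * h ^ 2 := by ring
      _ ≤ (U * z.norm) * (V ^ 2 * (U * w.norm)) := by gcongr
      _ = _ := by ring
  calc _ ≤ 2 * |(z.norm : ℝ) - w.norm| / (z.norm * w.norm) * h ^ 3 := by gcongr
    _ ≤ 2 * (W * h) / (z.norm * w.norm) * h ^ 3 := by gcongr
    _ = 2 * W * (h ^ 4 / (z.norm * w.norm)) := by ring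
    _ ≤ 2 * W * (U ^ 2 * V ^ 2) := by
      gcongr
      rw [div_le_iff₀ (by positivity)]; exact hAB
    _ ≤ _ := by
      have : 0 ≤ V ^ 3 := by positivity
      nlinarith

theorem isBigO_tsum_indicator_shift (hD : b ^ 2 + 4 * u < 0) (T : Set (QuadraticAlgebra ℤ u b))
    (d : ℤ) :
    (fun s : ℝ ↦ ∑' z, T.indicator (fun z ↦ (z.norm : ℝ) ^ (-s)) z -
      ∑' z, T.indicator (fun z ↦ ((z + (d : QuadraticAlgebra ℤ u b)).norm : ℝ) ^ (-s)) z)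
      =O[𝓝[>] 1] fun _ ↦ (1 : ℝ) := by
  obtain ⟨K, hK⟩ := exists_abs_norm_rpow_sub_le hD d
  have hh := (summable_height_rpow (u := u) (b := b) (k := 3) (by norm_num)).1.mul_left K
  refine IsBigO.of_bound (∑' z : QuadraticAlgebra ℤ u b, K * ((z.height : ℝ) + 1) ^ (-(3 : ℝ))) ?_
  filter_upwards [eventually_mem_Ioc] with s ⟨hs, hs2⟩
  have hsum := summable_norm_rpow hD hs hs2
  have hsum2 := ((Equiv.addRight (d : QuadraticAlgebra ℤ u b)).summable_iff.2 hsum)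
  have e := (hsum.indicator T).tsum_sub (hsum2.indicator T)
  simp only [Function.comp_def, Equiv.coe_addRight] at e
  rw [NormOneClass.norm_one, mul_one, ← e]
  refine tsum_of_norm_bounded hh.hasSum fun z ↦ ?_
  by_cases hz : z ∈ T
  · simpa [hz] using hK s hs hs2 z
  · simpa [hz] using (abs_nonneg _).trans (hK s hs hs2 z)

theorem isBigO_inv_tsum_indicator_norm_rpow (hD : b ^ 2 + 4 * u < 0) {m : ℕ} (hm : 0 < m) :
    (fun s : ℝ ↦ (s - 1)⁻¹) =O[𝓝[>] 1]
    (fun s : ℝ ↦ ∑' z : QuadraticAlgebra ℤ u b,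
      {z : QuadraticAlgebra ℤ u b | IsCoprime z.norm (m : ℤ)}.indicator
        (fun z ↦ (z.norm : ℝ) ^ (-s)) z) := by
  set T := {z : QuadraticAlgebra ℤ u b | IsCoprime z.norm (m : ℤ)} with hT
  let f : (Σ n : ℕ, Fin n) → QuadraticAlgebra ℤ u b :=
    fun p ↦ ⟨1 + m * p.1, m * (p.2 : ℕ)⟩
  have hm' : (m : ℤ) ≠ 0 := by exact_mod_cast hm.ne'
  have hf : Function.Injective f := by
    rintro ⟨n, i⟩ ⟨n', i'⟩ h
    simp only [f, QuadraticAlgebra.mk.injEq, add_right_inj, mul_eq_mul_left_iff, hm', or_false,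
      Nat.cast_inj] at h
    obtain ⟨rfl, h2⟩ := h
    rw [Fin.ext h2]
  have hfT (p) : f p ∈ T := by
    simp only [hT, Set.mem_ofPred_eq, f, norm_def]
    refine ⟨1, -(2 * p.1 + m * p.1 * p.1 + b * (1 + m * p.1) * (p.2 : ℕ) -
      u * m * (p.2 : ℕ) * (p.2 : ℕ)), ?_⟩
    ring
  set C : ℝ := (1 + |(b : ℝ)| + |(u : ℝ)|) * (2 * m) ^ 2 with hC
  have hm1 : (1 : ℝ) ≤ m := by exact_mod_cast hm
  have hC1 : 1 ≤ C := by
    have : (1 : ℝ) ≤ (2 * m) ^ 2 := by nlinarith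
    have h2 : (1 : ℝ) ≤ 1 + |(b : ℝ)| + |(u : ℝ)| := by
      have := abs_nonneg (b : ℝ); have := abs_nonneg (u : ℝ); linarith
    exact one_le_mul_of_one_le_of_one_le h2 this
  have hfN (p) : 0 < ((f p).norm : ℝ) ∧ ((f p).norm : ℝ) ≤ C * (p.1 : ℝ) ^ 2 := by
    obtain ⟨n, i⟩ := p
    have hi := i.2
    have hn : 1 ≤ n := by omega
    have hne : f ⟨n, i⟩ ≠ 0 := by
      intro h
      have := congrArg QuadraticAlgebra.re h
      simp only [f, re_zero] at this
      have : (0 : ℤ) ≤ m * n := by positivity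
      omega
    refine ⟨by exact_mod_cast norm_pos' hD hne, ?_⟩
    have h1 : ((f ⟨n, i⟩).norm : ℝ) ≤ (1 + |(b : ℝ)| + |(u : ℝ)|) * ((f ⟨n, i⟩).height : ℝ) ^ 2 := by
      exact_mod_cast norm_le_height_sq (f ⟨n, i⟩)
    have h2 : (f ⟨n, i⟩).height ≤ 2 * m * n := by
      simp only [f, height]
      have e1 : (1 + (m : ℤ) * n).natAbs = 1 + m * n := by
        have : (1 + (m : ℤ) * n) = ((1 + m * n : ℕ) : ℤ) := by push_cast; ring
        rw [this, Int.natAbs_natCast]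
      have e2 : ((m : ℤ) * (i : ℕ)).natAbs = m * i := by
        rw [← Nat.cast_mul, Int.natAbs_natCast]
      rw [e1, e2]
      have : 1 ≤ m * n := Nat.mul_pos hm hn
      have : m * i ≤ m * n := Nat.mul_le_mul_left _ hi.le
      rw [mul_assoc]
      omega
    have h3 : ((f ⟨n, i⟩).height : ℝ) ≤ 2 * m * n := by exact_mod_cast h2
    calc _ ≤ _ := h1
      _ ≤ (1 + |(b : ℝ)| + |(u : ℝ)|) * (2 * m * n) ^ 2 := by gcongr
      _ = _ := by rw [hC]; ring
  clear_value C
  refine IsBigO.of_bound (4 * C ^ (2 : ℝ)) ?_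
  have hev := tendsto_sub_mul_tsum_two_mul_sub.eventually
    (lt_mem_nhds (by norm_num : (1 : ℝ) / 4 < 1 / 2))
  filter_upwards [eventually_mem_Ioc, hev] with s ⟨hs, hs2⟩ hz
  have h0 (z : QuadraticAlgebra ℤ u b) : 0 ≤ (z.norm : ℝ) ^ (-s) := by
    have : (0 : ℝ) ≤ z.norm := by exact_mod_cast norm_nonneg' hD z
    positivity
  have hsum := (summable_norm_rpow hD hs hs2).indicator T
  have hs1 : 0 < s - 1 := by linarith
  rw [Real.norm_of_nonneg (tsum_nonneg fun z ↦ Set.indicator_nonneg (fun z _ ↦ h0 z) z),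
    Real.norm_of_nonneg (by positivity)]
  have h1 : C ^ (-(2 : ℝ)) * ∑' n : ℕ, 1 / (n : ℝ) ^ (2 * s - 1) ≤
      ∑' z, T.indicator (fun z ↦ (z.norm : ℝ) ^ (-s)) z := by
    have hsf : Summable fun p ↦ T.indicator (fun z ↦ (z.norm : ℝ) ^ (-s)) (f p) :=
      hsum.comp_injective hf
    have step1 : ∑' p, T.indicator (fun z ↦ (z.norm : ℝ) ^ (-s)) (f p) ≤
        ∑' z, T.indicator (fun z ↦ (z.norm : ℝ) ^ (-s)) z :=
      tsum_comp_le_tsum_of_inj hsum (fun z ↦ Set.indicator_nonneg (fun z _ ↦ h0 z) z) hf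
    refine le_trans ?_ step1
    rw [hsf.tsum_sigma, ← tsum_mul_left]
    refine Summable.tsum_le_tsum (fun n ↦ ?_)
      ((Real.summable_one_div_nat_rpow.2 (by linarith)).mul_left _) hsf.sigma
    rw [tsum_fintype]
    rcases Nat.eq_zero_or_pos n with rfl | hn
    · simp [Real.zero_rpow (by linarith : 2 * s - 1 ≠ 0)]
    have hn' : (0 : ℝ) < n := by exact_mod_cast hn
    have hterm (i : Fin n) : C ^ (-(2 : ℝ)) * (n : ℝ) ^ (-(2 * s)) ≤
        T.indicator (fun z ↦ (z.norm : ℝ) ^ (-s)) (f ⟨n, i⟩) := by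
      rw [Set.indicator_of_mem (hfT _)]
      have := hfN ⟨n, i⟩
      calc _ ≤ C ^ (-s) * (n : ℝ) ^ (-(2 * s)) := by
            gcongr
        _ = (C * (n : ℝ) ^ 2) ^ (-s) := by
            rw [Real.mul_rpow (by positivity) (by positivity), ← Real.rpow_natCast,
              ← Real.rpow_mul hn'.le]
            congr 2; push_cast; ring
        _ ≤ _ := Real.rpow_le_rpow_of_nonpos this.1 this.2 (by linarith)
    have := Finset.sum_le_sum fun i (_ : i ∈ Finset.univ) ↦ hterm i
    refine le_trans (le_of_eq ?_) this
    rw [Finset.sum_const, Finset.card_univ, Fintype.card_fin, nsmul_eq_mul, one_div,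
      ← Real.rpow_neg hn'.le, mul_left_comm]
    congr 1
    rw [← Real.rpow_one_add' hn'.le (by linarith)]
    congr 1; ring
  have hC0 : 0 < C := by linarith
  rw [Real.rpow_neg hC0.le, inv_mul_le_iff₀ (by positivity)] at h1
  rw [mul_assoc, inv_eq_one_div, div_le_iff₀ hs1]
  nlinarith

end QuadraticAlgebra

namespace QuadraticAlgebra

variable {u b : ℤ}

section Conj

/-- The image of an ideal under conjugation. -/
def conj (I : Ideal (QuadraticAlgebra ℤ u b)) : Ideal (QuadraticAlgebra ℤ u b) :=
  I.map (starRingEnd (QuadraticAlgebra ℤ u b))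

theorem mem_conj {I : Ideal (QuadraticAlgebra ℤ u b)} {z : QuadraticAlgebra ℤ u b} :
    z ∈ conj I ↔ star z ∈ I := by
  have h := Ideal.mem_map_iff_of_surjective (I := I) (starRingEnd (QuadraticAlgebra ℤ u b))
    (fun y ↦ ⟨star y, star_star y⟩) (y := z)
  rw [conj, h]
  constructor
  · rintro ⟨x, hx, rfl⟩
    simpa [starRingEnd_apply] using hx
  · exact fun hz ↦ ⟨star z, hz, star_star z⟩

theorem conj_conj (I : Ideal (QuadraticAlgebra ℤ u b)) : conj (conj I) = I := by
  ext z; rw [mem_conj, mem_conj, star_star]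

theorem conj_mul (I J : Ideal (QuadraticAlgebra ℤ u b)) : conj (I * J) = conj I * conj J :=
  Ideal.map_mul _ _ _

theorem conj_sup (I J : Ideal (QuadraticAlgebra ℤ u b)) : conj (I ⊔ J) = conj I ⊔ conj J :=
  Ideal.map_sup _ _ _

theorem conj_span_singleton (z : QuadraticAlgebra ℤ u b) :
    conj (Ideal.span {z}) = Ideal.span {star z} := by
  rw [conj, Ideal.map_span, Set.image_singleton]; rfl

theorem conj_span_natCast (n : ℕ) : conj (Ideal.span {(n : QuadraticAlgebra ℤ u b)}) =
    Ideal.span {(n : QuadraticAlgebra ℤ u b)} := by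
  rw [conj_span_singleton, star_natCast]

theorem span_mul_conj_span (z : QuadraticAlgebra ℤ u b) :
    Ideal.span {z} * conj (Ideal.span {z}) = Ideal.span {(z.norm : QuadraticAlgebra ℤ u b)} := by
  rw [conj_span_singleton, Ideal.span_singleton_mul_span_singleton, ← algebraMap_norm_eq_mul_star]
  rfl

end Conj

theorem intCast_dvd_iff {n : ℤ} {z : QuadraticAlgebra ℤ u b} :
    (n : QuadraticAlgebra ℤ u b) ∣ z ↔ n ∣ z.re ∧ n ∣ z.im :=
  algebraMap_dvd_iff

theorem natCast_dvd_natCast_iff {n k : ℕ} :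
    (n : QuadraticAlgebra ℤ u b) ∣ (k : QuadraticAlgebra ℤ u b) ↔ n ∣ k := by
  have := intCast_dvd_iff (u := u) (b := b) (n := n) (z := (k : QuadraticAlgebra ℤ u b))
  rw [Int.cast_natCast] at this
  rw [this]
  simp [Int.natCast_dvd_natCast]

theorem span_natCast_inj {n k : ℕ}
    (h : Ideal.span {(n : QuadraticAlgebra ℤ u b)} = Ideal.span {(k : QuadraticAlgebra ℤ u b)}) :
    n = k :=
  Nat.dvd_antisymm
    (natCast_dvd_natCast_iff.1 (Ideal.span_singleton_le_span_singleton.1 h.ge))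
    (natCast_dvd_natCast_iff.1 (Ideal.span_singleton_le_span_singleton.1 h.le))

instance isDomain [hD : Fact (b ^ 2 + 4 * u < 0)] : IsDomain (QuadraticAlgebra ℤ u b) := by
  have : NoZeroDivisors (QuadraticAlgebra ℤ u b) := ⟨fun {x y} h ↦ by
    by_contra! hxy
    have h1 := mul_pos (norm_pos' hD.out hxy.1) (norm_pos' hD.out hxy.2)
    rw [← map_mul, h, norm_zero] at h1
    exact h1.false⟩
  exact NoZeroDivisors.to_isDomain _

/-- The ideal `I` is invertible with norm `n`: the product of `I` with its conjugate
is generated by the positive integer `n`. -/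
def IsNorm (I : Ideal (QuadraticAlgebra ℤ u b)) (n : ℕ) : Prop :=
  0 < n ∧ I * conj I = Ideal.span {(n : QuadraticAlgebra ℤ u b)}

namespace IsNorm

variable {I J : Ideal (QuadraticAlgebra ℤ u b)} {n k : ℕ}

theorem unique (h : IsNorm I n) (h' : IsNorm I k) : n = k :=
  span_natCast_inj (h.2.symm.trans h'.2)

theorem natCast_mem (h : IsNorm I n) : (n : QuadraticAlgebra ℤ u b) ∈ I := by
  have h1 : (n : QuadraticAlgebra ℤ u b) ∈ I * QuadraticAlgebra.conj I := by
    rw [h.2]; exact Ideal.mem_span_singleton_self _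
  exact Ideal.mul_le_left (I := I) (J := QuadraticAlgebra.conj I) h1

theorem conj (h : IsNorm I n) : IsNorm (conj I) n :=
  ⟨h.1, by rw [conj_conj, mul_comm]; exact h.2⟩

theorem mul (h : IsNorm I n) (h' : IsNorm J k) : IsNorm (I * J) (n * k) := by
  refine ⟨Nat.mul_pos h.1 h'.1, ?_⟩
  rw [conj_mul, mul_mul_mul_comm, h.2, h'.2, Ideal.span_singleton_mul_span_singleton]
  push_cast; rfl

theorem one : IsNorm (1 : Ideal (QuadraticAlgebra ℤ u b)) 1 := by
  refine ⟨one_pos, ?_⟩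
  rw [QuadraticAlgebra.conj, Ideal.one_eq_top, Ideal.map_top]
  simp

end IsNorm

theorem span_natCast_cancel [Fact (b ^ 2 + 4 * u < 0)] {n : ℕ} (hn : 0 < n)
    {I J : Ideal (QuadraticAlgebra ℤ u b)}
    (h : Ideal.span {(n : QuadraticAlgebra ℤ u b)} * I = Ideal.span {(n : QuadraticAlgebra ℤ u b)} * J) :
    I = J := by
  have hn' : (n : QuadraticAlgebra ℤ u b) ≠ 0 := by
    intro h
    have := congrArg QuadraticAlgebra.re h
    simp at this; omega
  exact (Ideal.span_singleton_mul_right_inj hn').1 h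

theorem IsNorm.cancel_left [Fact (b ^ 2 + 4 * u < 0)] {I J K : Ideal (QuadraticAlgebra ℤ u b)}
    {n : ℕ} (h : IsNorm I n) (e : I * J = I * K) : J = K := by
  refine span_natCast_cancel h.1 ?_
  rw [← h.2, mul_comm I, mul_assoc, mul_assoc, e]

/-- A nonzero integer in an ideal brings the ideal in the standard form `k (e, ω - t)`. -/
theorem exists_standard_form {I : Ideal (QuadraticAlgebra ℤ u b)} {n : ℕ} (hn : 0 < n)
    (hI : (n : QuadraticAlgebra ℤ u b) ∈ I) :
    ∃ (k e : ℕ) (t : ℤ), 0 < k ∧ 0 < e ∧ (e : ℤ) ∣ t ^ 2 - b * t - u ∧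
      ∀ z, z ∈ I ↔ ∃ w : QuadraticAlgebra ℤ u b, z = k * w ∧ (e : ℤ) ∣ w.re + t * w.im := by
  -- the ideal of second coordinates
  let Y : AddSubgroup ℤ := I.toAddSubgroup.map
    ({ toFun := QuadraticAlgebra.im, map_zero' := rfl, map_add' := fun _ _ ↦ rfl } :
      QuadraticAlgebra ℤ u b →+ ℤ)
  obtain ⟨y0, hy0⟩ := Int.subgroup_cyclic Y
  have hY (y : ℤ) : (∃ z ∈ I, z.im = y) ↔ y0 ∣ y := by
    have : y ∈ Y ↔ ∃ z ∈ I, z.im = y := by simp [Y]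
    rw [← this, hy0, AddSubgroup.mem_closure_singleton]
    simp only [smul_eq_mul, Dvd.dvd]
    exact ⟨fun ⟨q, hq⟩ ↦ ⟨q, by rw [← hq]; ring⟩, fun ⟨q, hq⟩ ↦ ⟨q, by rw [hq]; ring⟩⟩
  set k := y0.natAbs with hk
  have hY' (y : ℤ) : (∃ z ∈ I, z.im = y) ↔ (k : ℤ) ∣ y := by
    rw [hY, hk, Int.natAbs_dvd]
  have hdiv : ∀ z ∈ I, (k : QuadraticAlgebra ℤ u b) ∣ z := by
    intro z hz
    have h1 : (k : ℤ) ∣ z.im := (hY' _).1 ⟨z, hz, rfl⟩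
    have h2 : (k : ℤ) ∣ z.re + b * z.im := (hY' _).1 ⟨omega * z, I.mul_mem_left _ hz, by
      rcases z with ⟨x, y⟩; rw [omega_mul_mk]⟩
    have h3 : (k : ℤ) ∣ z.re := (Int.dvd_add_left (h1.mul_left b)).1 h2
    have := (intCast_dvd_iff (n := k) (z := z)).2 ⟨h3, h1⟩
    simpa using this
  have hkn : k ∣ n := natCast_dvd_natCast_iff.1 (hdiv _ hI)
  have hk0 : 0 < k := Nat.pos_of_dvd_of_pos hkn hn
  obtain ⟨z0, hz0, hz0i⟩ := (hY' k).2 dvd_rfl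
  obtain ⟨w0, rfl⟩ := hdiv z0 hz0
  have hw0 : w0.im = 1 := by
    have h1 : ((k : QuadraticAlgebra ℤ u b) * w0).im = k * w0.im := by
      simp [im_mul]
    rw [h1] at hz0i
    exact mul_left_cancel₀ (by exact_mod_cast hk0.ne' : (k : ℤ) ≠ 0) (by rw [hz0i, mul_one])
  set t := -w0.re with ht
  let A : AddSubgroup ℤ := I.toAddSubgroup.comap
    ((AddMonoidHom.mulLeft (k : QuadraticAlgebra ℤ u b)).comp
      (Int.castAddHom (QuadraticAlgebra ℤ u b)))
  obtain ⟨e0, he0⟩ := Int.subgroup_cyclic A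
  set e := e0.natAbs with he
  have hA (x : ℤ) : (k : QuadraticAlgebra ℤ u b) * x ∈ I ↔ (e : ℤ) ∣ x := by
    have : x ∈ A ↔ (k : QuadraticAlgebra ℤ u b) * x ∈ I := by simp [A]
    rw [← this, he0, AddSubgroup.mem_closure_singleton, he, Int.natAbs_dvd]
    simp only [smul_eq_mul, Dvd.dvd]
    exact ⟨fun ⟨q, hq⟩ ↦ ⟨q, by rw [← hq]; ring⟩, fun ⟨q, hq⟩ ↦ ⟨q, by rw [hq]; ring⟩⟩
  have hen : e ∣ n := by
    have : (k : QuadraticAlgebra ℤ u b) * (n : ℤ) ∈ I := by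
      rw [Int.cast_natCast]; exact I.mul_mem_left _ hI
    exact_mod_cast (hA n).1 this
  refine ⟨k, e, t, hk0, Nat.pos_of_dvd_of_pos hen hn, ?_, fun z ↦ ?_⟩
  · rw [← hA]
    have : (k : QuadraticAlgebra ℤ u b) * ((t ^ 2 - b * t - u : ℤ) : QuadraticAlgebra ℤ u b) =
        star w0 * (k * w0) := by
      rw [mul_left_comm, mul_comm (star w0)]
      congr 1
      rw [← algebraMap_norm_eq_mul_star, norm_def, hw0, ht,
        eq_intCast (algebraMap ℤ (QuadraticAlgebra ℤ u b))]
      congr 1; ring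
    rw [this]
    exact I.mul_mem_left _ hz0
  · have key (w : QuadraticAlgebra ℤ u b) :
        (k : QuadraticAlgebra ℤ u b) * w ∈ I ↔ (e : ℤ) ∣ w.re + t * w.im := by
      rw [← hA]
      have e1 : (k : QuadraticAlgebra ℤ u b) * ((w.re + t * w.im : ℤ) : QuadraticAlgebra ℤ u b) =
          k * w - (w.im : QuadraticAlgebra ℤ u b) * (k * w0) := by
        rw [mul_left_comm, ← mul_sub]
        congr 1
        ext
        · simp [ht]; ring
        · simp [hw0]
      rw [e1]
      exact ⟨fun h ↦ I.sub_mem h (I.mul_mem_left _ hz0),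
        fun h ↦ by simpa using I.add_mem h (I.mul_mem_left (w.im : QuadraticAlgebra ℤ u b) hz0)⟩
    constructor
    · intro hz
      obtain ⟨w, rfl⟩ := hdiv z hz
      exact ⟨w, rfl, (key w).1 hz⟩
    · rintro ⟨w, rfl, hw⟩
      exact (key w).2 hw

theorem IsNorm.exists_standard_form {I : Ideal (QuadraticAlgebra ℤ u b)} {n : ℕ}
    (h : IsNorm I n) :
    ∃ (k e : ℕ) (t : ℤ), 0 < k ∧ 0 < e ∧ n = k ^ 2 * e ∧ (e : ℤ) ∣ t ^ 2 - b * t - u ∧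
      ∀ z, z ∈ I ↔ ∃ w : QuadraticAlgebra ℤ u b, z = k * w ∧ (e : ℤ) ∣ w.re + t * w.im := by
  obtain ⟨k, e, t, hk, he, hd, hI⟩ := QuadraticAlgebra.exists_standard_form h.1 h.natCast_mem
  refine ⟨k, e, t, hk, he, Nat.dvd_antisymm ?_ ?_, hd, hI⟩
  · have h1 : (k : QuadraticAlgebra ℤ u b) * ⟨-t, 1⟩ ∈ I := (hI _).2 ⟨⟨-t, 1⟩, rfl, by simp⟩
    have h2 : (k : QuadraticAlgebra ℤ u b) * e ∈ QuadraticAlgebra.conj I := by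
      rw [mem_conj, ← Nat.cast_mul, star_natCast, Nat.cast_mul]
      exact (hI _).2 ⟨e, rfl, by simp⟩
    have h3 := Ideal.mul_mem_mul h1 h2
    rw [h.2, Ideal.mem_span_singleton, ← Int.cast_natCast, intCast_dvd_iff] at h3
    have h4 := h3.2
    have e1 : ((k : QuadraticAlgebra ℤ u b) * ⟨-t, 1⟩ * (k * e)).im = ((k ^ 2 * e : ℕ) : ℤ) := by
      have : (k : QuadraticAlgebra ℤ u b) * ⟨-t, 1⟩ * (k * e) =
          ((k ^ 2 * e : ℕ) : QuadraticAlgebra ℤ u b) * ⟨-t, 1⟩ := by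
        push_cast; ring
      rw [this, im_mul, re_natCast, im_natCast]; ring
    rw [e1] at h4
    exact_mod_cast h4
  · have h1 : I * QuadraticAlgebra.conj I ≤
        Ideal.span {((k ^ 2 * e : ℕ) : QuadraticAlgebra ℤ u b)} := by
      rw [Ideal.mul_le]
      intro r hr s hs
      rw [mem_conj] at hs
      obtain ⟨v, rfl, v', hv⟩ := (hI _).1 hr
      obtain ⟨w, hw, w', hw'⟩ := (hI _).1 hs
      have hsw : s = k * star w := by
        rw [← star_star s, hw, star_mul, star_natCast, mul_comm]
      obtain ⟨f, hf⟩ := hd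
      rw [Ideal.mem_span_singleton, hsw]
      have hvre : v = (v.im : QuadraticAlgebra ℤ u b) * ⟨-t, 1⟩ + e * v' := by
        ext
        · simp; linarith
        · simp
      have hwre : star w = (w.im : QuadraticAlgebra ℤ u b) * ⟨b - t, -1⟩ + e * w' := by
        ext
        · simp; linarith
        · simp
      have hF : (⟨-t, 1⟩ : QuadraticAlgebra ℤ u b) * ⟨b - t, -1⟩ = e * f := by
        ext
        · simp; linarith
        · simp
      refine ⟨v.im * w.im * f + (v.im : QuadraticAlgebra ℤ u b) * ⟨-t, 1⟩ * w' +
        (w.im : QuadraticAlgebra ℤ u b) * ⟨b - t, -1⟩ * v' + e * v' * w', ?_⟩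
      generalize v.im = y at hvre ⊢
      generalize w.im = y' at hwre ⊢
      rw [hvre, hwre]
      push_cast
      linear_combination (k : QuadraticAlgebra ℤ u b) ^ 2 * y * y' * hF
    rw [h.2, Ideal.span_singleton_le_span_singleton, natCast_dvd_natCast_iff] at h1
    exact h1

end QuadraticAlgebra

theorem Ideal.exists_eq_span_singleton_mul {R : Type*} [CommRing R] {A : Ideal R} {x : R}
    (h : A ≤ Ideal.span {x}) : ∃ I : Ideal R, A = Ideal.span {x} * I := by
  refine ⟨Submodule.comap (LinearMap.mulLeft R x) A, le_antisymm (fun z hz ↦ ?_) ?_⟩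
  · obtain ⟨w, rfl⟩ := Ideal.mem_span_singleton.1 (h hz)
    exact Ideal.mem_span_singleton_mul.2 ⟨w, hz, rfl⟩
  · intro z hz
    obtain ⟨w, hw, rfl⟩ := Ideal.mem_span_singleton_mul.1 hz
    exact hw

namespace QuadraticAlgebra

variable {u b : ℤ}

/-- The monoid of invertible ideals of norm coprime to `m`, paired with their norms. -/
def normedIdeals (u b : ℤ) (m : ℕ) : Submonoid (ℕ × Ideal (QuadraticAlgebra ℤ u b)) where
  carrier := {p | IsNorm p.2 p.1 ∧ p.1.Coprime m}
  one_mem' := ⟨IsNorm.one, Nat.coprime_one_left m⟩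
  mul_mem' := fun h h' ↦ ⟨h.1.mul h'.1, Nat.Coprime.mul_left h.2 h'.2⟩

/-- An invertible ideal of norm coprime to `m`, together with its norm. -/
def NormedIdeal (u b : ℤ) (m : ℕ) : Type := normedIdeals u b m

namespace NormedIdeal

variable {m : ℕ}

instance : CommMonoid (NormedIdeal u b m) := inferInstanceAs (CommMonoid (normedIdeals u b m))

/-- The underlying ideal. -/
def ideal (p : NormedIdeal u b m) : Ideal (QuadraticAlgebra ℤ u b) := p.1.2

/-- The norm of an element of `NormedIdeal`. -/
def nrm (p : NormedIdeal u b m) : ℕ := p.1.1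

theorem isNorm (p : NormedIdeal u b m) : IsNorm p.ideal p.nrm := p.2.1

theorem nrm_pos (p : NormedIdeal u b m) : 0 < p.nrm := p.isNorm.1

theorem coprime (p : NormedIdeal u b m) : p.nrm.Coprime m := p.2.2

theorem ideal_mul (p q : NormedIdeal u b m) : (p * q).ideal = p.ideal * q.ideal := rfl

theorem nrm_mul (p q : NormedIdeal u b m) : (p * q).nrm = p.nrm * q.nrm := rfl

theorem ideal_one : (1 : NormedIdeal u b m).ideal = 1 := rfl

theorem nrm_one : (1 : NormedIdeal u b m).nrm = 1 := rfl

/-- Construct an element of `NormedIdeal` from an ideal and its norm. -/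
def mk (I : Ideal (QuadraticAlgebra ℤ u b)) (n : ℕ) (h : IsNorm I n) (hn : n.Coprime m) :
    NormedIdeal u b m := ⟨(n, I), h, hn⟩

theorem ideal_injective {p q : NormedIdeal u b m} (h : p.ideal = q.ideal) : p = q := by
  have h1 := p.isNorm
  rw [h] at h1
  exact Subtype.ext (Prod.ext (h1.unique q.isNorm) h)

/-- The conjugate of an element of `NormedIdeal`. -/
def bar (p : NormedIdeal u b m) : NormedIdeal u b m :=
  mk (conj p.ideal) p.nrm p.isNorm.conj p.coprime

variable [hD : Fact (b ^ 2 + 4 * u < 0)]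

theorem isUnit_coeIdeal (p : NormedIdeal u b m) :
    IsUnit (p.ideal : FractionalIdeal (nonZeroDivisors (QuadraticAlgebra ℤ u b))
      (FractionRing (QuadraticAlgebra ℤ u b))) := by
  refine isUnit_of_mul_isUnit_left (y := ((conj p.ideal :
    Ideal (QuadraticAlgebra ℤ u b)) : FractionalIdeal (nonZeroDivisors (QuadraticAlgebra ℤ u b))
      (FractionRing (QuadraticAlgebra ℤ u b)))) ?_
  rw [← FractionalIdeal.coeIdeal_mul, p.isNorm.2, FractionalIdeal.coeIdeal_span_singleton]
  have hn : (p.nrm : QuadraticAlgebra ℤ u b) ≠ 0 := by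
    exact_mod_cast p.nrm_pos.ne'
  have h0 : algebraMap (QuadraticAlgebra ℤ u b) (FractionRing (QuadraticAlgebra ℤ u b)) p.nrm ≠ 0 :=
    fun h ↦ hn ((IsFractionRing.injective _ _) (by rw [h, map_zero]))
  refine IsUnit.of_mul_eq_one (FractionalIdeal.spanSingleton _
    (algebraMap (QuadraticAlgebra ℤ u b) (FractionRing (QuadraticAlgebra ℤ u b)) p.nrm)⁻¹) ?_
  rw [FractionalIdeal.spanSingleton_mul_spanSingleton, mul_inv_cancel₀ h0,
    FractionalIdeal.spanSingleton_one]

/-- The class of an ideal in the class group. -/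
noncomputable def cl : NormedIdeal u b m →* ClassGroup (QuadraticAlgebra ℤ u b) :=
  (ClassGroup.mk (FractionRing (QuadraticAlgebra ℤ u b))).comp
    (IsUnit.liftRight (((FractionalIdeal.coeIdealHom (nonZeroDivisors (QuadraticAlgebra ℤ u b))
      (FractionRing (QuadraticAlgebra ℤ u b))).toMonoidHom.comp
      (MonoidHom.snd ℕ (Ideal (QuadraticAlgebra ℤ u b)))).comp (normedIdeals u b m).subtype)
      isUnit_coeIdeal)

theorem cl_eq_cl_iff {p q : NormedIdeal u b m} :
    cl p = cl q ↔ ∃ x y : QuadraticAlgebra ℤ u b, x ≠ 0 ∧ y ≠ 0 ∧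
      Ideal.span {x} * p.ideal = Ideal.span {y} * q.ideal :=
  ClassGroup.mk_eq_mk_of_coe_ideal rfl rfl

theorem cl_eq_inv_iff {p q : NormedIdeal u b m} :
    cl p = (cl q)⁻¹ ↔ ∃ α : QuadraticAlgebra ℤ u b, p.ideal * q.ideal = Ideal.span {α} := by
  rw [eq_inv_iff_mul_eq_one, ← map_mul, ← map_one cl, cl_eq_cl_iff, ideal_mul, ideal_one]
  constructor
  · rintro ⟨x, y, hx, hy, h⟩
    rw [mul_one] at h
    have hy' : y ∈ Ideal.span {x} * (p.ideal * q.ideal) := h ▸ Ideal.mem_span_singleton_self y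
    obtain ⟨α, hα, rfl⟩ := Ideal.mem_span_singleton_mul.1 hy'
    refine ⟨α, (Ideal.span_singleton_mul_right_inj hx).1 ?_⟩
    rw [h, Ideal.span_singleton_mul_span_singleton]
  · rintro ⟨α, h⟩
    refine ⟨1, α, one_ne_zero, ?_, by rw [h]; simp⟩
    rintro rfl
    have h1 : ((p * q).nrm : QuadraticAlgebra ℤ u b) ∈ (p * q).ideal := (p * q).isNorm.natCast_mem
    rw [ideal_mul, h, Ideal.mem_span_singleton, zero_dvd_iff] at h1
    have := (p * q).nrm_pos
    exact this.ne' (by exact_mod_cast h1)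

theorem cl_bar (p : NormedIdeal u b m) : cl p.bar = (cl p)⁻¹ :=
  cl_eq_inv_iff.2 ⟨p.nrm, by rw [mul_comm]; exact p.isNorm.2⟩

theorem isNorm_span {α : QuadraticAlgebra ℤ u b} (hα : α ≠ 0) :
    IsNorm (Ideal.span {α}) α.norm.natAbs := by
  have h := norm_pos' hD.out hα
  refine ⟨Int.natAbs_pos.2 h.ne', ?_⟩
  rw [span_mul_conj_span, ← Int.cast_natCast (R := QuadraticAlgebra ℤ u b), Int.natAbs_of_nonneg h.le]

theorem norm_eq_of_mul_eq_span {I J : Ideal (QuadraticAlgebra ℤ u b)} {n k : ℕ}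
    (hI : IsNorm I n) (hJ : IsNorm J k) {α : QuadraticAlgebra ℤ u b}
    (h : I * J = Ideal.span {α}) : α.norm = n * k := by
  have h1 := hI.mul hJ
  have hα : α ≠ 0 := by
    rintro rfl
    have h2 := h1.natCast_mem
    rw [h, Ideal.mem_span_singleton, zero_dvd_iff] at h2
    exact h1.1.ne' (by exact_mod_cast h2)
  rw [h] at h1
  have h2 := (isNorm_span hα).unique h1
  rw [← Int.natAbs_of_nonneg (norm_nonneg' hD.out α), h2]
  push_cast; rfl

/-- An element `α` of an invertible ideal `J` is divisible by `J`. -/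
theorem exists_mul_eq_span {J : Ideal (QuadraticAlgebra ℤ u b)} {j : ℕ} (hJ : IsNorm J j)
    {α : QuadraticAlgebra ℤ u b} (hα : α ≠ 0) (hαJ : α ∈ J) :
    ∃ (I : Ideal (QuadraticAlgebra ℤ u b)) (n : ℕ), IsNorm I n ∧ I * J = Ideal.span {α} := by
  have h1 : Ideal.span {α} * conj J ≤ Ideal.span {(j : QuadraticAlgebra ℤ u b)} := by
    rw [← hJ.2]
    exact Ideal.mul_mono_left ((Ideal.span_singleton_le_iff_mem J).2 hαJ)
  obtain ⟨I, hI⟩ := Ideal.exists_eq_span_singleton_mul h1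
  have hIJ : I * J = Ideal.span {α} := by
    refine span_natCast_cancel hJ.1 ?_
    rw [← mul_assoc, ← hI, mul_assoc, mul_comm (conj J), hJ.2, mul_comm]
  have hN := isNorm_span hα
  have h2 : I * conj I * Ideal.span {(j : QuadraticAlgebra ℤ u b)} =
      Ideal.span {(α.norm.natAbs : QuadraticAlgebra ℤ u b)} := by
    rw [← hJ.2, mul_mul_mul_comm, ← conj_mul, hIJ, hN.2]
  have h3 : j ∣ α.norm.natAbs := by
    rw [← natCast_dvd_natCast_iff (u := u) (b := b), ← Ideal.span_singleton_le_span_singleton, ← h2]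
    exact Ideal.mul_le_right
  obtain ⟨n, hn⟩ := h3
  refine ⟨I, n, ⟨Nat.pos_of_ne_zero ?_, ?_⟩, hIJ⟩
  · rintro rfl
    exact hN.1.ne' (by simpa using hn)
  · refine span_natCast_cancel hJ.1 ?_
    rw [mul_comm, h2, hn, Ideal.span_singleton_mul_span_singleton]
    push_cast; rfl

theorem finite_range_cl : (Set.range (cl : NormedIdeal u b m → _)).Finite := by
  classical
  let B := QuadraticAlgebra.basis u b
  let adm := AbsoluteValue.absIsAdmissible
  set P : QuadraticAlgebra ℤ u b :=
    algebraMap ℤ (QuadraticAlgebra ℤ u b) (∏ r ∈ ClassGroup.finsetApprox B adm, r) with hP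
  have hP0 : P ≠ 0 := ClassGroup.prod_finsetApprox_ne_zero B adm
  have key (p : NormedIdeal u b m) : ∃ A : Ideal (QuadraticAlgebra ℤ u b), P ∈ A ∧
      ∃ α : QuadraticAlgebra ℤ u b, α ≠ 0 ∧ Ideal.span {P} * p.ideal = Ideal.span {α} * A := by
    have hne : p.ideal ≠ 0 := by
      intro h
      have h1 := p.isNorm.natCast_mem
      rw [h, Ideal.zero_eq_bot, Ideal.mem_bot] at h1
      exact p.nrm_pos.ne' (by exact_mod_cast h1)
    obtain ⟨α, hα, hα0, hmin⟩ := ClassGroup.exists_min AbsoluteValue.abs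
      (⟨p.ideal, mem_nonZeroDivisors_of_ne_zero hne⟩ : nonZeroDivisors (Ideal (QuadraticAlgebra ℤ u b)))
    have hle : Ideal.span {P} * p.ideal ≤ Ideal.span {α} := by
      intro z hz
      obtain ⟨β, hβ, rfl⟩ := Ideal.mem_span_singleton_mul.1 hz
      obtain ⟨q, r, hr, hlt⟩ := ClassGroup.exists_mem_finset_approx' B adm β hα0
      have h0 := hmin _ (p.ideal.sub_mem (p.ideal.smul_of_tower_mem r hβ)
        (p.ideal.mul_mem_left q hα)) hlt
      rw [sub_eq_zero, Algebra.smul_def] at h0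
      have hd : algebraMap ℤ (QuadraticAlgebra ℤ u b) r ∣ P :=
        map_dvd _ (Finset.dvd_prod_of_mem (fun r ↦ r) hr)
      rw [Ideal.mem_span_singleton]
      exact (Dvd.intro_left q h0.symm).trans (mul_dvd_mul_right hd β)
    obtain ⟨A, hA⟩ := Ideal.exists_eq_span_singleton_mul hle
    refine ⟨A, ?_, α, hα0, hA⟩
    have : P * α ∈ Ideal.span {α} * A := hA ▸ Ideal.mem_span_singleton_mul.2 ⟨α, hα, rfl⟩
    obtain ⟨w, hw, e⟩ := Ideal.mem_span_singleton_mul.1 this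
    rw [mul_comm] at e
    rwa [← mul_right_cancel₀ hα0 e]
  choose A hPA α hα0 hA using key
  have hfin : (Set.range A).Finite :=
    (Ring.HasFiniteQuotients.finite_setOfPred_mem P hP0).subset (by
      rintro _ ⟨p, rfl⟩; exact hPA p)
  have hfac : Function.FactorsThrough (cl : NormedIdeal u b m → _) A := by
    intro p q hpq
    refine cl_eq_cl_iff.2 ⟨α q * P, α p * P, mul_ne_zero (hα0 q) hP0, mul_ne_zero (hα0 p) hP0, ?_⟩
    rw [← Ideal.span_singleton_mul_span_singleton, ← Ideal.span_singleton_mul_span_singleton,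
      mul_assoc, mul_assoc, hA, hA, hpq, mul_left_comm]
  obtain ⟨g, hg⟩ := (Function.factorsThrough_iff _).1 hfac
  rw [hg, Set.range_comp]
  exact hfin.image g

end NormedIdeal

end QuadraticAlgebra

namespace QuadraticAlgebra

variable {u b : ℤ} {m : ℕ}

theorem finite_units [hD : Fact (b ^ 2 + 4 * u < 0)] : Finite (QuadraticAlgebra ℤ u b)ˣ := by
  have hfin : {z : QuadraticAlgebra ℤ u b | z.height ≤ (-4 * u).natAbs}.Finite := by
    have h (n : ℕ) : {z : QuadraticAlgebra ℤ u b | z.height = n}.Finite :=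
      Set.finite_coe_iff.1 (finite_height_eq n).1
    refine ((Finset.range ((-4 * u).natAbs + 1)).finite_toSet.biUnion fun n _ ↦ h n).subset ?_
    intro z hz
    simp only [Set.mem_ofPred_eq] at hz
    simp only [Set.mem_iUnion, Finset.mem_coe, Finset.mem_range, Set.mem_ofPred_eq]
    exact ⟨z.height, by omega, rfl⟩
  have hmem (x : (QuadraticAlgebra ℤ u b)ˣ) :
      (x : QuadraticAlgebra ℤ u b) ∈ {z : QuadraticAlgebra ℤ u b | z.height ≤ (-4 * u).natAbs} := by
    have h1 : IsUnit (x : QuadraticAlgebra ℤ u b).norm := x.isUnit.map _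
    have h2 : (x : QuadraticAlgebra ℤ u b).norm = 1 := by
      rcases Int.isUnit_iff.1 h1 with h | h
      · exact h
      · have := norm_nonneg' hD.out (x : QuadraticAlgebra ℤ u b); omega
    have h3 := height_sq_le_norm hD.out (x : QuadraticAlgebra ℤ u b)
    rw [h2, mul_one] at h3
    simp only [Set.mem_ofPred_eq]
    have h4 : (((x : QuadraticAlgebra ℤ u b).height : ℤ)) ≤ -4 * u := by nlinarith
    omega
  have := hfin.to_subtype
  exact Finite.of_injective (fun x ↦ (⟨x, hmem x⟩ :
    {z : QuadraticAlgebra ℤ u b | z.height ≤ (-4 * u).natAbs}))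
    (fun x y h ↦ Units.ext (congrArg Subtype.val h))

namespace NormedIdeal

variable [hD : Fact (b ^ 2 + 4 * u < 0)]

/-- The elements of `J` of norm coprime to `m`. -/
def coprimeElements (J : Ideal (QuadraticAlgebra ℤ u b)) (m : ℕ) : Set (QuadraticAlgebra ℤ u b) :=
  {z | z ∈ J ∧ IsCoprime z.norm (m : ℤ)}

theorem exists_equiv (q : NormedIdeal u b m) (hm : 1 < m) :
    ∃ e : {p : NormedIdeal u b m // cl p = (cl q)⁻¹} × (QuadraticAlgebra ℤ u b)ˣ ≃
        coprimeElements q.ideal m, ∀ x, (e x).1.norm = x.1.1.nrm * q.nrm := by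
  choose gen hgen using fun p : {p : NormedIdeal u b m // cl p = (cl q)⁻¹} ↦ cl_eq_inv_iff.1 p.2
  have hnorm (p) : (gen p).norm = p.1.nrm * q.nrm :=
    norm_eq_of_mul_eq_span p.1.isNorm q.isNorm (hgen p)
  have hunit (x : (QuadraticAlgebra ℤ u b)ˣ) (z : QuadraticAlgebra ℤ u b) :
      ((x : QuadraticAlgebra ℤ u b) * z).norm = z.norm := by
    have h1 : IsUnit (x : QuadraticAlgebra ℤ u b).norm := x.isUnit.map _
    have h2 : (x : QuadraticAlgebra ℤ u b).norm = 1 := by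
      rcases Int.isUnit_iff.1 h1 with h | h
      · exact h
      · have := norm_nonneg' hD.out (x : QuadraticAlgebra ℤ u b); omega
    rw [map_mul, h2, one_mul]
  have hmem (x : {p : NormedIdeal u b m // cl p = (cl q)⁻¹} × (QuadraticAlgebra ℤ u b)ˣ) :
      (x.2 : QuadraticAlgebra ℤ u b) * gen x.1 ∈ coprimeElements q.ideal m := by
    refine ⟨Ideal.mul_mem_left _ _ ?_, ?_⟩
    · have : gen x.1 ∈ x.1.1.ideal * q.ideal := hgen x.1 ▸ Ideal.mem_span_singleton_self _
      exact Ideal.mul_le_right this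
    · rw [hunit, hnorm, ← Nat.cast_mul, Nat.isCoprime_iff_coprime]
      exact Nat.Coprime.mul_left x.1.1.coprime q.coprime
  let f : {p : NormedIdeal u b m // cl p = (cl q)⁻¹} × (QuadraticAlgebra ℤ u b)ˣ →
      coprimeElements q.ideal m := fun x ↦ ⟨_, hmem x⟩
  have hgen0 (p) : gen p ≠ 0 := by
    intro h
    have := hnorm p
    rw [h, norm_zero] at this
    have h1 := p.1.nrm_pos; have h2 := q.nrm_pos
    have : (0 : ℤ) < p.1.nrm * q.nrm := by positivity
    omega
  have hbij : Function.Bijective f := by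
    constructor
    · rintro ⟨p, x⟩ ⟨p', x'⟩ h
      have h1 : (x : QuadraticAlgebra ℤ u b) * gen p = x' * gen p' := congrArg Subtype.val h
      have h2 : Ideal.span {gen p} = Ideal.span {gen p'} := by
        rw [Ideal.span_singleton_eq_span_singleton]
        refine Associated.trans ?_ (Associated.trans (Associated.of_eq h1) ?_)
        · exact (associated_unit_mul_left (gen p) _ x.isUnit).symm
        · exact associated_unit_mul_left (gen p') _ x'.isUnit
      have h3 : p = p' := by
        refine Subtype.ext (ideal_injective (q.isNorm.cancel_left ?_))
        rw [mul_comm, hgen, h2, ← hgen, mul_comm]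
      subst h3
      rw [Units.ext (mul_right_cancel₀ (hgen0 p) h1)]
    · rintro ⟨z, hz, hc⟩
      have hz0 : z ≠ 0 := by
        rintro rfl
        rw [norm_zero, isCoprime_zero_left] at hc
        rcases Int.isUnit_iff.1 hc with h | h <;> omega
      obtain ⟨I, n, hI, hIJ⟩ := exists_mul_eq_span q.isNorm hz0 hz
      have hn := norm_eq_of_mul_eq_span hI q.isNorm hIJ
      have hnm : n.Coprime m := by
        rw [hn, ← Nat.cast_mul, Nat.isCoprime_iff_coprime] at hc
        exact Nat.Coprime.coprime_mul_right hc
      have hp : cl (NormedIdeal.mk I n hI hnm) = (cl q)⁻¹ := cl_eq_inv_iff.2 ⟨z, hIJ⟩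
      have h1 : Ideal.span {gen ⟨_, hp⟩} = Ideal.span {z} := (hgen ⟨_, hp⟩).symm.trans hIJ
      obtain ⟨x, hx⟩ := Ideal.span_singleton_eq_span_singleton.1 h1
      refine ⟨(⟨_, hp⟩, x), Subtype.ext ?_⟩
      change (x : QuadraticAlgebra ℤ u b) * gen _ = z
      rw [mul_comm, hx]
  exact ⟨Equiv.ofBijective f hbij, fun x ↦ by
    change ((x.2 : QuadraticAlgebra ℤ u b) * gen x.1).norm = _
    rw [hunit, hnorm]⟩

theorem summable_class_and_tsum (q : NormedIdeal u b m) (hm : 1 < m) {s : ℝ} (hs : 1 < s)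
    (hs2 : s ≤ 2) :
    Summable (fun p : {p : NormedIdeal u b m // cl p = (cl q)⁻¹} ↦ (p.1.nrm : ℝ) ^ (-s)) ∧
    (Nat.card (QuadraticAlgebra ℤ u b)ˣ : ℝ) *
      ∑' p : {p : NormedIdeal u b m // cl p = (cl q)⁻¹}, (p.1.nrm : ℝ) ^ (-s) =
    (q.nrm : ℝ) ^ s * ∑' z, (coprimeElements q.ideal m).indicator
      (fun z ↦ (z.norm : ℝ) ^ (-s)) z := by
  obtain ⟨e, he⟩ := exists_equiv q hm
  have := finite_units (u := u) (b := b)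
  have := Fintype.ofFinite (QuadraticAlgebra ℤ u b)ˣ
  have hs0 := (summable_norm_rpow hD.out hs hs2).comp_injective
    (Subtype.val_injective (p := fun z ↦ z ∈ coprimeElements q.ideal m))
  have hs1 := e.summable_iff.2 hs0
  have hq : (0 : ℝ) < q.nrm := by exact_mod_cast q.nrm_pos
  have hterm (x) : ((fun z : QuadraticAlgebra ℤ u b ↦ (z.norm : ℝ) ^ (-s)) ∘ Subtype.val) (e x) =
      (q.nrm : ℝ) ^ (-s) * (x.1.1.nrm : ℝ) ^ (-s) := by
    simp only [Function.comp, he]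
    push_cast
    rw [Real.mul_rpow (by positivity) hq.le, mul_comm]
  have hs2' : Summable fun x : {p : NormedIdeal u b m // cl p = (cl q)⁻¹} ×
      (QuadraticAlgebra ℤ u b)ˣ ↦ (q.nrm : ℝ) ^ (-s) * (x.1.1.nrm : ℝ) ^ (-s) :=
    hs1.congr hterm
  have hs3 : Summable fun x : {p : NormedIdeal u b m // cl p = (cl q)⁻¹} ×
      (QuadraticAlgebra ℤ u b)ˣ ↦ (x.1.1.nrm : ℝ) ^ (-s) := by
    rwa [summable_mul_left_iff (by positivity)] at hs2'
  refine ⟨hs3.comp_injective (i := fun p ↦ (p, 1)) (fun p p' h ↦ congrArg Prod.fst h), ?_⟩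
  have h1 : ∑' z, (coprimeElements q.ideal m).indicator (fun z ↦ (z.norm : ℝ) ^ (-s)) z =
      ∑' x : {p : NormedIdeal u b m // cl p = (cl q)⁻¹} × (QuadraticAlgebra ℤ u b)ˣ,
        (q.nrm : ℝ) ^ (-s) * (x.1.1.nrm : ℝ) ^ (-s) := by
    rw [← tsum_subtype, ← e.tsum_eq]
    exact tsum_congr hterm
  rw [h1, tsum_mul_left, ← mul_assoc, ← Real.rpow_add hq, add_neg_cancel, Real.rpow_zero, one_mul,
    hs3.tsum_prod, ← tsum_mul_left]
  refine tsum_congr fun p ↦ ?_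
  rw [tsum_fintype]
  simp

/-- Every class has a primitive representative. -/
theorem exists_primitive (p : NormedIdeal u b m) : ∃ (q : NormedIdeal u b m) (t : ℤ),
    cl q = cl p ∧ ∀ z, z ∈ q.ideal ↔ (q.nrm : ℤ) ∣ z.re + t * z.im := by
  obtain ⟨k, e, t, hk, he, hn, hd, hI⟩ := p.isNorm.exists_standard_form
  have hk0 : (k : QuadraticAlgebra ℤ u b) ≠ 0 := by exact_mod_cast hk.ne'
  have hle : p.ideal ≤ Ideal.span {(k : QuadraticAlgebra ℤ u b)} := fun z hz ↦ by
    obtain ⟨w, rfl, _⟩ := (hI z).1 hz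
    exact Ideal.mem_span_singleton.2 (dvd_mul_right _ _)
  obtain ⟨I', hI'⟩ := Ideal.exists_eq_span_singleton_mul hle
  have hnorm : IsNorm I' e := by
    refine ⟨he, span_natCast_cancel (n := k ^ 2) (by positivity) ?_⟩
    have h := p.isNorm.2
    rw [hI', conj_mul, conj_span_natCast, mul_mul_mul_comm,
      Ideal.span_singleton_mul_span_singleton, hn] at h
    rw [Ideal.span_singleton_mul_span_singleton]
    convert h using 3 <;> push_cast <;> ring_nf
  have hcop : e.Coprime m := Nat.Coprime.coprime_dvd_left ⟨k ^ 2, by rw [hn, mul_comm]⟩ p.coprime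
  refine ⟨NormedIdeal.mk I' e hnorm hcop, t, ?_, fun z ↦ ?_⟩
  · refine cl_eq_cl_iff.2 ⟨k, 1, hk0, one_ne_zero, ?_⟩
    rw [hI', Ideal.span_singleton_one, Ideal.top_mul]; rfl
  · change z ∈ I' ↔ (e : ℤ) ∣ _
    have h1 : z ∈ I' ↔ (k : QuadraticAlgebra ℤ u b) * z ∈ p.ideal := by
      rw [hI', Ideal.mem_span_singleton_mul]
      refine ⟨fun h ↦ ⟨z, h, rfl⟩, ?_⟩
      rintro ⟨w, hw, h⟩
      rwa [← mul_left_cancel₀ hk0 h]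
    rw [h1, hI]
    constructor
    · rintro ⟨w, hw, h⟩
      rwa [mul_left_cancel₀ hk0 hw]
    · exact fun h ↦ ⟨z, rfl, h⟩

theorem isBigO_index (J : Ideal (QuadraticAlgebra ℤ u b)) (j : ℕ) (hj : 0 < j) (hjm : j.Coprime m)
    (t : ℤ) (hJ : ∀ z, z ∈ J ↔ (j : ℤ) ∣ z.re + t * z.im) :
    (fun s : ℝ ↦ j * ∑' z, (coprimeElements J m).indicator (fun z ↦ (z.norm : ℝ) ^ (-s)) z -
      ∑' z : QuadraticAlgebra ℤ u b, {z : QuadraticAlgebra ℤ u b |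
        IsCoprime z.norm (m : ℤ)}.indicator (fun z ↦ (z.norm : ℝ) ^ (-s)) z)
      =O[𝓝[>] 1] fun _ ↦ (1 : ℝ) := by
  classical
  set T := {z : QuadraticAlgebra ℤ u b | IsCoprime z.norm (m : ℤ)} with hT
  set TJ := coprimeElements J m with hTJ
  have hTshift (z : QuadraticAlgebra ℤ u b) (i : ℤ) :
      z + ((m * i : ℤ) : QuadraticAlgebra ℤ u b) ∈ T ↔ z ∈ T := by
    have : (z + ((m * i : ℤ) : QuadraticAlgebra ℤ u b)).norm =
        z.norm + m * (2 * i * z.re + b * i * z.im + m * i ^ 2) := by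
      rw [norm_def, norm_def]
      simp only [re_add, im_add, re_intCast, im_intCast, Int.cast_id]
      ring
    simp only [hT, Set.mem_ofPred_eq, this]
    exact IsCoprime.add_mul_left_left_iff
  have hex (x : ℤ) : ∃ i ∈ Finset.range j, (j : ℤ) ∣ x - m * (i : ℕ) ∧
      ∀ i' ∈ Finset.range j, (j : ℤ) ∣ x - m * (i' : ℕ) → i' = i := by
    have hcop : IsCoprime (j : ℤ) (m : ℤ) := Nat.isCoprime_iff_coprime.2 hjm
    obtain ⟨c, v, hcv⟩ := hcop
    have hj' : (j : ℤ) ≠ 0 := by exact_mod_cast hj.ne'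
    have hnn := Int.emod_nonneg (x * v) hj'
    have hlt := Int.emod_lt_of_pos (x * v) (by exact_mod_cast hj : (0 : ℤ) < j)
    have hdiv : (j : ℤ) ∣ x - m * (((x * v) % j).toNat : ℕ) := by
      rw [Int.toNat_of_nonneg hnn]
      refine ⟨x * c + m * (x * v / j), ?_⟩
      have := Int.mul_ediv_add_emod (x * v) j
      linear_combination -x * hcv - m * this
    refine ⟨((x * v) % j).toNat, by rw [Finset.mem_range]; omega, hdiv, fun i' hi' h ↦ ?_⟩
    have h1 := dvd_sub hdiv h
    have h2 : (j : ℤ) ∣ m * ((i' : ℤ) - (((x * v) % j).toNat : ℕ)) := by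
      have h2 : x - m * (((x * v) % j).toNat : ℕ) - (x - m * (i' : ℤ)) =
          m * ((i' : ℤ) - (((x * v) % j).toNat : ℕ)) := by ring
      exact h2 ▸ h1
    have h3 := (Nat.isCoprime_iff_coprime.2 hjm : IsCoprime (j : ℤ) (m : ℤ)).dvd_of_dvd_mul_left h2
    rw [Finset.mem_range] at hi'
    have h4 : |(i' : ℤ) - (((x * v) % j).toNat : ℕ)| < j := by
      rw [abs_lt]; constructor <;> omega
    have := Int.eq_zero_of_abs_lt_dvd h3 h4
    omega
  have hpart (s : ℝ) (z : QuadraticAlgebra ℤ u b) : T.indicator (fun z ↦ (z.norm : ℝ) ^ (-s)) z =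
      ∑ i ∈ Finset.range j, TJ.indicator
        (fun z ↦ ((z + ((m * (i : ℕ) : ℤ) : QuadraticAlgebra ℤ u b)).norm : ℝ) ^ (-s))
        (z + ((-(m * (i : ℕ)) : ℤ) : QuadraticAlgebra ℤ u b)) := by
    have hcancel (i : ℕ) : z + ((-(m * (i : ℕ)) : ℤ) : QuadraticAlgebra ℤ u b) +
        ((m * (i : ℕ) : ℤ) : QuadraticAlgebra ℤ u b) = z := by
      push_cast; ring
    have hmem (i : ℕ) : z + ((-(m * (i : ℕ)) : ℤ) : QuadraticAlgebra ℤ u b) ∈ TJ ↔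
        (j : ℤ) ∣ (z.re + t * z.im) - m * (i : ℕ) ∧ z ∈ T := by
      have h1 := hTshift (z + ((-(m * (i : ℕ)) : ℤ) : QuadraticAlgebra ℤ u b)) i
      rw [hcancel] at h1
      rw [h1]
      change _ ∈ J ∧ _ ↔ _
      rw [hJ]
      simp only [re_add, im_add, re_intCast, im_intCast, Int.cast_id]
      refine and_congr ?_ Iff.rfl
      ring_nf
    by_cases hz : z ∈ T
    · obtain ⟨i, hi, hd, huniq⟩ := hex (z.re + t * z.im)
      rw [Finset.sum_eq_single_of_mem i hi, Set.indicator_of_mem ((hmem i).2 ⟨hd, hz⟩),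
        Set.indicator_of_mem hz, hcancel]
      intro i' hi' hne
      exact Set.indicator_of_notMem (fun h ↦ hne (huniq i' hi' ((hmem i').1 h).1)) _
    · rw [Set.indicator_of_notMem hz]
      symm
      refine Finset.sum_eq_zero fun i _ ↦ Set.indicator_of_notMem (fun h ↦ hz ((hmem i).1 h).2) _
  have hO : (fun s : ℝ ↦ ∑ i ∈ Finset.range j,
      (∑' z, TJ.indicator (fun z ↦ (z.norm : ℝ) ^ (-s)) z - ∑' z, TJ.indicator
        (fun z ↦ ((z + ((m * (i : ℕ) : ℤ) : QuadraticAlgebra ℤ u b)).norm : ℝ) ^ (-s)) z))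
      =O[𝓝[>] 1] fun _ ↦ (1 : ℝ) :=
    IsBigO.fun_sum fun i _ ↦ isBigO_tsum_indicator_shift hD.out TJ _
  refine hO.congr' ?_ EventuallyEq.rfl
  filter_upwards [eventually_mem_Ioc] with s ⟨hs, hs2⟩
  rw [Finset.sum_sub_distrib, Finset.sum_const, Finset.card_range, nsmul_eq_mul]
  congr 1
  simp_rw [hpart s]
  have hsum := summable_norm_rpow hD.out hs hs2
  rw [Summable.tsum_finsetSum]
  · refine Finset.sum_congr rfl fun i _ ↦ ?_
    exact ((Equiv.addRight ((-(m * (i : ℕ)) : ℤ) : QuadraticAlgebra ℤ u b)).tsum_eq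
      (TJ.indicator (fun z ↦ ((z + ((m * (i : ℕ) : ℤ) : QuadraticAlgebra ℤ u b)).norm : ℝ) ^ (-s)))).symm
  · intro i _
    have h0 : Summable fun z : QuadraticAlgebra ℤ u b ↦
        ((z + ((m * (i : ℕ) : ℤ) : QuadraticAlgebra ℤ u b)).norm : ℝ) ^ (-s) :=
      (Equiv.summable_iff (f := fun z : QuadraticAlgebra ℤ u b ↦ (z.norm : ℝ) ^ (-s))
        (Equiv.addRight ((m * (i : ℕ) : ℤ) : QuadraticAlgebra ℤ u b))).2 hsum
    exact (Equiv.summable_iff (f := TJ.indicator (fun z : QuadraticAlgebra ℤ u b ↦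
      ((z + ((m * (i : ℕ) : ℤ) : QuadraticAlgebra ℤ u b)).norm : ℝ) ^ (-s)))
      (Equiv.addRight ((-(m * (i : ℕ)) : ℤ) : QuadraticAlgebra ℤ u b))).2 (h0.indicator TJ)

end NormedIdeal

end QuadraticAlgebra

namespace QuadraticAlgebra

namespace NormedIdeal

variable {u b : ℤ} {m : ℕ} [hD : Fact (b ^ 2 + 4 * u < 0)]

theorem exists_eq_cl_inv (p : NormedIdeal u b m) : ∃ (q : NormedIdeal u b m) (t : ℤ),
    cl p = (cl q)⁻¹ ∧ ∀ z, z ∈ q.ideal ↔ (q.nrm : ℤ) ∣ z.re + t * z.im := by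
  obtain ⟨q, t, hq, h⟩ := exists_primitive p.bar
  exact ⟨q, t, by rw [hq, cl_bar, inv_inv], h⟩

theorem summable_class (p : NormedIdeal u b m) (hm : 1 < m) {s : ℝ} (hs : 1 < s) (hs2 : s ≤ 2) :
    Summable (fun x : {x : NormedIdeal u b m // cl x = cl p} ↦ (x.1.nrm : ℝ) ^ (-s)) := by
  obtain ⟨q, t, hq, -⟩ := exists_eq_cl_inv p
  rw [hq]
  exact (summable_class_and_tsum q hm hs hs2).1

/-- All the classes contribute the same main term to the Dirichlet series of the norms. -/
theorem isBigO_class (p : NormedIdeal u b m) (hm : 1 < m) :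
    (fun s : ℝ ↦ (Nat.card (QuadraticAlgebra ℤ u b)ˣ : ℝ) *
      ∑' x : {x : NormedIdeal u b m // cl x = cl p}, (x.1.nrm : ℝ) ^ (-s) -
      ∑' z : QuadraticAlgebra ℤ u b, {z : QuadraticAlgebra ℤ u b |
        IsCoprime z.norm (m : ℤ)}.indicator (fun z ↦ (z.norm : ℝ) ^ (-s)) z)
      =O[𝓝[>] 1] fun _ ↦ (1 : ℝ) := by
  obtain ⟨q, t, hq, hqt⟩ := exists_eq_cl_inv p
  rw [hq]
  have hj : (0 : ℝ) < q.nrm := by exact_mod_cast q.nrm_pos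
  have hd : DifferentiableAt ℝ (fun s : ℝ ↦ (q.nrm : ℝ) ^ (s - 1)) 1 := by
    have : (fun s : ℝ ↦ (q.nrm : ℝ) ^ (s - 1)) = fun s : ℝ ↦ Real.exp (Real.log q.nrm * (s - 1)) := by
      funext s; rw [Real.rpow_def_of_pos hj]
    rw [this]; fun_prop
  have h1 : (fun s : ℝ ↦ (q.nrm : ℝ) ^ (s - 1)) =O[𝓝[>] 1] fun _ ↦ (1 : ℝ) :=
    (hd.continuousAt.isBigO_one ℝ).mono nhdsWithin_le_nhds
  have h2 : (fun s : ℝ ↦ (q.nrm : ℝ) ^ (s - 1) - 1) =O[𝓝[>] 1] fun s ↦ s - 1 := by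
    have := hd.isBigO_sub
    simp only [sub_self, Real.rpow_zero] at this
    exact this.mono nhdsWithin_le_nhds
  have h3 := h1.mul (isBigO_index q.ideal q.nrm q.nrm_pos q.coprime t hqt)
  have h4 := h2.mul (isBigO_tsum_indicator_norm_rpow hD.out
    {z : QuadraticAlgebra ℤ u b | IsCoprime z.norm (m : ℤ)})
  have h5 : (fun s : ℝ ↦ (s - 1) * (s - 1)⁻¹) =O[𝓝[>] 1] fun _ ↦ (1 : ℝ) := by
    refine IsBigO.of_bound 1 ?_
    filter_upwards [self_mem_nhdsWithin] with s hs
    rw [mul_inv_cancel₀ (by have : (1 : ℝ) < s := hs; linarith)]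
    simp
  simp only [one_mul] at h3
  refine (h3.add (h4.trans h5)).congr' ?_ EventuallyEq.rfl
  filter_upwards [eventually_mem_Ioc] with s ⟨hs, hs2⟩
  rw [(summable_class_and_tsum q hm hs hs2).2]
  have : (q.nrm : ℝ) ^ s = (q.nrm : ℝ) ^ (s - 1) * q.nrm := by
    rw [← Real.rpow_add_one hj.ne', sub_add_cancel]
  rw [this]
  ring

theorem summable_nrm (hm : 1 < m) {s : ℝ} (hs : 1 < s) (hs2 : s ≤ 2) :
    Summable (fun x : NormedIdeal u b m ↦ (x.nrm : ℝ) ^ (-s)) := by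
  have := (finite_range_cl (u := u) (b := b) (m := m)).to_subtype
  rw [← (Equiv.sigmaFiberEquiv (Set.rangeFactorization (cl : NormedIdeal u b m → _))).summable_iff]
  refine (summable_sigma_of_nonneg fun x ↦ by
    simp only [Function.comp]; positivity).2 ⟨?_, Summable.of_finite⟩
  rintro ⟨_, p, rfl⟩
  refine ((Equiv.subtypeEquivRight fun x ↦ ?_).summable_iff.2 (summable_class p hm hs hs2) :)
  simp [Set.rangeFactorization, Subtype.ext_iff]

theorem hasSum_class (hm : 1 < m) {s : ℝ} (hs : 1 < s) (hs2 : s ≤ 2)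
    (χ : ClassGroup (QuadraticAlgebra ℤ u b) → ℂ) (hχ : ∀ g, ‖χ g‖ ≤ 1) :
    HasSum (fun x : NormedIdeal u b m ↦ χ (cl x) * ((x.nrm : ℝ) ^ (-s) : ℝ))
      (∑ g ∈ (finite_range_cl (u := u) (b := b) (m := m)).toFinset,
        χ g * (∑' x : {x : NormedIdeal u b m // cl x = g}, (x.1.nrm : ℝ) ^ (-s) : ℝ)) := by
  classical
  have hsum : Summable (fun x : NormedIdeal u b m ↦ χ (cl x) * ((x.nrm : ℝ) ^ (-s) : ℝ)) := by
    refine Summable.of_norm_bounded (summable_nrm hm hs hs2) fun x ↦ ?_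
    rw [norm_mul, Complex.norm_real, Real.norm_of_nonneg (by positivity)]
    exact mul_le_of_le_one_left (by positivity) (hχ _)
  have h1 : HasSum (fun x : NormedIdeal u b m ↦ χ (cl x) * ((x.nrm : ℝ) ^ (-s) : ℝ))
      (∑ g ∈ (finite_range_cl (u := u) (b := b) (m := m)).toFinset,
        ∑' x : NormedIdeal u b m, {x : NormedIdeal u b m | cl x = g}.indicator
          (fun x ↦ χ (cl x) * ((x.nrm : ℝ) ^ (-s) : ℝ)) x) := by
    refine (hasSum_sum fun g _ ↦ (hsum.indicator {x | cl x = g}).hasSum).congr_fun ?_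
    intro x
    rw [Finset.sum_eq_single (cl x)]
    · simp
    · intro g _ hg
      exact Set.indicator_of_notMem (fun h ↦ hg h.symm) _
    · intro h
      exact absurd (by simp) h
  convert h1 using 2 with g hg
  rw [← tsum_subtype, Complex.ofReal_tsum, ← tsum_mul_left]
  exact tsum_congr fun x ↦ by rw [show cl x.1 = g from x.2]

/-- The Dirichlet series attached to a nontrivial class group character is bounded near `1`. -/
theorem isBigO_tsum_character (hm : 1 < m) (χ : ClassGroup (QuadraticAlgebra ℤ u b) →* ℂ)
    (hχ : ∀ g, ‖χ g‖ ≤ 1) (p₀ : NormedIdeal u b m) (h₀ : χ (cl p₀) ≠ 1) :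
    (fun s : ℝ ↦ ∑' x : NormedIdeal u b m, χ (cl x) * ((x.nrm : ℝ) ^ (-s) : ℝ))
      =O[𝓝[>] 1] fun _ ↦ (1 : ℝ) := by
  classical
  have hzero : ∑ g ∈ (finite_range_cl (u := u) (b := b) (m := m)).toFinset, χ g = 0 := by
    have h : χ (cl p₀) * ∑ g ∈ (finite_range_cl (u := u) (b := b) (m := m)).toFinset, χ g =
        ∑ g ∈ (finite_range_cl (u := u) (b := b) (m := m)).toFinset, χ g := by
      rw [Finset.mul_sum]
      refine Finset.sum_nbij' (fun g ↦ cl p₀ * g) (fun g ↦ (cl p₀)⁻¹ * g) ?_ ?_ ?_ ?_ ?_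
      · intro g hg
        obtain ⟨q, rfl⟩ := (Set.Finite.mem_toFinset _).1 hg
        exact (Set.Finite.mem_toFinset _).2 ⟨p₀ * q, map_mul _ _ _⟩
      · intro g hg
        obtain ⟨q, rfl⟩ := (Set.Finite.mem_toFinset _).1 hg
        exact (Set.Finite.mem_toFinset _).2 ⟨p₀.bar * q, by rw [map_mul, cl_bar]⟩
      · intro g _; simp
      · intro g _; simp
      · intro g _; simp
    rcases mul_left_eq_self₀.1 h with h | h
    · exact absurd h h₀
    · exact h
  have := finite_units (u := u) (b := b)
  have hw : (Nat.card (QuadraticAlgebra ℤ u b)ˣ : ℂ) ≠ 0 := by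
    exact_mod_cast Nat.card_pos.ne'
  have hO : (fun s : ℝ ↦ ∑ g ∈ (finite_range_cl (u := u) (b := b) (m := m)).toFinset,
      (Nat.card (QuadraticAlgebra ℤ u b)ˣ : ℂ)⁻¹ * χ g *
      (((Nat.card (QuadraticAlgebra ℤ u b)ˣ : ℝ) *
      ∑' x : {x : NormedIdeal u b m // cl x = g}, (x.1.nrm : ℝ) ^ (-s) -
      ∑' z : QuadraticAlgebra ℤ u b, {z : QuadraticAlgebra ℤ u b |
        IsCoprime z.norm (m : ℤ)}.indicator (fun z ↦ (z.norm : ℝ) ^ (-s)) z : ℝ) : ℂ))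
      =O[𝓝[>] 1] fun _ ↦ (1 : ℝ) := by
    refine IsBigO.fun_sum fun g hg ↦ ?_
    obtain ⟨q, rfl⟩ := (Set.Finite.mem_toFinset _).1 hg
    refine IsBigO.const_mul_left ?_ _
    refine IsBigO.of_norm_left ?_
    simp only [Complex.norm_real]
    exact (isBigO_class q hm).norm_left
  refine hO.congr' ?_ EventuallyEq.rfl
  filter_upwards [eventually_mem_Ioc] with s ⟨hs, hs2⟩
  rw [(hasSum_class hm hs hs2 χ hχ).tsum_eq]
  simp only [Complex.ofReal_sub, mul_sub, Finset.sum_sub_distrib, ← Finset.sum_mul,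
    ← Finset.mul_sum, hzero]
  simp only [mul_zero, zero_mul, sub_zero]
  refine Finset.sum_congr rfl fun g _ ↦ ?_
  push_cast
  field_simp

/-- The Dirichlet series of the norms has a pole at `1`. -/
theorem isBigO_inv_tsum_nrm (hm : 1 < m) :
    (fun s : ℝ ↦ (s - 1)⁻¹) =O[𝓝[>] 1] fun s ↦ ∑' x : NormedIdeal u b m, (x.nrm : ℝ) ^ (-s) := by
  have hZ := isBigO_inv_tsum_indicator_norm_rpow hD.out (show 0 < m by omega)
  have h1 : (fun _ ↦ (1 : ℝ)) =o[𝓝[>] 1] fun s : ℝ ↦ (s - 1)⁻¹ := by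
    rw [isLittleO_one_left_iff]
    have h : Tendsto (fun s : ℝ ↦ (s - 1)⁻¹) (𝓝[>] 1) atTop := by
      refine tendsto_inv_nhdsGT_zero.comp (tendsto_nhdsWithin_iff.2 ⟨?_, ?_⟩)
      · refine (Continuous.tendsto' (by fun_prop) _ _ (by simp)).mono_left nhdsWithin_le_nhds
      · filter_upwards [self_mem_nhdsWithin] with s hs
        simpa using hs
    exact tendsto_norm_atTop_atTop.comp h
  have h2 := (isBigO_class (1 : NormedIdeal u b m) hm).trans_isLittleO (h1.trans_isBigO hZ)
  have h3 := hZ.trans (IsEquivalent.isBigO_symm h2)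
  refine h3.trans (IsBigO.of_bound (Nat.card (QuadraticAlgebra ℤ u b)ˣ : ℝ) ?_)
  filter_upwards [eventually_mem_Ioc] with s ⟨hs, hs2⟩
  rw [norm_mul, Real.norm_of_nonneg (Nat.cast_nonneg _), Real.norm_of_nonneg
    (tsum_nonneg fun _ ↦ by positivity), Real.norm_of_nonneg (tsum_nonneg fun _ ↦ by positivity)]
  refine mul_le_mul_of_nonneg_left ?_ (Nat.cast_nonneg _)
  exact (summable_class 1 hm hs hs2).tsum_le_tsum_of_inj (g := fun x : NormedIdeal u b m ↦ (x.nrm : ℝ) ^ (-s))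
    Subtype.val Subtype.val_injective (fun _ _ ↦ by positivity) (fun _ ↦ le_rfl)
    (summable_nrm hm hs hs2)

end NormedIdeal

end QuadraticAlgebra

theorem Ideal.span_natCast_sup_span_natCast {R : Type*} [CommRing R] {n k : ℕ} (h : n.Coprime k) :
    Ideal.span {(n : R)} ⊔ Ideal.span {(k : R)} = ⊤ := by
  obtain ⟨x, y, hxy⟩ := Nat.isCoprime_iff_coprime.2 h
  rw [Ideal.eq_top_iff_one]
  have h1 : (1 : R) = (x : R) * n + y * k := by
    have := congrArg (Int.cast : ℤ → R) hxy
    push_cast at this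
    exact this.symm
  rw [h1]
  exact Submodule.add_mem_sup (Ideal.mul_mem_left _ _ (Ideal.mem_span_singleton_self _))
    (Ideal.mul_mem_left _ _ (Ideal.mem_span_singleton_self _))

theorem Ideal.mul_sup_span_natCast {R : Type*} [CommRing R] {I J : Ideal R} {n k : ℕ}
    (h : n.Coprime k) (hn : (n : R) ∈ I) (hk : (k : R) ∈ J) : I * J ⊔ Ideal.span {(n : R)} = I := by
  refine le_antisymm (sup_le Ideal.mul_le_left ((Ideal.span_singleton_le_iff_mem I).2 hn)) ?_
  calc I = I * (Ideal.span {(n : R)} ⊔ Ideal.span {(k : R)}) := by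
        rw [Ideal.span_natCast_sup_span_natCast h, Ideal.mul_top]
    _ ≤ I * (Ideal.span {(n : R)} ⊔ J) :=
        Ideal.mul_mono_right (sup_le_sup_left ((Ideal.span_singleton_le_iff_mem J).2 hk) _)
    _ = I * Ideal.span {(n : R)} ⊔ I * J := Ideal.mul_sup _ _ _
    _ ≤ _ := sup_le (Ideal.mul_le_right.trans le_sup_right) le_sup_left

theorem Ideal.sup_span_mul_sup_span {R : Type*} [CommRing R] {I : Ideal R} {n k : ℕ}
    (h : n.Coprime k) (hI : ((n * k : ℕ) : R) ∈ I) :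
    (I ⊔ Ideal.span {(n : R)}) * (I ⊔ Ideal.span {(k : R)}) = I := by
  have hnk : Ideal.span {(n : R)} * Ideal.span {(k : R)} ≤ I := by
    rw [Ideal.span_singleton_mul_span_singleton, Ideal.span_singleton_le_iff_mem]
    exact_mod_cast hI
  refine le_antisymm ?_ ?_
  · rw [Ideal.sup_mul, Ideal.mul_sup, Ideal.mul_sup]
    exact sup_le (sup_le Ideal.mul_le_left Ideal.mul_le_left) (sup_le Ideal.mul_le_right hnk)
  · calc I = (Ideal.span {(n : R)} ⊔ Ideal.span {(k : R)}) * I := by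
          rw [Ideal.span_natCast_sup_span_natCast h, Ideal.top_mul]
      _ = Ideal.span {(n : R)} * I ⊔ I * Ideal.span {(k : R)} := by
          rw [Ideal.sup_mul, mul_comm (Ideal.span {(k : R)})]
      _ ≤ _ := sup_le (Ideal.mul_mono le_sup_right le_sup_left)
          (Ideal.mul_mono le_sup_left le_sup_right)

namespace QuadraticAlgebra

variable {u b : ℤ} {m : ℕ}

theorem IsNorm.sup_span {I : Ideal (QuadraticAlgebra ℤ u b)} {n k : ℕ} (h : n.Coprime k)
    (hI : IsNorm I (n * k)) : IsNorm (I ⊔ Ideal.span {(n : QuadraticAlgebra ℤ u b)}) n := by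
  have hmul : Ideal.span {(n : QuadraticAlgebra ℤ u b)} * Ideal.span {(k : QuadraticAlgebra ℤ u b)} =
      I * QuadraticAlgebra.conj I := by
    rw [Ideal.span_singleton_mul_span_singleton, hI.2, Nat.cast_mul]
  refine ⟨Nat.pos_of_mul_pos_right hI.1, ?_⟩
  rw [conj_sup, conj_span_natCast, Ideal.sup_mul, Ideal.mul_sup, Ideal.mul_sup]
  refine le_antisymm ?_ ?_
  · rw [← hmul]
    exact sup_le (sup_le Ideal.mul_le_left Ideal.mul_le_right)
      (sup_le Ideal.mul_le_left Ideal.mul_le_left)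
  · calc Ideal.span {(n : QuadraticAlgebra ℤ u b)}
        = Ideal.span {(n : QuadraticAlgebra ℤ u b)} * (Ideal.span {(n : QuadraticAlgebra ℤ u b)} ⊔
            Ideal.span {(k : QuadraticAlgebra ℤ u b)}) := by
          rw [Ideal.span_natCast_sup_span_natCast h, Ideal.mul_top]
      _ ≤ _ := by
          rw [Ideal.mul_sup, hmul]
          exact sup_le (le_sup_right.trans le_sup_right) (le_sup_left.trans le_sup_left)

theorem dvd_sub_or_dvd_add_sub {p : ℕ} (hp : p.Prime) (hD : ¬ (p : ℤ) ∣ b ^ 2 + 4 * u) {r : ℕ}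
    {t t' : ℤ} (h : ((p ^ r : ℕ) : ℤ) ∣ t ^ 2 - b * t - u)
    (h' : ((p ^ r : ℕ) : ℤ) ∣ t' ^ 2 - b * t' - u) :
    ((p ^ r : ℕ) : ℤ) ∣ t - t' ∨ ((p ^ r : ℕ) : ℤ) ∣ t + t' - b := by
  rcases Nat.eq_zero_or_pos r with rfl | hr
  · simp
  have hp' : Prime (p : ℤ) := Nat.prime_iff_prime_int.1 hp
  have hpr : (p : ℤ) ∣ t ^ 2 - b * t - u := by
    refine dvd_trans ?_ h
    push_cast
    exact dvd_pow_self _ hr.ne'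
  have hmul : (p : ℤ) ^ r ∣ (t - t') * (t + t' - b) := by
    have h1 := dvd_sub h h'
    have h2 : t ^ 2 - b * t - u - (t' ^ 2 - b * t' - u) = (t - t') * (t + t' - b) := by ring
    rw [h2] at h1
    exact_mod_cast h1
  push_cast
  by_cases h1 : (p : ℤ) ∣ t - t'
  · by_cases h2 : (p : ℤ) ∣ t + t' - b
    · refine absurd ?_ hD
      have h3 : (p : ℤ) ∣ 2 * t - b := by
        have h3 : t - t' + (t + t' - b) = 2 * t - b := by ring
        exact h3 ▸ dvd_add h1 h2
      have : b ^ 2 + 4 * u = (2 * t - b) * (2 * t - b) - 4 * (t ^ 2 - b * t - u) := by ring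
      rw [this]
      exact dvd_sub (Dvd.dvd.mul_left h3 _) (Dvd.dvd.mul_left hpr _)
    · left
      exact hp'.pow_dvd_of_dvd_mul_right r h2 hmul
  · right
    exact hp'.pow_dvd_of_dvd_mul_left r h1 hmul

namespace NormedIdeal

variable [hD : Fact (b ^ 2 + 4 * u < 0)]

theorem finite_nrm_eq (n : ℕ) : {p : NormedIdeal u b m | p.nrm = n}.Finite := by
  rcases Nat.eq_zero_or_pos n with rfl | hn
  · convert Set.finite_empty
    ext p
    simp [p.nrm_pos.ne']
  · refine Set.Finite.of_finite_image (f := ideal) ?_ (fun p _ q _ h ↦ ideal_injective h)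
    have hn0 : (n : QuadraticAlgebra ℤ u b) ≠ 0 := by exact_mod_cast hn.ne'
    refine (Ring.HasFiniteQuotients.finite_setOfPred_mem (n : QuadraticAlgebra ℤ u b) hn0).subset ?_
    rintro _ ⟨p, hp, rfl⟩
    have := p.isNorm.natCast_mem
    rwa [show p.nrm = n from hp] at this

variable (u b m) in
/-- The finset of ideals of norm `n`. -/
noncomputable def ofNrm (n : ℕ) : Finset (NormedIdeal u b m) := (finite_nrm_eq n).toFinset

@[simp] theorem mem_ofNrm {n : ℕ} {p : NormedIdeal u b m} : p ∈ ofNrm u b m n ↔ p.nrm = n := by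
  simp [ofNrm]

theorem sum_ofNrm_mul (ψ : NormedIdeal u b m →* ℂ) {n k : ℕ} (h : n.Coprime k) :
    ∑ p ∈ ofNrm u b m (n * k), ψ p = (∑ p ∈ ofNrm u b m n, ψ p) * ∑ p ∈ ofNrm u b m k, ψ p := by
  rw [Finset.sum_mul_sum, ← Finset.sum_product']
  symm
  refine Finset.sum_nbij (fun x ↦ x.1 * x.2) ?_ ?_ ?_ ?_
  · rintro ⟨p, q⟩ hx
    rw [Finset.mem_product, mem_ofNrm, mem_ofNrm] at hx
    rw [mem_ofNrm, nrm_mul, hx.1, hx.2]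
  · rintro ⟨p, q⟩ hx ⟨p', q'⟩ hx' heq
    simp only [Finset.coe_product, Set.mem_prod, Finset.mem_coe, mem_ofNrm] at hx hx'
    have hI : p.ideal * q.ideal = p'.ideal * q'.ideal := congrArg ideal heq
    have hp : (n : QuadraticAlgebra ℤ u b) ∈ p.ideal := hx.1 ▸ p.isNorm.natCast_mem
    have hp' : (n : QuadraticAlgebra ℤ u b) ∈ p'.ideal := hx'.1 ▸ p'.isNorm.natCast_mem
    have hq : (k : QuadraticAlgebra ℤ u b) ∈ q.ideal := hx.2 ▸ q.isNorm.natCast_mem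
    have hq' : (k : QuadraticAlgebra ℤ u b) ∈ q'.ideal := hx'.2 ▸ q'.isNorm.natCast_mem
    refine Prod.ext (ideal_injective ?_) (ideal_injective ?_)
    · rw [← Ideal.mul_sup_span_natCast h hp hq, hI, Ideal.mul_sup_span_natCast h hp' hq']
    · rw [← Ideal.mul_sup_span_natCast h.symm hq hp, mul_comm, hI, mul_comm,
        Ideal.mul_sup_span_natCast h.symm hq' hp']
  · intro p hp
    simp only [Finset.mem_coe, mem_ofNrm] at hp
    have h1 : IsNorm p.ideal (n * k) := hp ▸ p.isNorm
    have h2 : IsNorm p.ideal (k * n) := mul_comm n k ▸ h1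
    have hc : (n * k).Coprime m := hp ▸ p.coprime
    refine ⟨(mk _ n (h1.sup_span h) (Nat.Coprime.coprime_mul_right hc),
      mk _ k (h2.sup_span h.symm) (Nat.Coprime.coprime_mul_left hc)), ?_, ?_⟩
    · simp only [Finset.coe_product, Set.mem_prod, Finset.mem_coe, mem_ofNrm]
      exact ⟨rfl, rfl⟩
    · exact ideal_injective (Ideal.sup_span_mul_sup_span h h1.natCast_mem)
  · rintro ⟨p, q⟩ _
    exact (map_mul ψ p q).symm

theorem card_ofNrm_prime_pow {p : ℕ} (hp : p.Prime) (hpD : ¬ (p : ℤ) ∣ b ^ 2 + 4 * u) (k : ℕ) :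
    (ofNrm u b m (p ^ k)).card ≤ 2 * (k / 2 + 1) := by
  classical
  choose K E T hK hE hKE hd hI using fun I : NormedIdeal u b m ↦ I.isNorm.exists_standard_form
  have hmem (I) (hI' : I ∈ ofNrm u b m (p ^ k)) : p ^ k = K I ^ 2 * E I := by
    rw [← hKE, mem_ofNrm.1 hI']
  have himg : ((ofNrm u b m (p ^ k)).image K).card ≤ k / 2 + 1 := by
    refine (Finset.card_le_card (t := (Finset.range (k / 2 + 1)).image (p ^ ·)) ?_).trans
      (Finset.card_image_le.trans (by simp))
    intro x hx
    obtain ⟨I, hI', rfl⟩ := Finset.mem_image.1 hx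
    have h1 := hmem I hI'
    have h2 : K I ∣ p ^ k := by rw [h1, pow_two, mul_assoc]; exact dvd_mul_right _ _
    obtain ⟨i, hi, hKi⟩ := (Nat.dvd_prime_pow hp).1 h2
    refine Finset.mem_image.2 ⟨i, ?_, hKi.symm⟩
    have h3 : p ^ (i * 2) ∣ p ^ k := by rw [pow_mul, ← hKi, h1]; exact dvd_mul_right _ _
    have h4 := (Nat.pow_dvd_pow_iff_le_right hp.one_lt).1 h3
    rw [Finset.mem_range]; omega
  refine (Finset.card_le_mul_card_image _ 2 ?_).trans (Nat.mul_le_mul_left 2 himg)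
  intro x _
  by_contra! hlt
  obtain ⟨I₁, h1, I₂, h2, I₃, h3, h12, h13, h23⟩ := Finset.two_lt_card.1 hlt
  rw [Finset.mem_filter] at h1 h2 h3
  have hEeq (I J) (hI' : I ∈ ofNrm u b m (p ^ k) ∧ K I = x)
      (hJ' : J ∈ ofNrm u b m (p ^ k) ∧ K J = x) : E I = E J := by
    have e1 := hmem I hI'.1
    have e2 := hmem J hJ'.1
    rw [hI'.2] at e1
    rw [hJ'.2, e1] at e2
    refine Nat.eq_of_mul_eq_mul_left ?_ e2
    rw [← hI'.2]; exact pow_pos (hK I) 2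
  obtain ⟨r, -, hr⟩ : ∃ r ≤ k, E I₁ = p ^ r := by
    refine (Nat.dvd_prime_pow hp).1 ?_
    rw [hmem I₁ h1.1]; exact dvd_mul_left _ _
  have key (I J) (hI' : I ∈ ofNrm u b m (p ^ k) ∧ K I = x)
      (hJ' : J ∈ ofNrm u b m (p ^ k) ∧ K J = x) (hne : I ≠ J) :
      ¬ ((p ^ r : ℕ) : ℤ) ∣ T I - T J ∧ ((p ^ r : ℕ) : ℤ) ∣ T I + T J - b := by
    have e1 : E I = p ^ r := (hEeq I I₁ hI' h1).trans hr
    have e2 : E J = p ^ r := (hEeq J I₁ hJ' h1).trans hr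
    have hnot : ¬ ((p ^ r : ℕ) : ℤ) ∣ T I - T J := by
      intro hdvd
      refine hne (ideal_injective (Ideal.ext fun z ↦ ?_))
      rw [hI, hI, hI'.2, hJ'.2, e1, e2]
      refine exists_congr fun w ↦ and_congr_right fun _ ↦ ?_
      refine (dvd_iff_dvd_of_dvd_sub ?_)
      have : w.re + T I * w.im - (w.re + T J * w.im) = (T I - T J) * w.im := by ring
      rw [this]
      exact Dvd.dvd.mul_right hdvd _
    have d1 := hd I
    have d2 := hd J
    rw [e1] at d1
    rw [e2] at d2
    exact ⟨hnot, (dvd_sub_or_dvd_add_sub hp hpD d1 d2).resolve_left hnot⟩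
  refine (key I₂ I₃ h2 h3 h23).1 ?_
  have := dvd_sub (key I₁ I₂ h1 h2 h12).2 (key I₁ I₃ h1 h3 h13).2
  have h4 : T I₁ + T I₂ - b - (T I₁ + T I₃ - b) = T I₂ - T I₃ := by ring
  exact h4 ▸ this

theorem jacobiSym_eq_neg_one {D : ℤ} (hneg : D < 0) {p : ℕ} (h : 4 * D.natAbs ∣ p + 1) :
    jacobiSym D p = -1 := by
  obtain ⟨k, hk⟩ := h
  have hk0 : 0 < k := by rcases Nat.eq_zero_or_pos k with rfl | h <;> omega
  have hDpos : 0 < D.natAbs := by omega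
  have hodd : Odd p := by
    rw [← Nat.not_even_iff_odd, Nat.even_iff]
    rw [mul_assoc] at hk
    omega
  have hmod : p % (4 * D.natAbs) = 4 * D.natAbs - 1 := by
    obtain ⟨k, rfl⟩ : ∃ j, k = j + 1 := ⟨k - 1, by omega⟩
    have : p = (4 * D.natAbs - 1) + 4 * D.natAbs * k := by
      rw [mul_add, mul_one] at hk; omega
    rw [this, Nat.add_mul_mod_self_left, Nat.mod_eq_of_lt (by omega)]
  rw [jacobiSym.mod_right _ hodd, hmod]
  set n := 4 * D.natAbs - 1 with hn
  have hodd' : Odd n := by rw [← Nat.not_even_iff_odd, Nat.even_iff]; omega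
  have h4 : jacobiSym 4 n = 1 := by
    have : (4 : ℤ) = 2 ^ 2 := by norm_num
    rw [this]
    refine jacobiSym.sq_one' ?_
    exact_mod_cast Nat.coprime_two_left.2 hodd'
  have h1 : jacobiSym (4 * D) n = jacobiSym (-1) n := by
    rw [jacobiSym.mod_left (4 * D), jacobiSym.mod_left (-1)]
    congr 1
    rw [Int.emod_eq_emod_iff_emod_sub_eq_zero]
    refine Int.emod_eq_zero_of_dvd ⟨-1, ?_⟩
    omega
  rw [jacobiSym.mul_left, h4, one_mul, jacobiSym.at_neg_one hodd',
    ZMod.χ₄_nat_three_mod_four (by omega)] at h1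
  exact h1

theorem ofNrm_eq_empty {p : ℕ} (hp : p.Prime) (h : 4 * (b ^ 2 + 4 * u).natAbs ∣ p + 1) :
    ofNrm u b m p = ∅ := by
  rw [Finset.eq_empty_iff_forall_notMem]
  intro I hI
  rw [mem_ofNrm] at hI
  obtain ⟨k, e, t, hk, he, hn, hd, -⟩ := I.isNorm.exists_standard_form
  rw [hI] at hn
  have hk1 : k = 1 := by
    have h1 : k ∣ p := by rw [hn, pow_two, mul_assoc]; exact dvd_mul_right _ _
    rcases (Nat.dvd_prime hp).1 h1 with h1 | rfl
    · exact h1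
    · have : 1 < k := hp.one_lt
      nlinarith
  rw [hk1, one_pow, one_mul] at hn
  rw [← hn] at hd
  have hJ := jacobiSym_eq_neg_one hD.out h
  have : Fact p.Prime := ⟨hp⟩
  rw [← jacobiSym.legendreSym.to_jacobiSym, legendreSym.eq_neg_one_iff] at hJ
  refine hJ ⟨((2 * t - b : ℤ) : ZMod p), ?_⟩
  have h1 : b ^ 2 + 4 * u = (2 * t - b) * (2 * t - b) - 4 * (t ^ 2 - b * t - u) := by ring
  have h2 : ((t ^ 2 - b * t - u : ℤ) : ZMod p) = 0 := (ZMod.intCast_zmod_eq_zero_iff_dvd _ _).2 hd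
  rw [h1, Int.cast_sub, Int.cast_mul, Int.cast_mul 4, h2, mul_zero, sub_zero]

end NormedIdeal

end QuadraticAlgebra

theorem norm_log_tsum_sub_le {c : ℕ → ℂ} {x : ℝ} (hx : 0 ≤ x) (hx' : x ≤ 1 / 11) (h0 : c 0 = 1)
    (h1 : ‖c 1‖ ≤ 2 * x) (hc : ∀ k, ‖c (k + 2)‖ ≤ (k + 4) * x ^ (k + 2)) :
    Complex.exp (Complex.log (∑' k, c k)) = ∑' k, c k ∧
      ‖Complex.log (∑' k, c k) - c 1‖ ≤ 12 * x ^ 2 := by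
  have hgeo := (hasSum_geometric_of_lt_one (r := 2 * x) (by positivity) (by linarith)).mul_left
    (4 * x ^ 2)
  have hbound (k : ℕ) : ‖c (k + 2)‖ ≤ 4 * x ^ 2 * (2 * x) ^ k := by
    refine (hc k).trans ?_
    have h2 : ((k : ℝ) + 4) ≤ 4 * 2 ^ k := by
      have : (k + 4 : ℕ) ≤ 4 * 2 ^ k := by
        induction k with
        | zero => simp
        | succ n ih => rw [pow_succ]; omega
      exact_mod_cast this
    calc ((k : ℝ) + 4) * x ^ (k + 2) ≤ 4 * 2 ^ k * x ^ (k + 2) := by gcongr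
      _ = 4 * x ^ 2 * (2 * x) ^ k := by rw [mul_pow]; ring
  have hsum2 : Summable fun k ↦ c (k + 2) := Summable.of_norm_bounded hgeo.summable hbound
  have hsum : Summable c := (summable_nat_add_iff 2).1 hsum2
  have htail : ‖∑' k, c (k + 2)‖ ≤ 5 * x ^ 2 := by
    refine (tsum_of_norm_bounded hgeo hbound).trans ?_
    have : (1 - 2 * x)⁻¹ ≤ 5 / 4 := by
      rw [inv_le_comm₀ (by linarith) (by norm_num)]; linarith
    nlinarith [sq_nonneg x]
  set r := ∑' k, c (k + 2) with hr
  have hf : ∑' k, c k = 1 + (c 1 + r) := by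
    rw [← hsum.sum_add_tsum_nat_add 2, Finset.sum_range_succ, Finset.sum_range_one, h0, hr]
    ring
  have hz : ‖c 1 + r‖ ≤ 3 * x := by
    refine (norm_add_le _ _).trans ?_
    nlinarith
  have hlog := Complex.norm_log_one_add_sub_self_le (z := c 1 + r) (by linarith)
  rw [hf]
  constructor
  · refine Complex.exp_log fun h ↦ ?_
    have h2 : c 1 + r = -1 := by linear_combination h
    rw [h2, norm_neg, norm_one] at hz
    linarith
  · have h3 : Complex.log (1 + (c 1 + r)) - c 1 = (Complex.log (1 + (c 1 + r)) - (c 1 + r)) + r := by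
      ring
    rw [h3]
    refine (norm_add_le _ _).trans ?_
    have h4 : (1 - ‖c 1 + r‖)⁻¹ ≤ 11 / 8 := by
      rw [inv_le_comm₀ (by linarith) (by norm_num)]; linarith
    have h5 : ‖c 1 + r‖ ^ 2 ≤ 9 * x ^ 2 := by
      have := pow_le_pow_left₀ (norm_nonneg _) hz 2
      linarith [mul_pow 3 x 2]
    have h6 : ‖c 1 + r‖ ^ 2 * (1 - ‖c 1 + r‖)⁻¹ ≤ 9 * x ^ 2 * (11 / 8) :=
      mul_le_mul h5 h4 (inv_nonneg.2 (by linarith)) (by positivity)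
    nlinarith [sq_nonneg x]

namespace QuadraticAlgebra

theorem not_dvd_of_coprime {u b : ℤ} {m : ℕ}
    (hm : 210 * (b ^ 2 + 4 * u).natAbs ∣ m) {p : ℕ} (hp : p.Prime)
    (h : p.Coprime m) : 11 ≤ p ∧ ¬ (p : ℤ) ∣ b ^ 2 + 4 * u := by
  have h1 : ¬ p ∣ m := (Nat.Prime.coprime_iff_not_dvd hp).1 h
  constructor
  · by_contra! hlt
    have h2 : ¬ p ∣ 210 := fun h2 ↦ h1 ((Dvd.dvd.mul_right h2 _).trans hm)
    interval_cases p <;> revert hp h2 <;> decide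
  · intro h2
    exact h1 ((Dvd.dvd.mul_left (Int.natCast_dvd.1 h2) _).trans hm)

namespace NormedIdeal

variable {u b : ℤ} {m : ℕ} [hD : Fact (b ^ 2 + 4 * u < 0)]

theorem hasSum_ofNrm {E : Type*} [NormedAddCommGroup E] [CompleteSpace E]
    {f : NormedIdeal u b m → E} {a : E} (h : HasSum f a) :
    HasSum (fun n ↦ ∑ I ∈ ofNrm u b m n, f I) a := by
  refine (h.tsum_fiberwise nrm).congr_fun fun n ↦ ?_
  have : nrm ⁻¹' {n} = (ofNrm u b m n : Set (NormedIdeal u b m)) := by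
    ext; simp
  rw [this, Finset.tsum_subtype']

theorem ofNrm_zero : ofNrm u b m 0 = ∅ := by
  rw [Finset.eq_empty_iff_forall_notMem]
  intro I hI
  exact I.nrm_pos.ne' (mem_ofNrm.1 hI)

theorem ofNrm_one : ofNrm u b m 1 = {1} := by
  ext I
  rw [mem_ofNrm, Finset.mem_singleton]
  refine ⟨fun h ↦ ideal_injective ?_, fun h ↦ by rw [h, nrm_one]⟩
  rw [ideal_one, Ideal.one_eq_top, Ideal.eq_top_iff_one]
  have := I.isNorm.natCast_mem
  rwa [h, Nat.cast_one] at this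

theorem ofNrm_eq_empty_of_not_coprime {n : ℕ} (h : ¬ n.Coprime m) : ofNrm u b m n = ∅ := by
  rw [Finset.eq_empty_iff_forall_notMem]
  intro I hI
  exact h (mem_ofNrm.1 hI ▸ I.coprime)

theorem hasProd_tsum_ofNrm {ψ : NormedIdeal u b m →* ℂ} (h : Summable fun I ↦ ‖ψ I‖) :
    HasProd (fun p : Nat.Primes ↦ ∑' e : ℕ, ∑ I ∈ ofNrm u b m (p ^ e), ψ I) (∑' I, ψ I) := by
  rw [← (hasSum_ofNrm h.of_norm.hasSum).tsum_eq]
  refine EulerProduct.eulerProduct_hasProd (f := fun n ↦ ∑ I ∈ ofNrm u b m n, ψ I) ?_ ?_ ?_ ?_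
  · simp [ofNrm_one]
  · exact fun h ↦ sum_ofNrm_mul ψ h
  · refine Summable.of_nonneg_of_le (fun _ ↦ norm_nonneg _) (fun n ↦ ?_)
      (hasSum_ofNrm h.hasSum).summable
    exact norm_sum_le _ _
  · simp [ofNrm_zero]

theorem norm_sum_ofNrm_le {ψ : NormedIdeal u b m →* ℂ} {s : ℝ}
    (hψ : ∀ I, ‖ψ I‖ ≤ (I.nrm : ℝ) ^ (-s)) {p : ℕ} (hp : p.Prime)
    (hpD : ¬ (p : ℤ) ∣ b ^ 2 + 4 * u) (k : ℕ) :
    ‖∑ I ∈ ofNrm u b m (p ^ k), ψ I‖ ≤ (2 * (k / 2 + 1) : ℕ) * ((p : ℝ) ^ (-s)) ^ k := by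
  refine (norm_sum_le_of_le _ (f := ψ) (n := fun _ ↦ ((p : ℝ) ^ (-s)) ^ k) fun I hI ↦ ?_).trans ?_
  · refine (hψ I).trans_eq ?_
    rw [mem_ofNrm.1 hI, Nat.cast_pow, ← Real.rpow_natCast, ← Real.rpow_natCast,
      ← Real.rpow_mul (by positivity), ← Real.rpow_mul (by positivity), mul_comm]
  · rw [Finset.sum_const, nsmul_eq_mul]
    gcongr
    exact card_ofNrm_prime_pow hp hpD k

/-- Up to a bounded factor, the Dirichlet series of `ψ` is the exponential of the part of the
series supported on the ideals of prime norm. -/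
theorem exists_exp_eq_tsum (hm : 210 * (b ^ 2 + 4 * u).natAbs ∣ m) (hm1 : 1 < m) {s : ℝ}
    (hs : 1 < s) (hs2 : s ≤ 2) {ψ : NormedIdeal u b m →* ℂ}
    (hψ : ∀ I, ‖ψ I‖ ≤ (I.nrm : ℝ) ^ (-s)) :
    ∃ S : ℂ, ∑' I, ψ I = Complex.exp S ∧
      (Summable fun p : Nat.Primes ↦ ∑ I ∈ ofNrm u b m p, ψ I) ∧
      ‖S - ∑' p : Nat.Primes, ∑ I ∈ ofNrm u b m p, ψ I‖ ≤
        12 * ∑' p : Nat.Primes, (p : ℝ) ^ (-2 : ℝ) := by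
  have hsummable : Summable fun I ↦ ‖ψ I‖ :=
    Summable.of_nonneg_of_le (fun _ ↦ norm_nonneg _) hψ (summable_nrm hm1 hs hs2)
  have hlocal (p : Nat.Primes) :
      Complex.exp (Complex.log (∑' e : ℕ, ∑ I ∈ ofNrm u b m (p ^ e), ψ I)) =
        ∑' e : ℕ, ∑ I ∈ ofNrm u b m (p ^ e), ψ I ∧
      ‖Complex.log (∑' e : ℕ, ∑ I ∈ ofNrm u b m (p ^ e), ψ I) -
        ∑ I ∈ ofNrm u b m p, ψ I‖ ≤ 12 * (p : ℝ) ^ (-2 : ℝ) ∧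
      ‖∑ I ∈ ofNrm u b m p, ψ I‖ ≤ 2 * (p : ℝ) ^ (-s) := by
    have hp0 : (0 : ℝ) < (p : ℕ) := by exact_mod_cast p.2.pos
    by_cases hp : (p : ℕ).Coprime m
    · obtain ⟨hp11, hpD⟩ := not_dvd_of_coprime hm p.2 hp
      have hp11' : (11 : ℝ) ≤ (p : ℕ) := by exact_mod_cast hp11
      have hx : ((p : ℕ) : ℝ) ^ (-s) ≤ 1 / (p : ℕ) := by
        rw [one_div, ← Real.rpow_neg_one]
        exact Real.rpow_le_rpow_of_exponent_le (by linarith) (by linarith)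
      have hx11 : ((p : ℕ) : ℝ) ^ (-s) ≤ 1 / 11 :=
        hx.trans (one_div_le_one_div_of_le (by norm_num) hp11')
      have hb1 := norm_sum_ofNrm_le hψ p.2 hpD 1
      norm_num at hb1
      have h := norm_log_tsum_sub_le (c := fun e ↦ ∑ I ∈ ofNrm u b m (p ^ e), ψ I)
        (x := ((p : ℕ) : ℝ) ^ (-s)) (by positivity) hx11 (by simp [ofNrm_one])
        (by simpa using hb1) (fun k ↦ by
          refine (norm_sum_ofNrm_le hψ p.2 hpD (k + 2)).trans ?_
          gcongr
          have : 2 * ((k + 2) / 2 + 1) ≤ k + 4 := by omega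
          exact_mod_cast this)
      refine ⟨h.1, ?_, hb1⟩
      have h2 := h.2
      rw [pow_one] at h2
      refine h2.trans ?_
      have h3 : (((p : ℕ) : ℝ) ^ (-s)) ^ 2 ≤ ((p : ℕ) : ℝ) ^ (-2 : ℝ) := by
        have := pow_le_pow_left₀ (by positivity) hx 2
        refine this.trans_eq ?_
        rw [Real.rpow_neg hp0.le, one_div, inv_pow]
        norm_cast
      linarith
    · have hzero (e : ℕ) (he : e ≠ 0) : ∑ I ∈ ofNrm u b m (p ^ e), ψ I = 0 := by
        rw [ofNrm_eq_empty_of_not_coprime, Finset.sum_empty]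
        rwa [Nat.coprime_pow_left_iff (Nat.pos_of_ne_zero he)]
      have h1 := hzero 1 one_ne_zero
      rw [pow_one] at h1
      rw [tsum_eq_single 0 hzero, h1]
      simp only [pow_zero, ofNrm_one, Finset.sum_singleton, map_one, Complex.log_one,
        Complex.exp_zero, sub_zero, _root_.norm_zero, true_and]
      constructor <;> positivity
  have hsum1 : Summable fun p : Nat.Primes ↦ ∑ I ∈ ofNrm u b m p, ψ I :=
    Summable.of_norm_bounded ((Nat.Primes.summable_rpow.2 (by linarith)).mul_left 2)
      fun p ↦ (hlocal p).2.2
  have hsq : HasSum (fun p : Nat.Primes ↦ 12 * (p : ℝ) ^ (-2 : ℝ))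
      (12 * ∑' p : Nat.Primes, (p : ℝ) ^ (-2 : ℝ)) :=
    (Nat.Primes.summable_rpow.2 (by norm_num)).hasSum.mul_left 12
  have hsum2 : Summable fun p : Nat.Primes ↦
      Complex.log (∑' e : ℕ, ∑ I ∈ ofNrm u b m (p ^ e), ψ I) - ∑ I ∈ ofNrm u b m p, ψ I :=
    Summable.of_norm_bounded hsq.summable fun p ↦ (hlocal p).2.1
  have hsum3 : Summable fun p : Nat.Primes ↦
      Complex.log (∑' e : ℕ, ∑ I ∈ ofNrm u b m (p ^ e), ψ I) := by
    simpa using hsum2.add hsum1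
  refine ⟨_, (hasProd_tsum_ofNrm hsummable).unique (hsum3.hasSum.cexp.congr_fun
    fun p ↦ (hlocal p).1.symm), hsum1, ?_⟩
  rw [← hsum3.tsum_sub hsum1]
  exact tsum_of_norm_bounded hsq fun p ↦ (hlocal p).2.1

end NormedIdeal

end QuadraticAlgebra

/-- Unitary characters separate a subgroup from the elements outside of it. -/
theorem CommGroup.exists_unitary_character {G : Type*} [CommGroup G] (H : Subgroup G) {g : G}
    (hg : g ∉ H) :
    ∃ χ : G →* ℂ, (∀ x, ‖χ x‖ = 1) ∧ (∀ x ∈ H, χ x = 1) ∧ χ g ≠ 1 := by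
  let f : ℚ →+ Additive Circle :=
    { toFun := fun q ↦ Additive.ofMul (Circle.exp (2 * Real.pi * q))
      map_zero' := by simp
      map_add' := fun x y ↦ by
        rw [← ofMul_mul, ← Circle.exp_add]; push_cast; ring_nf }
  let φ : AddCircle (1 : ℚ) →+ Additive Circle := QuotientAddGroup.lift _ f (by
    rintro _ ⟨n, rfl⟩
    change Additive.ofMul (Circle.exp _) = 0
    rw [ofMul_eq_zero]
    simp only [zsmul_eq_mul, mul_one, Rat.cast_intCast]
    rw [mul_comm, Circle.exp_int_mul_two_pi])
  have hφ (x : AddCircle (1 : ℚ)) (hx : φ x = 0) : x = 0 := by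
    obtain ⟨q, rfl⟩ := QuotientAddGroup.mk_surjective x
    have h1 : Circle.exp (2 * Real.pi * q) = 1 := hx
    rw [Circle.exp_eq_one] at h1
    obtain ⟨n, hn⟩ := h1
    have h2 : (q : ℝ) = n := by
      have := Real.pi_pos
      field_simp at hn
      linarith
    have h3 : q = n := by exact_mod_cast h2
    rw [QuotientAddGroup.eq_zero_iff]
    exact ⟨n, by simp [h3]⟩
  have hne : (Additive.ofMul (QuotientGroup.mk g : G ⧸ H)) ≠ 0 := by
    rw [Ne, ofMul_eq_zero, QuotientGroup.eq_one_iff]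
    exact hg
  obtain ⟨c, hc⟩ := CharacterModule.exists_character_apply_ne_zero_of_ne_zero hne
  let c' : Additive (G ⧸ H) →+ AddCircle (1 : ℚ) := c
  let χ : G →* Circle := (AddMonoidHom.toMultiplicative (φ.comp c')).comp (QuotientGroup.mk' H)
  refine ⟨Circle.coeHom.comp χ, fun x ↦ Circle.norm_coe (χ x), fun x hx ↦ ?_,
    fun h ↦ hc (hφ _ ?_)⟩
  · have h1 : QuotientGroup.mk' H x = 1 := (QuotientGroup.eq_one_iff x).2 hx
    have h2 : χ x = 1 := by
      change AddMonoidHom.toMultiplicative (φ.comp c') (QuotientGroup.mk' H x) = 1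
      rw [h1]
      exact map_zero (φ.comp c')
    change ((χ x : Circle) : ℂ) = 1
    rw [h2, Circle.coe_one]
  · have h1 : χ g = 1 := Circle.coe_injective h
    exact h1

namespace QuadraticAlgebra

namespace NormedIdeal

variable {u b : ℤ} {m : ℕ} [hD : Fact (b ^ 2 + 4 * u < 0)]

variable (u b m) in
/-- The classes of the ideals whose norm has no prime divisor `p ≡ -1` modulo `ℓ`. -/
noncomputable def goodClasses (ℓ : ℕ) : Subgroup (ClassGroup (QuadraticAlgebra ℤ u b)) where
  carrier := {g | ∃ I : NormedIdeal u b m, cl I = g ∧ ∀ p : ℕ, p.Prime → p ∣ I.nrm → ¬ ℓ ∣ p + 1}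
  one_mem' := ⟨1, map_one cl, fun p hp h ↦ absurd h (by rw [nrm_one]; exact hp.not_dvd_one)⟩
  mul_mem' := by
    rintro _ _ ⟨I, rfl, hI⟩ ⟨J, rfl, hJ⟩
    refine ⟨I * J, map_mul cl I J, fun p hp h ↦ ?_⟩
    rw [nrm_mul, hp.dvd_mul] at h
    exact h.elim (hI p hp) (hJ p hp)
  inv_mem' := by
    rintro _ ⟨I, rfl, hI⟩
    exact ⟨I.bar, cl_bar I, hI⟩

theorem norm_sum_one_sub_le (hm : 210 * (b ^ 2 + 4 * u).natAbs ∣ m) {ℓ : ℕ}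
    {χ : ClassGroup (QuadraticAlgebra ℤ u b) →* ℂ} (hχ : ∀ g, ‖χ g‖ = 1)
    (hH : ∀ g ∈ goodClasses u b m ℓ, χ g = 1) {p : ℕ} (hp : p.Prime) {f : ℕ → ℝ}
    (hf : 0 ≤ f p) :
    ‖∑ I ∈ ofNrm u b m p, (1 - χ (cl I)) * (f p : ℂ)‖ ≤
      4 * ({p : ℕ | p.Prime ∧ ℓ ∣ p + 1}.indicator f p -
        {p : ℕ | p.Prime ∧ 4 * (b ^ 2 + 4 * u).natAbs * ℓ ∣ p + 1}.indicator f p) := by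
  classical
  simp only [Set.indicator_apply, Set.mem_ofPred_eq, hp, true_and]
  by_cases h1 : 4 * (b ^ 2 + 4 * u).natAbs * ℓ ∣ p + 1
  · rw [ofNrm_eq_empty hp ((dvd_mul_right _ _).trans h1), if_pos h1,
      if_pos ((dvd_mul_left _ _).trans h1)]
    simp
  rw [if_neg h1, sub_zero]
  by_cases h2 : ℓ ∣ p + 1
  · rw [if_pos h2]
    by_cases h3 : p.Coprime m
    · have hcard := card_ofNrm_prime_pow (m := m) hp (not_dvd_of_coprime hm hp h3).2 1
      rw [pow_one] at hcard
      norm_num at hcard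
      refine (norm_sum_le_of_le _ (n := fun _ ↦ 2 * f p) fun I _ ↦ ?_).trans ?_
      · rw [norm_mul, Complex.norm_real, Real.norm_of_nonneg hf]
        gcongr
        refine (norm_sub_le _ _).trans ?_
        rw [NormOneClass.norm_one, hχ]; norm_num
      · rw [Finset.sum_const, nsmul_eq_mul]
        have : ((ofNrm u b m p).card : ℝ) ≤ 2 := by exact_mod_cast hcard
        nlinarith
    · rw [ofNrm_eq_empty_of_not_coprime h3, Finset.sum_empty, _root_.norm_zero]
      positivity
  · rw [if_neg h2, Finset.sum_eq_zero, _root_.norm_zero, mul_zero]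
    intro I hI
    rw [hH (cl I) ⟨I, rfl, fun q hq hqI ↦ ?_⟩, sub_self, zero_mul]
    rw [mem_ofNrm] at hI
    rw [hI, Nat.prime_dvd_prime_iff_eq hq hp] at hqI
    rwa [hqI]

/-- The ideals of norm coprime to `m`, weighted by a class group character. -/
noncomputable def weight (χ : ClassGroup (QuadraticAlgebra ℤ u b) →* ℂ) (s : ℝ) :
    NormedIdeal u b m →* ℂ where
  toFun I := χ (cl I) * ((I.nrm : ℝ) ^ (-s) : ℝ)
  map_one' := by simp [nrm_one]
  map_mul' I J := by
    rw [map_mul, map_mul, nrm_mul, Nat.cast_mul, Real.mul_rpow (by positivity) (by positivity)]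
    push_cast
    ring

theorem weight_apply (χ : ClassGroup (QuadraticAlgebra ℤ u b) →* ℂ) (s : ℝ)
    (I : NormedIdeal u b m) : weight χ s I = χ (cl I) * ((I.nrm : ℝ) ^ (-s) : ℝ) := rfl

end NormedIdeal

end QuadraticAlgebra

namespace QuadraticAlgebra

namespace NormedIdeal

variable {u b : ℤ} {m : ℕ} [hD : Fact (b ^ 2 + 4 * u < 0)]

/-- Every class contains an ideal whose norm has no prime divisor `p ≡ -1` modulo `ℓ`. -/
theorem cl_mem_goodClasses (hm : 210 * (b ^ 2 + 4 * u).natAbs ∣ m) (hm1 : 1 < m) {ℓ : ℕ}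
    (hℓ : ℓ.Prime) (hℓ5 : 5 ≤ ℓ) (I₀ : NormedIdeal u b m) : cl I₀ ∈ goodClasses u b m ℓ := by
  by_contra hI₀
  obtain ⟨χ, hχ, hH, hχ₀⟩ := CommGroup.exists_unitary_character _ hI₀
  set M := 4 * (b ^ 2 + 4 * u).natAbs * ℓ with hM
  have hDpos : 0 < (b ^ 2 + 4 * u).natAbs := Int.natAbs_pos.2 hD.out.ne
  have hM0 : 0 < M := by positivity
  have : NeZero ℓ := ⟨hℓ.ne_zero⟩
  have : NeZero M := ⟨hM0.ne'⟩
  obtain ⟨C₁, hC₁⟩ := exists_abs_tsum_primes_residueClass_add_log_le (q := ℓ) (a := -1) isUnit_one.neg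
  obtain ⟨C₂, hC₂⟩ := exists_abs_tsum_primes_residueClass_add_log_le (q := M) (a := -1) isUnit_one.neg
  have hset (q : ℕ) : {p : ℕ | p.Prime ∧ (p : ZMod q) = -1} = {p : ℕ | p.Prime ∧ q ∣ p + 1} := by
    ext p
    simp only [Set.mem_ofPred_eq]
    refine and_congr_right fun _ ↦ ?_
    rw [← ZMod.natCast_eq_zero_iff, Nat.cast_add, Nat.cast_one, eq_neg_iff_add_eq_zero]
  rw [hset] at hC₁ hC₂
  obtain ⟨C₃, hC₃, hO₃⟩ := (isBigO_inv_tsum_nrm (u := u) (b := b) (m := m) hm1).exists_pos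
  obtain ⟨C₄, hC₄, hO₄⟩ :=
    (isBigO_tsum_character (m := m) hm1 χ (fun g ↦ (hχ g).le) I₀ hχ₀).exists_pos
  set K := 12 * ∑' p : Nat.Primes, (p : ℝ) ^ (-2 : ℝ) with hK
  have hφℓ : (4 : ℝ) * (ℓ.totient : ℝ)⁻¹ ≤ 1 := by
    rw [Nat.totient_prime hℓ, Nat.cast_sub (by omega), Nat.cast_one]
    have : (5 : ℝ) ≤ ℓ := by exact_mod_cast hℓ5
    rw [← div_eq_mul_inv, div_le_one (by linarith)]
    linarith
  have hφM : (0 : ℝ) < (M.totient : ℝ)⁻¹ := by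
    have := Nat.totient_pos.2 hM0
    positivity
  have hmain : ∀ᶠ s : ℝ in 𝓝[>] 1, 4 * (M.totient : ℝ)⁻¹ * -Real.log (s - 1) ≤
      4 * C₁ + 4 * C₂ + Real.log C₃ + Real.log C₄ + 2 * K := by
    filter_upwards [eventually_mem_Ioc, hO₃.bound, hO₄.bound] with s ⟨hs, hs2⟩ h₃ h₄
    have hs0 : 0 < s - 1 := by linarith
    have hlog : 0 ≤ -Real.log (s - 1) := by
      rw [neg_nonneg]; exact Real.log_nonpos hs0.le (by linarith)
    have hw (η : ClassGroup (QuadraticAlgebra ℤ u b) →* ℂ) (hη : ∀ g, ‖η g‖ = 1)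
        (I : NormedIdeal u b m) : ‖weight η s I‖ ≤ (I.nrm : ℝ) ^ (-s) := by
      rw [weight_apply, norm_mul, hη, one_mul, Complex.norm_real,
        Real.norm_of_nonneg (by positivity)]
    obtain ⟨S, hS, hSs, hSK⟩ := exists_exp_eq_tsum hm hm1 hs hs2 (hw χ hχ)
    obtain ⟨S', hS', hSs', hSK'⟩ := exists_exp_eq_tsum hm hm1 hs hs2 (hw 1 (by simp))
    have hre : S.re ≤ Real.log C₄ := by
      have h1 : ‖∑' I : NormedIdeal u b m, weight χ s I‖ ≤ C₄ := by
        simpa [weight_apply] using h₄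
      rw [hS, Complex.norm_exp] at h1
      rwa [Real.le_log_iff_exp_le hC₄]
    have hre' : -Real.log (s - 1) - Real.log C₃ ≤ S'.re := by
      have h1 : ∑' I : NormedIdeal u b m, weight 1 s I =
          ((∑' I : NormedIdeal u b m, (I.nrm : ℝ) ^ (-s) : ℝ) : ℂ) := by
        rw [Complex.ofReal_tsum]
        exact tsum_congr fun I ↦ by simp [weight_apply]
      have h2 : ‖∑' I : NormedIdeal u b m, (I.nrm : ℝ) ^ (-s)‖ = Real.exp S'.re := by
        rw [← Complex.norm_real, ← h1, hS', Complex.norm_exp]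
      rw [h2, Real.norm_of_nonneg (inv_nonneg.2 hs0.le)] at h₃
      have h3 := Real.log_le_log (inv_pos.2 hs0) h₃
      rw [Real.log_inv, Real.log_mul hC₃.ne' (Real.exp_ne_zero _), Real.log_exp] at h3
      linarith
    set P := ∑' p : Nat.Primes, ∑ I ∈ ofNrm u b m p, weight χ s I with hP
    set P' := ∑' p : Nat.Primes, ∑ I ∈ ofNrm u b m p, weight 1 s I with hP'
    have hd : |S.re - P.re| ≤ K := by
      rw [← Complex.sub_re]; exact (Complex.abs_re_le_norm _).trans hSK
    have hd' : |S'.re - P'.re| ≤ K := by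
      rw [← Complex.sub_re]; exact (Complex.abs_re_le_norm _).trans hSK'
    have hPP : ‖P' - P‖ ≤ 4 * (∑' n : ℕ, {p : ℕ | p.Prime ∧ ℓ ∣ p + 1}.indicator
        (fun n : ℕ ↦ (n : ℝ) ^ (-s)) n -
        ∑' n : ℕ, {p : ℕ | p.Prime ∧ M ∣ p + 1}.indicator (fun n : ℕ ↦ (n : ℝ) ^ (-s)) n) := by
      have hsum : Summable fun n : ℕ ↦ (n : ℝ) ^ (-s) := Real.summable_nat_rpow.2 (by linarith)
      have h1 := (((hsum.indicator {p : ℕ | p.Prime ∧ ℓ ∣ p + 1}).hasSum.sub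
        (hsum.indicator {p : ℕ | p.Prime ∧ M ∣ p + 1}).hasSum).mul_left 4)
      have h2 := (hasSum_subtype_iff_of_support_subset (s := {p : ℕ | p.Prime}) (by
        intro p hp
        by_contra hnp
        refine hp ?_
        have h3 (q : ℕ) : {p : ℕ | p.Prime ∧ q ∣ p + 1}.indicator
            (fun n : ℕ ↦ (n : ℝ) ^ (-s)) p = 0 :=
          Set.indicator_of_notMem (fun h ↦ hnp h.1) _
        simp only [h3, sub_self, mul_zero])).2 h1
      rw [hP, hP', ← hSs'.tsum_sub hSs]
      refine tsum_of_norm_bounded (ι := Nat.Primes) h2 fun p ↦ ?_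
      have h4 : ∑ I ∈ ofNrm u b m p, weight 1 s I - ∑ I ∈ ofNrm u b m p, weight χ s I =
          ∑ I ∈ ofNrm u b m p, (1 - χ (cl I)) * (((p : ℕ) : ℝ) ^ (-s) : ℝ) := by
        rw [← Finset.sum_sub_distrib]
        refine Finset.sum_congr rfl fun I hI ↦ ?_
        rw [weight_apply, weight_apply, mem_ofNrm.1 hI, MonoidHom.one_apply]
        ring
      rw [h4]
      exact norm_sum_one_sub_le hm hχ hH p.2 (f := fun n : ℕ ↦ (n : ℝ) ^ (-s)) (by positivity)
    have hPre : P'.re - P.re ≤ ‖P' - P‖ := by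
      rw [← Complex.sub_re]; exact Complex.re_le_norm _
    have e₁ := (abs_le.1 (hC₁ s ⟨hs, hs2⟩)).2
    have e₂ := (abs_le.1 (hC₂ s ⟨hs, hs2⟩)).1
    have e₃ := (abs_le.1 hd).1
    have e₄ := (abs_le.1 hd').2
    have e₅ := mul_le_mul_of_nonneg_right hφℓ hlog
    nlinarith
  have htend : Tendsto (fun s : ℝ ↦ 4 * (M.totient : ℝ)⁻¹ * -Real.log (s - 1)) (𝓝[>] 1) atTop := by
    refine Tendsto.const_mul_atTop (by positivity) (tendsto_neg_atBot_atTop.comp ?_)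
    refine Real.tendsto_log_nhdsGT_zero.comp (tendsto_nhdsWithin_iff.2 ⟨?_, ?_⟩)
    · refine (Continuous.tendsto' (by fun_prop) _ _ (by simp)).mono_left nhdsWithin_le_nhds
    · filter_upwards [self_mem_nhdsWithin] with s hs
      simpa using hs
  obtain ⟨s, h1, h2⟩ := (hmain.and (htend.eventually_gt_atTop _)).exists
  exact absurd h1 (not_le.2 h2)

end NormedIdeal

end QuadraticAlgebra

namespace QuadraticAlgebra

/-- The ideal attached to a primitive form `a x² + b x y + c y²` has norm `a`. -/
theorem isNorm_span_pair {a b c x y z : ℤ} (ha : 0 < a) (h : a * x + b * y + c * z = 1) :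
    IsNorm (Ideal.span {(a : QuadraticAlgebra ℤ (-(a * c)) b), ⟨0, 1⟩}) a.natAbs := by
  refine ⟨Int.natAbs_pos.2 ha.ne', ?_⟩
  have hcast : ((a.natAbs : ℕ) : QuadraticAlgebra ℤ (-(a * c)) b) = (a : ℤ) := by
    rw [← Int.cast_natCast, Int.natAbs_of_nonneg ha.le]
  have hstar : star (⟨0, 1⟩ : QuadraticAlgebra ℤ (-(a * c)) b) = (b : ℤ) - ⟨0, 1⟩ := by
    ext <;> simp
  have hmul : (⟨0, 1⟩ : QuadraticAlgebra ℤ (-(a * c)) b) * (b - ⟨0, 1⟩) = (a : ℤ) * (c : ℤ) := by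
    ext <;> simp
  have hconj : conj (Ideal.span {((a : ℤ) : QuadraticAlgebra ℤ (-(a * c)) b), ⟨0, 1⟩}) =
      (Ideal.span {((a : ℤ) : QuadraticAlgebra ℤ (-(a * c)) b), ((b : ℤ) - ⟨0, 1⟩ :
        QuadraticAlgebra ℤ (-(a * c)) b)}) := by
    rw [Ideal.span_insert, conj_sup, conj_span_singleton, conj_span_singleton, hstar,
      star_intCast, ← Ideal.span_insert]
  rw [hconj, hcast, Ideal.span_pair_mul_span_pair]
  refine le_antisymm ?_ ?_
  · rw [Ideal.span_le]
    rintro w (rfl | rfl | rfl | rfl) <;> rw [SetLike.mem_coe, Ideal.mem_span_singleton]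
    · exact dvd_mul_right _ _
    · exact dvd_mul_right _ _
    · exact dvd_mul_left _ _
    · rw [hmul]; exact dvd_mul_right _ _
  · rw [Ideal.span_singleton_le_iff_mem]
    have h1 : (a : QuadraticAlgebra ℤ (-(a * c)) b) = (x : ℤ) * ((a : ℤ) * (a : ℤ)) +
        (y : ℤ) * ((a : ℤ) * ((b : ℤ) - ⟨0, 1⟩) + ⟨0, 1⟩ * (a : ℤ)) +
        (z : ℤ) * (⟨0, 1⟩ * ((b : ℤ) - ⟨0, 1⟩)) := by
      rw [hmul]
      have := congrArg (Int.cast : ℤ → QuadraticAlgebra ℤ (-(a * c)) b) h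
      push_cast at this
      linear_combination -(a : QuadraticAlgebra ℤ (-(a * c)) b) * this
    refine Set.mem_of_eq_of_mem h1 ?_
    refine Ideal.add_mem _ (Ideal.add_mem _ (Ideal.mul_mem_left _ _ ?_) (Ideal.mul_mem_left _ _
      (Ideal.add_mem _ ?_ ?_))) (Ideal.mul_mem_left _ _ ?_) <;>
    exact Ideal.subset_span (by simp)

theorem exists_eq_of_mem_span_pair {a b c : ℤ} {z : QuadraticAlgebra ℤ (-(a * c)) b}
    (h : z ∈ Ideal.span {(a : QuadraticAlgebra ℤ (-(a * c)) b), ⟨0, 1⟩}) :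
    ∃ x y : ℤ, z.norm = a * (a * x ^ 2 + b * x * y + c * y ^ 2) := by
  obtain ⟨v, w, rfl⟩ := Ideal.mem_span_pair.1 h
  set z := v * (a : QuadraticAlgebra ℤ (-(a * c)) b) + w * ⟨0, 1⟩ with hz
  have hre : z.re = a * (v.re - c * w.im) := by
    simp [hz]; ring
  refine ⟨v.re - c * w.im, z.im, ?_⟩
  rw [norm_def, hre]
  ring

end QuadraticAlgebra

open QuadraticAlgebra in
/-- A primitive positive definite form with leading coefficient coprime to `m` represents an
integer coprime to `m` without prime divisors `p ≡ -1` modulo `ℓ`. -/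
theorem exists_represented_of_coprime {a b c x y z : ℤ} (ha : 0 < a)
    (h : a * x + b * y + c * z = 1) (hdisc : b ^ 2 - 4 * a * c < 0) {m ℓ : ℕ}
    (hm : 210 * (b ^ 2 - 4 * a * c).natAbs ∣ m) (hm1 : 1 < m) (ham : IsCoprime a (m : ℤ))
    (hℓ : ℓ.Prime) (hℓ5 : 5 ≤ ℓ) :
    ∃ (n : ℕ) (x y : ℤ), a * x ^ 2 + b * x * y + c * y ^ 2 = n ∧ n.Coprime m ∧
      ∀ p : ℕ, p.Prime → p ∣ n → ¬ ℓ ∣ p + 1 := by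
  have hD : b ^ 2 + 4 * (-(a * c)) = b ^ 2 - 4 * a * c := by ring
  have : Fact (b ^ 2 + 4 * (-(a * c)) < 0) := ⟨by rw [hD]; exact hdisc⟩
  have ham' : a.natAbs.Coprime m := by
    rwa [← Nat.isCoprime_iff_coprime, Int.natAbs_of_nonneg ha.le]
  set A : NormedIdeal (-(a * c)) b m := NormedIdeal.mk _ _ (isNorm_span_pair ha h) ham' with hA
  obtain ⟨I, hI, hgood⟩ := NormedIdeal.cl_mem_goodClasses (hD ▸ hm) hm1 hℓ hℓ5 A.bar
  rw [NormedIdeal.cl_bar, NormedIdeal.cl_eq_inv_iff] at hI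
  obtain ⟨α, hα⟩ := hI
  have hαA : α ∈ A.ideal :=
    Ideal.mul_le_right (hα ▸ Ideal.mem_span_singleton_self α : α ∈ I.ideal * A.ideal)
  obtain ⟨x', y', hxy⟩ := exists_eq_of_mem_span_pair hαA
  have hnorm := NormedIdeal.norm_eq_of_mul_eq_span I.isNorm A.isNorm hα
  have hAn : (A.nrm : ℤ) = a := Int.natAbs_of_nonneg ha.le
  rw [hxy, hAn, mul_comm] at hnorm
  exact ⟨I.nrm, x', y', mul_right_cancel₀ ha.ne' hnorm, I.coprime, hgood⟩

/-- A primitive form properly represents an integer coprime to `m`. -/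
theorem exists_isCoprime_represented {a b c : ℤ} (h : Int.gcd a (Int.gcd b c) = 1) {m : ℕ}
    (hm : m ≠ 0) : ∃ x y : ℤ, IsCoprime x y ∧
      IsCoprime (a * x ^ 2 + b * x * y + c * y ^ 2) (m : ℤ) := by
  classical
  have hdvd (q : ℕ) (hq : q.Prime) (s : Finset ℕ) (hs : s ⊆ m.primeFactors) :
      (q : ℤ) ∣ ((∏ p ∈ s, p : ℕ) : ℤ) ↔ q ∈ s := by
    rw [Int.natCast_dvd_natCast, (Nat.prime_iff.1 hq).dvd_finsetProd_iff]
    constructor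
    · rintro ⟨p, hp, hqp⟩
      rwa [(Nat.prime_dvd_prime_iff_eq hq (Nat.prime_of_mem_primeFactors (hs hp))).1 hqp]
    · exact fun hq' ↦ ⟨q, hq', dvd_rfl⟩
  set X : Finset ℕ := m.primeFactors.filter fun p : ℕ ↦ (p : ℤ) ∣ a ∧ ¬ (p : ℤ) ∣ c with hX
  set Y : Finset ℕ := m.primeFactors.filter fun p : ℕ ↦ ¬ (p : ℤ) ∣ a with hY
  have hXs : X ⊆ m.primeFactors := Finset.filter_subset _ _
  have hYs : Y ⊆ m.primeFactors := Finset.filter_subset _ _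
  refine ⟨((∏ p ∈ X, p : ℕ) : ℤ), ((∏ p ∈ Y, p : ℕ) : ℤ), ?_, ?_⟩
  · rw [Nat.isCoprime_iff_coprime]
    refine Nat.Coprime.prod_left fun p hp ↦ Nat.Coprime.prod_right fun q hq ↦ ?_
    rw [Nat.coprime_primes (Nat.prime_of_mem_primeFactors (hXs hp))
      (Nat.prime_of_mem_primeFactors (hYs hq))]
    rintro rfl
    exact (Finset.mem_filter.1 hq).2 (Finset.mem_filter.1 hp).2.1
  · rw [Int.isCoprime_iff_gcd_eq_one]
    refine Nat.coprime_of_dvd fun q hq h1 h2 ↦ ?_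
    rw [← Int.natCast_dvd] at h1
    rw [Int.natAbs_natCast] at h2
    have hqm : q ∈ m.primeFactors := Nat.mem_primeFactors.2 ⟨hq, h2, hm⟩
    have hx := hdvd q hq X hXs
    have hy := hdvd q hq Y hYs
    generalize ((∏ p ∈ X, p : ℕ) : ℤ) = x at *
    generalize ((∏ p ∈ Y, p : ℕ) : ℤ) = y at *
    rw [hX, Finset.mem_filter] at hx
    rw [hY, Finset.mem_filter] at hy
    simp only [hqm, true_and] at hx hy
    have hq' : Prime (q : ℤ) := Nat.prime_iff_prime_int.1 hq
    by_cases ha : (q : ℤ) ∣ a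
    · have hy' : ¬ (q : ℤ) ∣ y := fun h ↦ hy.1 h ha
      by_cases hc : (q : ℤ) ∣ c
      · have hx' : ¬ (q : ℤ) ∣ x := fun h ↦ (hx.1 h).2 hc
        have h3 : (q : ℤ) ∣ b * x * y := by
          have := (dvd_add_left (Dvd.dvd.mul_right hc (y ^ 2))).1 h1
          exact (dvd_add_right (Dvd.dvd.mul_right ha (x ^ 2))).1 this
        have hb : (q : ℤ) ∣ b := by
          rcases hq'.dvd_or_dvd h3 with h4 | h4
          · exact (hq'.dvd_or_dvd h4).resolve_right hx'
          · exact absurd h4 hy'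
        have h5 : (q : ℤ) ∣ (Int.gcd a (Int.gcd b c) : ℤ) :=
          Int.dvd_coe_gcd ha (Int.dvd_coe_gcd hb hc)
        rw [h] at h5
        exact hq'.not_dvd_one (by exact_mod_cast h5)
      · have hx' : (q : ℤ) ∣ x := hx.2 ⟨ha, hc⟩
        have h3 : (q : ℤ) ∣ c * y ^ 2 := by
          have h4 : (q : ℤ) ∣ a * x ^ 2 + b * x * y :=
            dvd_add (Dvd.dvd.mul_right ha _) (Dvd.dvd.mul_right (Dvd.dvd.mul_left hx' _) _)
          exact (dvd_add_right h4).1 h1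
        rcases hq'.dvd_or_dvd h3 with h4 | h4
        · exact hc h4
        · exact hy' (hq'.dvd_of_dvd_pow h4)
    · have hy' : (q : ℤ) ∣ y := hy.2 ha
      have hx' : ¬ (q : ℤ) ∣ x := fun h ↦ ha (hx.1 h).1
      have h3 : (q : ℤ) ∣ a * x ^ 2 := by
        have h4 := (dvd_add_left (Dvd.dvd.mul_left (Dvd.dvd.pow hy' two_ne_zero) c)).1 h1
        exact (dvd_add_left (Dvd.dvd.mul_left hy' (b * x))).1 h4
      rcases hq'.dvd_or_dvd h3 with h4 | h4
      · exact ha h4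
      · exact hx' (hq'.dvd_of_dvd_pow h4)

/-- A primitive positive definite integral binary quadratic form represents an
integer all of whose prime divisors `p` satisfy `p ≢ 0` and `p ≢ -1 (mod ℓ)`, for any prime
`ℓ ≥ 5`. -/
theorem binary_form_represents_good_integer
    (ℓ : ℕ) (hℓ : ℓ.Prime) (hℓ5 : 5 ≤ ℓ)
    (a b c : ℤ)
    (hprim : Int.gcd a (Int.gcd b c) = 1)
    (hpos : 0 < a) (hdisc : b ^ 2 - 4 * a * c < 0) :
    ∃ x y : ℤ, ∀ p : ℕ, p.Prime → (p : ℤ) ∣ (a * x ^ 2 + b * x * y + c * y ^ 2) →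
      ¬ ((p : ℤ) ≡ 0 [ZMOD (ℓ : ℤ)]) ∧ ¬ ((p : ℤ) ≡ -1 [ZMOD (ℓ : ℤ)]) := by
  set m := 210 * (b ^ 2 - 4 * a * c).natAbs * ℓ with hm
  have hDpos : 0 < (b ^ 2 - 4 * a * c).natAbs := Int.natAbs_pos.2 hdisc.ne
  have hm1 : 1 < m := by
    have := Nat.mul_pos hDpos hℓ.pos
    rw [hm, mul_assoc]; omega
  obtain ⟨x, y, ⟨s, r, hsr⟩, hcop⟩ := exists_isCoprime_represented hprim (m := m) (by omega)
  obtain ⟨X, Y, Z, hXYZ⟩ : ∃ X Y Z : ℤ, a * X + b * Y + c * Z = 1 := by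
    have h1 := Int.gcd_eq_gcd_ab a (Int.gcd b c)
    rw [hprim, Nat.cast_one] at h1
    refine ⟨a.gcdA (b.gcd c), b.gcdA c * a.gcdB (b.gcd c), b.gcdB c * a.gcdB (b.gcd c), ?_⟩
    linear_combination -h1 - a.gcdB (b.gcd c) * Int.gcd_eq_gcd_ab b c
  -- the discriminant of the form obtained by the substitution with matrix `(x, -r; y, s)`
  have hdisc' : (2 * a * x * (-r) + b * (x * s + y * (-r)) + 2 * c * y * s) ^ 2 -
      4 * (a * x ^ 2 + b * x * y + c * y ^ 2) * (a * (-r) ^ 2 + b * (-r) * s + c * s ^ 2) =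
      b ^ 2 - 4 * a * c := by
    linear_combination (b ^ 2 - 4 * a * c) * (s * x + r * y + 1) * hsr
  have hpos' : 0 < a * x ^ 2 + b * x * y + c * y ^ 2 := by
    have hid : 4 * a * (a * x ^ 2 + b * x * y + c * y ^ 2) =
        (2 * a * x + b * y) ^ 2 + -(b ^ 2 - 4 * a * c) * y ^ 2 := by ring
    have : 0 < 4 * a * (a * x ^ 2 + b * x * y + c * y ^ 2) := by
      rw [hid]
      by_cases hy : y = 0
      · have hx : x ≠ 0 := by
          rintro rfl
          simp [hy] at hsr
        rw [hy]
        have : 0 < (2 * a * x) ^ 2 := by positivity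
        simpa using this
      · have : 0 < -(b ^ 2 - 4 * a * c) * y ^ 2 := by
          have : 0 < -(b ^ 2 - 4 * a * c) := by linarith
          positivity
        positivity
    exact pos_of_mul_pos_right this (by positivity)
  obtain ⟨n, v, w, hn, hnm, hgood⟩ := exists_represented_of_coprime hpos'
    (b := 2 * a * x * (-r) + b * (x * s + y * (-r)) + 2 * c * y * s)
    (c := a * (-r) ^ 2 + b * (-r) * s + c * s ^ 2)
    (x := s ^ 2 * X + 2 * s * r * Y + r ^ 2 * Z)
    (y := -(s * y) * X + (s * x - y * r) * Y + (r * x) * Z)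
    (z := y ^ 2 * X - 2 * x * y * Y + x ^ 2 * Z)
    (by
      linear_combination hXYZ + (s * x + r * y + 1) * (a * X + b * Y + c * Z) * hsr)
    (by rw [hdisc']; exact hdisc) (m := m) (ℓ := ℓ) (by rw [hdisc']; exact dvd_mul_right _ _)
    hm1 hcop hℓ hℓ5
  refine ⟨x * v - r * w, y * v + s * w, fun p hp hpd ↦ ?_⟩
  have hval : a * (x * v - r * w) ^ 2 + b * (x * v - r * w) * (y * v + s * w) +
      c * (y * v + s * w) ^ 2 = n := by
    rw [← hn]; ring
  rw [hval, Int.natCast_dvd_natCast] at hpd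
  constructor
  · intro h0
    rw [Int.modEq_zero_iff_dvd, Int.natCast_dvd_natCast, Nat.prime_dvd_prime_iff_eq hℓ hp] at h0
    subst h0
    exact hℓ.one_lt.ne' (Nat.eq_one_of_dvd_coprimes hnm hpd (dvd_mul_left _ _))
  · intro h1
    refine hgood p hp hpd ?_
    have h2 := h1.symm.dvd
    rw [sub_neg_eq_add] at h2
    exact_mod_cast h2
end
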